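/- Let (S,𝔪) be an unramified regular local ring of mixed characteristic p ≥ 3. Suppose S[ω] and S[μ] are integrally closed and fg ∈ S^{p∧p²}. Then R is a Cohen-Macaulay ring if and only if the ideal Q := (p, f, g) of S can be generated by two elements or equals S. Moreover pd_S(R) ≤ 1 and ν_S(R) ≤ p² + 1, where ν_S denotes the minimal number of generators as an S-module. -/

import Mathlib

/-- A height one prime ideal of a commutative ring. -/
def IsHeightOnePrime {S : Type*} [CommRing S] (P : Ideal S) : Prop :=
  ∃ hP : P.IsPrime, Order.height (⟨P, hP⟩ : PrimeSpectrum S) = 1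

/-- `c ∈ S` is square free if `P S_P = c S_P` for every height one prime `P` containing `c`. -/
def PaperSquarefree {S : Type*} [CommRing S] (c : S) : Prop :=
  ∀ (P : Ideal S) (hP : P.IsPrime), Order.height (⟨P, hP⟩ : PrimeSpectrum S) = 1 → c ∈ P →
    haveI := hP
    Ideal.map (algebraMap S (Localization.AtPrime P)) P =
      Ideal.span {algebraMap S (Localization.AtPrime P) c}

/-- Two elements satisfy `𝒜₁` if no height one prime contains both of them. -/
def SatisfiesA1 {S : Type*} [CommRing S] (f g : S) : Prop :=
  ∀ P : Ideal S, IsHeightOnePrime P → ¬(f ∈ P ∧ g ∈ P)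

/-- The depth of a module over a local ring: the supremum of the lengths of
regular sequences on `M` contained in the maximal ideal. -/
noncomputable def modDepth (S : Type*) [CommRing S] [IsLocalRing S]
    (M : Type*) [AddCommGroup M] [Module S M] : ℕ∞ :=
  sSup {n : ℕ∞ | ∃ rs : List S, (rs.length : ℕ∞) = n ∧
    (∀ r ∈ rs, r ∈ IsLocalRing.maximalIdeal S) ∧ RingTheory.Sequence.IsRegular M rs}

/-- A commutative ring is Cohen-Macaulay if each of its localizations at a prime
has depth equal to its Krull dimension. -/
def IsCMRing (R : Type*) [CommRing R] : Prop :=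
  ∀ (Q : Ideal R) (hQ : Q.IsPrime),
    haveI := hQ
    (modDepth (Localization.AtPrime Q) (Localization.AtPrime Q) : WithBot ℕ∞) =
      ringKrullDim (Localization.AtPrime Q)

/-- The `n`-th symbolic power of a prime ideal `P`, i.e. `Pⁿ A_P ∩ A`. -/
noncomputable def symbPow {A : Type*} [CommRing A] (P : Ideal A) (hP : P.IsPrime) (n : ℕ) :
    Ideal A :=
  haveI := hP
  Ideal.comap (algebraMap A (Localization.AtPrime P))
    (Ideal.map (algebraMap A (Localization.AtPrime P)) (P ^ n))

/-- `ω`, as an element of the subalgebra `A = S[ω,μ]`. -/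
noncomputable def omegaA {S : Type*} [CommRing S] {K : Type*} [Field K] [Algebra S K]
    (ω μ : K) : Algebra.adjoin S ({ω, μ} : Set K) :=
  ⟨ω, Algebra.subset_adjoin (Set.mem_insert _ _)⟩

/-- `μ`, as an element of the subalgebra `A = S[ω,μ]`. -/
noncomputable def muA {S : Type*} [CommRing S] {K : Type*} [Field K] [Algebra S K]
    (ω μ : K) : Algebra.adjoin S ({ω, μ} : Set K) :=
  ⟨μ, Algebra.subset_adjoin (Set.mem_insert_of_mem _ rfl)⟩

/-- The ideal `P = (p, ω−h₁, μ−h₂)` of `A = S[ω,μ]`. -/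
noncomputable def Pid {S : Type*} [CommRing S] {K : Type*} [Field K] [Algebra S K]
    (p : ℕ) (ω μ : K) (h₁ h₂ : S) : Ideal (Algebra.adjoin S ({ω, μ} : Set K)) :=
  Ideal.span {(p : Algebra.adjoin S ({ω, μ} : Set K)),
    omegaA ω μ - algebraMap S _ h₁, muA ω μ - algebraMap S _ h₂}

/-- The colon module `(A :_K N) = {x ∈ K : x·N ⊆ A}`, as an `S`-submodule of `K`. -/
noncomputable def colonSubmodule (S : Type*) [CommRing S] (K : Type*) [Field K] [Algebra S K]
    (A : Subalgebra S K) (N : Set K) : Submodule S K where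
  carrier := {x : K | ∀ z ∈ N, x * z ∈ A}
  add_mem' := fun hx hy z hz => by
    simpa [add_mul] using add_mem (hx z hz) (hy z hz)
  zero_mem' := fun z hz => by simpa using A.zero_mem
  smul_mem' := fun c x hx z hz => by
    rw [Algebra.smul_def, mul_assoc]
    exact mul_mem (A.algebraMap_mem c) (hx z hz)

/-- `M` admits a free resolution `0 → Sⁿ → Sᵐ → M → 0`; for a finitely generated
module over a Noetherian local ring this says exactly `pd_S(M) ≤ 1`. -/
def HasFreeResLengthLE1 (S : Type*) [CommRing S] (M : Type*) [AddCommGroup M] [Module S M] :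
    Prop :=
  ∃ (n m : ℕ) (φ : (Fin n → S) →ₗ[S] (Fin m → S)) (ψ : (Fin m → S) →ₗ[S] M),
    Function.Injective φ ∧ Function.Surjective ψ ∧ LinearMap.range φ = LinearMap.ker ψ

/-- The ideal `Q` contains an `S`-regular sequence of length three, i.e. `Q` has grade
(at least) three. -/
def ContainsRegSeq3 (S : Type*) [CommRing S] (Q : Ideal S) : Prop :=
  ∃ rs : List S, rs.length = 3 ∧ (∀ r ∈ rs, r ∈ Q) ∧ RingTheory.Sequence.IsRegular S rs


set_option maxHeartbeats 400000
set_option linter.unusedVariables false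
set_option linter.unusedSimpArgs false
set_option linter.unusedSectionVars false

section

theorem exists_good_prime {T : Type*} [CommRing T] [IsDomain T] [IsNoetherianRing T]
    [IsIntegrallyClosed T] {x y : T} (hy : y ≠ 0) (hxy : ¬ y ∣ x) :
    ∃ (q : Ideal T) (hq : q.IsPrime), y ∈ q ∧ (∀ s, y ∣ s * x → s ∈ q) ∧
      IsDiscreteValuationRing (Localization.AtPrime q) := by
  have hx0 : (Ideal.Quotient.mk (Ideal.span {y}) x : T ⧸ Ideal.span {y}) ≠ 0 := by
    rw [Ne, Ideal.Quotient.eq_zero_iff_dvd]; exact hxy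
  obtain ⟨P, hP, hle⟩ := exists_le_isAssociatedPrime_of_isNoetherianRing T _ hx0
  rw [isAssociatedPrime_iff] at hP
  obtain ⟨hPp, z', hz'⟩ := hP
  obtain ⟨z, rfl⟩ := Ideal.Quotient.mk_surjective z'
  have hmem : ∀ s, s ∈ P ↔ y ∣ s * z := by
    intro s
    rw [hz', Submodule.mem_colon_singleton, ← Ideal.Quotient.eq_zero_iff_dvd, map_mul]
    simp [Algebra.smul_def]
  have hyP : y ∈ P := (hmem y).2 (Dvd.intro _ rfl)
  refine ⟨P, hPp, hyP, ?_, ?_⟩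
  · intro s hs
    apply hle
    rw [Submodule.mem_colon_singleton]
    rw [← Ideal.Quotient.eq_zero_iff_dvd, map_mul] at hs
    simpa [Algebra.smul_def] using hs
  · -- key
    have h1 : (1 : T) ∉ P := fun h => hPp.ne_top ((Ideal.eq_top_iff_one _).2 h)
    have key : ∃ π ∈ P, ∃ u, u ∉ P ∧ π * z = y * u := by
      by_contra! hcon
      have hK : ∀ r ∈ P, ∃ u ∈ P, r * z = y * u := by
        intro r hr
        obtain ⟨u, hu⟩ := (hmem r).1 hr
        refine ⟨u, ?_, hu⟩
        by_contra hu'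
        exact hcon r hr u hu' hu
      let F := FractionRing T
      let N : Submodule T F := Submodule.map (Algebra.linearMap T F) P
      have hy' : algebraMap T F y ≠ 0 := by
        simpa using hy
      have hint : IsIntegral T (algebraMap T F z / algebraMap T F y) := by
        refine isIntegral_of_smul_mem_submodule (A := F) N ?_ ?_ _ ?_
        · intro hN
          have : algebraMap T F y ∈ N := ⟨y, hyP, rfl⟩
          rw [hN] at this
          exact hy' (by simpa using this)
        · exact Submodule.FG.map _ (IsNoetherian.noetherian P)
        · rintro _ ⟨r, hr, rfl⟩
          obtain ⟨u, hu, hru⟩ := hK r hr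
          refine ⟨u, hu, ?_⟩
          simp only [Algebra.linearMap_apply, smul_eq_mul]
          rw [div_mul_eq_mul_div, eq_div_iff hy', ← map_mul, ← map_mul, mul_comm z, hru, mul_comm]
      obtain ⟨w, hw⟩ := IsIntegrallyClosed.isIntegral_iff.1 hint
      apply h1
      rw [hmem, one_mul]
      refine ⟨w, ?_⟩
      apply IsFractionRing.injective T F
      rw [map_mul, hw, mul_div_cancel₀ _ hy']
    obtain ⟨π, hπ, u, hu, hπz⟩ := key
    have hz0 : z ≠ 0 := by
      rintro rfl
      exact h1 ((hmem 1).2 (by simp))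
    have hgen : ∀ r ∈ P, ∃ r', r * u = π * r' := by
      intro r hr
      obtain ⟨r', hr'⟩ := (hmem r).1 hr
      refine ⟨r', mul_left_cancel₀ hy ?_⟩
      calc y * (r * u) = r * (y * u) := by ring
        _ = π * (r * z) := by rw [← hπz]; ring
        _ = y * (π * r') := by rw [hr']; ring
    have hmax : IsLocalRing.maximalIdeal (Localization.AtPrime P) =
        Ideal.span {algebraMap T (Localization.AtPrime P) π} := by
      apply le_antisymm
      · rw [← Localization.AtPrime.map_eq_maximalIdeal, Ideal.map_le_iff_le_comap]
        intro r hr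
        obtain ⟨r', hr'⟩ := hgen r hr
        rw [Ideal.mem_comap]
        have hun : IsUnit (algebraMap T (Localization.AtPrime P) u) :=
          IsLocalization.map_units (Localization.AtPrime P) (⟨u, hu⟩ : P.primeCompl)
        rw [← Ideal.mul_unit_mem_iff_mem _ hun, ← map_mul, hr', map_mul]
        exact Ideal.mul_mem_right _ _ (Ideal.mem_span_singleton_self _)
      · rw [Ideal.span_singleton_le_iff_mem, ← Localization.AtPrime.map_eq_maximalIdeal]
        exact Ideal.mem_map_of_mem _ hπ
    have hfield : ¬ IsField (Localization.AtPrime P) := by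
      intro hF
      have := (IsLocalRing.isField_iff_maximalIdeal_eq).1 hF
      have hy2 : algebraMap T (Localization.AtPrime P) y ∈ IsLocalRing.maximalIdeal (Localization.AtPrime P) := by
        rw [← Localization.AtPrime.map_eq_maximalIdeal]
        exact Ideal.mem_map_of_mem _ hyP
      rw [this, Ideal.mem_bot] at hy2
      exact hy (IsLocalization.injective (Localization.AtPrime P) P.primeCompl_le_nonZeroDivisors (by simpa using hy2))
    have : IsNoetherianRing (Localization.AtPrime P) := IsLocalization.isNoetherianRing P.primeCompl _ inferInstance
    exact ((IsDiscreteValuationRing.TFAE (Localization.AtPrime P) hfield).out 0 4).2 (by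
      rw [hmax]; exact ⟨⟨_, rfl⟩⟩)

/-- height one -/
theorem height_one_of_dvr {T : Type*} [CommRing T] [IsDomain T] (q : Ideal T) [hq : q.IsPrime]
    (h : IsDiscreteValuationRing (Localization.AtPrime q)) :
    Order.height (⟨q, hq⟩ : PrimeSpectrum T) = 1 := by
  have h1 := IsLocalization.AtPrime.ringKrullDim_eq_height q (Localization.AtPrime q)
  have h2 : ringKrullDim (Localization.AtPrime q) = 1 := by
    exact IsPrincipalIdealRing.ringKrullDim_eq_one _ (IsDiscreteValuationRing.not_isField _)
  rw [h2] at h1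
  have h3 : q.height = Order.height (⟨q, hq⟩ : PrimeSpectrum T) :=
    PrimeSpectrum.height_eq_orderHeight ⟨q, hq⟩
  rw [← h3]
  exact_mod_cast h1.symm

theorem dvd_of_good {T : Type*} [CommRing T] [IsDomain T] [IsNoetherianRing T]
    [IsIntegrallyClosed T] {x y : T} (hy : y ≠ 0)
    (h : ∀ (q : Ideal T) (hq : q.IsPrime), y ∈ q → IsDiscreteValuationRing (Localization.AtPrime q) →
      ∃ s, s ∉ q ∧ y ∣ s * x) : y ∣ x := by
  by_contra hxy
  obtain ⟨q, hq, hyq, h1, h2⟩ := exists_good_prime hy hxy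
  obtain ⟨s, hs, hs'⟩ := h q hq hyq h2
  exact hs (h1 s hs')

end

section
open RingTheory.Sequence IsLocalRing Pointwise

/-- regular of dim n -/
def RegN (n : ℕ) (A : Type*) [CommRing A] [IsLocalRing A] : Prop :=
  (∃ v : Fin n → A, Ideal.span (Set.range v) = maximalIdeal A) ∧ (n : WithBot ℕ∞) ≤ ringKrullDim A

theorem regN_quot {n : ℕ} {A : Type*} [CommRing A] [IsNoetherianRing A] [IsLocalRing A]
    (h : RegN (n+1) A) {x : A} (hx : x ∈ maximalIdeal A) (hx2 : x ∉ maximalIdeal A ^ 2)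
    [IsLocalRing (A ⧸ Ideal.span {x})] : RegN n (A ⧸ Ideal.span {x}) := by
  obtain ⟨⟨v, hv⟩, hdim⟩ := h
  have hvm : ∀ i, v i ∈ maximalIdeal A := fun i => hv ▸ Ideal.subset_span ⟨i, rfl⟩
  have hx' := hx
  rw [← hv, Ideal.mem_span_range_iff_exists_fun] at hx'
  obtain ⟨c, hc⟩ := hx'
  have : ∃ i, IsUnit (c i) := by
    by_contra! hcon
    apply hx2
    rw [← hc, pow_two]
    exact Ideal.sum_mem _ fun i _ => Ideal.mul_mem_mul ((mem_maximalIdeal _).2 (hcon i)) (hvm i)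
  obtain ⟨i, hi⟩ := this
  have hmap : maximalIdeal (A ⧸ Ideal.span {x}) = (maximalIdeal A).map (Ideal.Quotient.mk _) := by
    have hs : Function.Surjective (Ideal.Quotient.mk (Ideal.span {x})) := Ideal.Quotient.mk_surjective
    have : IsLocalHom (Ideal.Quotient.mk (Ideal.span {x})) :=
      IsLocalHom.of_surjective _ Ideal.Quotient.mk_surjective
    apply le_antisymm
    · intro y hy
      obtain ⟨y, rfl⟩ := hs y
      apply Ideal.mem_map_of_mem
      rw [mem_maximalIdeal] at hy ⊢
      exact fun h => hy (h.map _)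
    · rw [Ideal.map_le_iff_le_comap]
      intro y hy
      rw [Ideal.mem_comap]
      rw [mem_maximalIdeal] at hy ⊢
      exact fun h => hy ((isUnit_map_iff _ _).1 h)
  refine ⟨⟨fun j => Ideal.Quotient.mk _ (v (i.succAbove j)), ?_⟩, ?_⟩
  · rw [hmap]
    apply le_antisymm
    · rw [Ideal.span_le]
      rintro _ ⟨j, rfl⟩
      exact Ideal.mem_map_of_mem _ (hvm _)
    · rw [← hv, Ideal.map_span, Ideal.span_le]
      rintro _ ⟨_, ⟨k, rfl⟩, rfl⟩
      rcases Fin.eq_self_or_eq_succAbove i k with rfl | ⟨j, rfl⟩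
      · have h0 : Ideal.Quotient.mk (Ideal.span {x}) x = 0 := by
          rw [Ideal.Quotient.eq_zero_iff_mem]; exact Ideal.mem_span_singleton_self x
        have h1 : Ideal.Quotient.mk (Ideal.span {x}) (c k * v k) = - ∑ j, Ideal.Quotient.mk (Ideal.span {x}) (c (k.succAbove j)) * Ideal.Quotient.mk (Ideal.span {x}) (v (k.succAbove j)) := by
          have h00 : Ideal.Quotient.mk (Ideal.span {x}) (∑ i, c i * v i) = 0 := by rw [hc]; exact h0
          rw [map_sum, Fin.sum_univ_succAbove _ k] at h00
          rw [eq_neg_of_add_eq_zero_left h00]; simp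
        simp only [SetLike.mem_coe]
        rw [← Ideal.unit_mul_mem_iff_mem _ (hi.map (Ideal.Quotient.mk (Ideal.span {x}))), ← map_mul, h1]
        refine neg_mem (Ideal.sum_mem _ fun j _ => Ideal.mul_mem_left _ _ (Ideal.subset_span ⟨j, rfl⟩))
      · exact Ideal.subset_span ⟨j, rfl⟩
  · have h1 := ringKrullDim_le_ringKrullDim_quotSMulTop_succ hx
    have h : Ideal.span {x} = x • (⊤ : Ideal A) := by simp [← Submodule.ideal_span_singleton_smul]
    rw [← ringKrullDim_eq_of_ringEquiv (Ideal.quotientEquivAlgOfEq A h).toRingEquiv] at h1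
    have h2 := hdim.trans h1
    push_cast at h2
    exact ENat.WithBot.add_le_add_one_right_iff.1 h2 

theorem quot_local {A : Type*} [CommRing A] [IsLocalRing A] {x : A} (hx : x ∈ maximalIdeal A) :
    IsLocalRing (A ⧸ Ideal.span {x}) := by
  have : Nontrivial (A ⧸ Ideal.span {x}) := by
    rw [Ideal.Quotient.nontrivial_iff]
    intro h
    have : Ideal.span {x} ≤ maximalIdeal A := by
      rwa [Ideal.span_singleton_le_iff_mem]
    rw [h] at this
    exact Ideal.IsPrime.ne_top inferInstance (top_le_iff.1 this)
  exact IsLocalRing.of_surjective' (Ideal.Quotient.mk _) Ideal.Quotient.mk_surjective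

theorem lift_list {A : Type*} [CommRing A] [IsLocalRing A] {x : A} (hx : x ∈ maximalIdeal A)
    (hreg : IsSMulRegular A x) [IsLocalRing (A ⧸ Ideal.span {x})]
    (h : ∃ rs : List (A ⧸ Ideal.span {x}), Ideal.ofList rs = maximalIdeal _ ∧ IsWeaklyRegular (A ⧸ Ideal.span {x}) rs) :
    ∃ rs : List A, Ideal.ofList (x :: rs) = maximalIdeal A ∧ IsWeaklyRegular A (x :: rs) := by
  obtain ⟨rs, h1, h2⟩ := h
  obtain ⟨rs, rfl⟩ := List.map_surjective_iff.2 (Ideal.Quotient.mk_surjective (I := Ideal.span {x})) rs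
  refine ⟨rs, ?_, ?_⟩
  · rw [Ideal.ofList_cons]
    apply le_antisymm
    · refine sup_le (by rwa [Ideal.span_singleton_le_iff_mem]) ?_
      refine Ideal.span_le.2 fun r hr => ?_
      have : Ideal.Quotient.mk (Ideal.span {x}) r ∈ maximalIdeal (A ⧸ Ideal.span {x}) := by
        rw [← h1]; exact Ideal.subset_span (by simpa using ⟨r, hr, rfl⟩)
      rw [SetLike.mem_coe, mem_maximalIdeal] at *
      exact fun h => this (h.map _)
    · intro y hy
      have : Ideal.Quotient.mk (Ideal.span {x}) y ∈ maximalIdeal (A ⧸ Ideal.span {x}) := by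
        have : IsLocalHom (Ideal.Quotient.mk (Ideal.span {x})) :=
      IsLocalHom.of_surjective _ Ideal.Quotient.mk_surjective
        rw [mem_maximalIdeal] at *
        exact fun h => hy ((isUnit_map_iff _ _).1 h)
      rw [← h1, ← Ideal.map_ofList] at this
      rw [Ideal.mem_map_iff_of_surjective _ Ideal.Quotient.mk_surjective] at this
      obtain ⟨z, hz, hzy⟩ := this
      rw [Ideal.Quotient.eq] at hzy
      have : y = z - (z - y) := by ring
      rw [this]
      exact sub_mem (Ideal.mem_sup_right hz) (Ideal.mem_sup_left hzy)
  · rw [isWeaklyRegular_cons_iff]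
    refine ⟨hreg, ?_⟩
    have h : Ideal.span {x} = x • (⊤ : Ideal A) := by simp [← Submodule.ideal_span_singleton_smul]
    have e : (A ⧸ Ideal.span {x}) ≃ₗ[A] QuotSMulTop x A := Submodule.quotEquivOfEq _ _ h
    rw [← LinearEquiv.isWeaklyRegular_congr e]
    exact (isWeaklyRegular_map_algebraMap_iff (A ⧸ Ideal.span {x}) (A ⧸ Ideal.span {x}) rs).1 h2

theorem regN_list : ∀ (n : ℕ) {A : Type*} [CommRing A] [IsNoetherianRing A] [IsLocalRing A],
    RegN n A → IsDomain A ∧ ∃ rs : List A, Ideal.ofList rs = maximalIdeal A ∧ IsWeaklyRegular A rs := by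
  intro n
  induction n with
  | zero =>
    intro A _ _ _ h
    obtain ⟨⟨v, hv⟩, hdim⟩ := h
    have hb : maximalIdeal A = ⊥ := by rw [← hv]; simp
    refine ⟨(isField_iff_maximalIdeal_eq.2 hb).isDomain, [], by simp [hb], by simp⟩
  | succ n ih =>
    intro A _ _ _ h
    have hx : ∃ x, x ∈ maximalIdeal A ∧ x ∉ maximalIdeal A ^ 2 ∧ ∀ q ∈ minimalPrimes A, x ∉ q := by
      by_contra! hcon
      have hfin : (minimalPrimes A).Finite := minimalPrimes.finite_of_isNoetherianRing A
      have hsub : ((maximalIdeal A : Ideal A) : Set A) ⊆ ⋃ i ∈ (↑(insert (maximalIdeal A ^ 2) hfin.toFinset) : Set (Ideal A)), ((id i : Ideal A) : Set A) := by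
        intro x hx
        by_cases h2 : x ∈ maximalIdeal A ^ 2
        · simp only [Set.mem_iUnion]
          exact ⟨_, by simp, h2⟩
        · obtain ⟨q, hq, hxq⟩ := hcon x hx h2
          simp only [Set.mem_iUnion]
          exact ⟨q, by simp; right; exact hq, hxq⟩
      classical
      rw [Ideal.subset_union_prime (maximalIdeal A ^ 2) (maximalIdeal A ^ 2)] at hsub
      · obtain ⟨i, hi, hle⟩ := hsub
        have hd0 : ¬ (ringKrullDim A = 0) := by
          intro h0
          have := h.2
          rw [h0] at this
          exact absurd this (by norm_cast)
        rw [Finset.mem_insert, Set.Finite.mem_toFinset] at hi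
        rcases hi with rfl | hi
        · apply hd0
          have : maximalIdeal A = ⊥ := by
            apply Submodule.eq_bot_of_le_smul_of_le_jacobson_bot (maximalIdeal A) _ (IsNoetherian.noetherian _)
            · simpa [pow_two] using hle
            · exact maximalIdeal_le_jacobson _
          exact ringKrullDim_eq_zero_of_isField (isField_iff_maximalIdeal_eq.2 this)
        · apply hd0
          rw [← maximalIdeal_height_eq_ringKrullDim]
          have : (maximalIdeal A) = i := le_antisymm hle (le_maximalIdeal hi.1.1.ne_top)
          rw [this]
          have := hi.1.1
          rw [Ideal.height_eq_zero_iff.2 hi]; rfl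
      · intro i hi hne _
        rw [Finset.mem_insert, Set.Finite.mem_toFinset] at hi
        exact (hi.resolve_left hne).1.1
    obtain ⟨x, hxm, hx2, hxmin⟩ := hx
    have := quot_local hxm
    obtain ⟨hdom, hlist⟩ := ih (regN_quot h hxm hx2)
    have hprime : (Ideal.span {x}).IsPrime := (Ideal.Quotient.isDomain_iff_prime _).1 hdom
    obtain ⟨q, hq, hqle⟩ := Ideal.exists_minimalPrimes_le (bot_le : (⊥ : Ideal A) ≤ Ideal.span {x})
    have hq' : q.IsPrime := hq.1.1
    have hq0 : q = ⊥ := by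
      apply Submodule.eq_bot_of_le_smul_of_le_jacobson_bot (Ideal.span {x}) _ (IsNoetherian.noetherian _)
      · intro r hr
        obtain ⟨r', rfl⟩ := Ideal.mem_span_singleton.1 (hqle hr)
        exact Submodule.smul_mem_smul (Ideal.mem_span_singleton_self x) ((hq'.mem_or_mem hr).resolve_left (hxmin q hq))
      · rw [Ideal.span_singleton_le_iff_mem]
        exact maximalIdeal_le_jacobson _ hxm
    subst hq0
    have hdomA : IsDomain A := by
      have := (Ideal.Quotient.isDomain_iff_prime (⊥ : Ideal A)).2 hq'
      exact (RingEquiv.quotientBot A).symm.isDomain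
    have hx0 : x ≠ 0 := fun h => hxmin ⊥ hq (by simp [h])
    refine ⟨hdomA, ?_⟩
    obtain ⟨rs, hrs⟩ := lift_list hxm (IsSMulRegular.of_ne_zero hx0) hlist
    exact ⟨_, hrs⟩

end

section
open RingTheory.Sequence IsLocalRing Pointwise
universe u

def pdAll : ℕ → ∀ (T : Type u) [CommRing T] (M : Type u) [AddCommGroup M] [Module T M], Prop
  | 0, T, _, M, _, _ => Module.Free T M
  | n+1, T, _, M, _, _ => ∀ (k : ℕ) (π : (Fin k → T) →ₗ[T] M), Function.Surjective π →
      pdAll n T (LinearMap.ker π)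

theorem pdAll_congr (n : ℕ) {T : Type u} [CommRing T] : ∀ {M N : Type u} [AddCommGroup M] [Module T M]
    [AddCommGroup N] [Module T N] (_ : M ≃ₗ[T] N), pdAll n T M → pdAll n T N := by
  cases n with
  | zero => intro M N _ _ _ _ e h; exact (Module.Free.of_equiv' h e)
  | succ n =>
    intro M N _ _ _ _ e h k π hπ
    have := h k (e.symm.toLinearMap ∘ₗ π) (e.symm.surjective.comp hπ)
    have hk : LinearMap.ker (e.symm.toLinearMap ∘ₗ π) = LinearMap.ker π := by
      ext; simp
    rw [hk] at this
    exact this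

section
variable {T : Type u} [CommRing T] {x : T} {M : Type u} [AddCommGroup M] [Module T M]

theorem finite_of_quot (hM : Module.Finite T M) : Module.Finite (T ⧸ Ideal.span {x}) (QuotSMulTop x M) := by
  exact Module.Finite.of_restrictScalars_finite T _ _

theorem exists_free_cover (n : ℕ)  (x : T) {k : ℕ} (π : (Fin k → T) →ₗ[T] M) (hπ : Function.Surjective π)
    (hx : IsSMulRegular M x) (hp : pdAll (n+1) (T ⧸ Ideal.span {x}) (QuotSMulTop x M)) :
    pdAll n (T ⧸ Ideal.span {x}) (QuotSMulTop x (LinearMap.ker π)) := by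
  let B := T ⧸ Ideal.span {x}
  -- reduced map
  let q : (Fin k → T) →ₗ[T] (Fin k → B) := LinearMap.pi fun i => (Algebra.linearMap T B) ∘ₗ LinearMap.proj i
  have hq : ∀ v i, q v i = algebraMap T B (v i) := fun v i => rfl
  have hqs : Function.Surjective q := by
    intro w
    choose v hv using fun i => Ideal.Quotient.mk_surjective (w i)
    exact ⟨v, funext hv⟩
  let e : Fin k → M := fun i => π (Pi.single i 1)
  have hπe : ∀ v, π v = ∑ i, v i • e i := by
    intro v
    conv_lhs => rw [pi_eq_sum_univ' v, map_sum]
    simp [e]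
  let πb : (Fin k → B) →ₗ[B] QuotSMulTop x M :=
    Fintype.linearCombination B (fun i => (Submodule.Quotient.mk (e i) : QuotSMulTop x M))
  have hcomm : ∀ v, πb (q v) = Submodule.Quotient.mk (π v) := by
    intro v
    rw [hπe]
    simp only [πb, Fintype.linearCombination_apply, hq, algebraMap_smul]
    rw [← Submodule.mkQ_apply, map_sum]
    simp
  have hπb : Function.Surjective πb := by
    intro y
    obtain ⟨m, rfl⟩ := Submodule.Quotient.mk_surjective _ y
    obtain ⟨v, rfl⟩ := hπ m
    exact ⟨q v, hcomm v⟩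
  have h1 := hp k πb hπb
  -- the iso
  let θ0 : LinearMap.ker π →ₗ[T] (LinearMap.ker πb).restrictScalars T :=
    LinearMap.codRestrict _ (q ∘ₗ (LinearMap.ker π).subtype) (by
      intro v
      simp [hcomm, v.2])
  have hθ : ∀ v i, (θ0 v : Fin k → B) i = algebraMap T B (v.1 i) := fun v i => rfl
  have hqk : ∀ v, q v = 0 → ∃ w, v = x • w := by
    intro v hv
    have : ∀ i, ∃ w, v i = x * w := by
      intro i
      have := congrFun hv i
      rw [hq] at this
      exact (Ideal.Quotient.eq_zero_iff_dvd _ _).1 this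
    choose w hw using this
    exact ⟨w, funext hw⟩
  have hker : x • (⊤ : Submodule T (LinearMap.ker π)) = LinearMap.ker θ0 := by
    ext v
    constructor
    · intro hv
      rw [Submodule.mem_smul_pointwise_iff_exists] at hv
      obtain ⟨w, -, rfl⟩ := hv
      rw [LinearMap.mem_ker]
      ext i
      have : algebraMap T B x = 0 := (Ideal.Quotient.eq_zero_iff_mem).2 (Ideal.mem_span_singleton_self x)
      rw [hθ]
      simp [this]
    · intro hv
      have hv' : q v.1 = 0 := by
        exact congrArg Subtype.val (LinearMap.mem_ker.1 hv)
      obtain ⟨w, hw⟩ := hqk _ hv'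
      have hw0 : π w = 0 := by
        have := v.2
        rw [LinearMap.mem_ker, hw, map_smul] at this
        exact hx (by simpa using this)
      rw [Submodule.mem_smul_pointwise_iff_exists]
      exact ⟨⟨w, hw0⟩, trivial, Subtype.ext hw.symm⟩
  have hsurj : Function.Surjective θ0 := by
    rintro ⟨w, hw⟩
    obtain ⟨v, rfl⟩ := hqs w
    have hw' : πb (q v) = 0 := hw
    rw [hcomm, Submodule.Quotient.mk_eq_zero, Submodule.mem_smul_pointwise_iff_exists] at hw'
    obtain ⟨m, -, hm⟩ := hw'
    obtain ⟨u, rfl⟩ := hπ m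
    refine ⟨⟨v - x • u, by simp [← hm]⟩, ?_⟩
    ext i
    have : algebraMap T B x = 0 := (Ideal.Quotient.eq_zero_iff_mem).2 (Ideal.mem_span_singleton_self x)
    rw [hθ]
    simp [hq, this]
  let E0 : QuotSMulTop x (LinearMap.ker π) ≃ₗ[T] (LinearMap.ker πb).restrictScalars T :=
    (Submodule.quotEquivOfEq _ _ hker).trans (θ0.quotKerEquivOfSurjective hsurj)
  let E : QuotSMulTop x (LinearMap.ker π) ≃ₗ[B] LinearMap.ker πb :=
    { E0 with
      map_smul' := by
        intro c y
        obtain ⟨c, rfl⟩ := Ideal.Quotient.mk_surjective c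
        have h := E0.map_smul c y
        change E0 (Ideal.Quotient.mk _ c • y) = Ideal.Quotient.mk _ c • E0 y
        have h2 : (Ideal.Quotient.mk (Ideal.span {x}) c) • y = c • y := algebraMap_smul B c y
        rw [h2, h]
        apply Subtype.ext
        exact (algebraMap_smul B c (E0 y : Fin k → B)).symm }
  exact pdAll_congr n E.symm h1

theorem pdAll_of_quot [IsNoetherianRing T] [IsLocalRing T] (hx : x ∈ maximalIdeal T) (hxT : IsSMulRegular T x) (n : ℕ) :
    ∀ {M : Type u} [AddCommGroup M] [Module T M] [Module.Finite T M], IsSMulRegular M x →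
      pdAll n (T ⧸ Ideal.span {x}) (QuotSMulTop x M) → pdAll n T M := by
  induction n with
  | zero =>
    intro M _ _ _ hxM h
    have : Module.FinitePresentation T M := Module.finitePresentation_of_finite T M
    exact (Module.free_quotSMulTop_iff_free T M (maximalIdeal_le_jacobson _ hx) hxM).1 h
  | succ n ih =>
    intro M _ _ _ hxM h k π hπ
    have h1 := exists_free_cover n x π hπ hxM h
    refine ih ?_ h1
    have : IsSMulRegular (Fin k → T) x := IsSMulRegular.pi fun _ => hxT
    exact this.submodule _ _
end


theorem pdAll_all (n : ℕ) : ∀ {T : Type u} [CommRing T] [IsNoetherianRing T] [IsLocalRing T] (rs : List T)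
    (_ : rs.length = n) (_ : Ideal.ofList rs = maximalIdeal T) (_ : IsWeaklyRegular T rs)
    {M : Type u} [AddCommGroup M] [Module T M] [Module.Finite T M], pdAll n T M := by
  induction n with
  | zero =>
    intro T _ _ _ rs hl h1 h2 M _ _ _
    obtain rfl := List.length_eq_zero_iff.1 hl
    have hF : IsField T := isField_iff_maximalIdeal_eq.2 (by rw [← h1]; simp)
    letI := hF.toField
    exact Module.Free.of_divisionRing T M
  | succ n ih =>
    intro T _ _ _ rs hl h1 h2 M _ _ _ k π hπ
    obtain ⟨x, rs, rfl⟩ := List.exists_cons_of_length_eq_add_one hl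
    rw [isWeaklyRegular_cons_iff] at h2
    have hx : x ∈ maximalIdeal T := by
      rw [← h1]; exact Ideal.subset_span (by simp)
    have hloc := quot_local hx
    have hreg : IsSMulRegular (LinearMap.ker π) x := by
      have : IsSMulRegular (Fin k → T) x := IsSMulRegular.pi fun _ => h2.1
      exact this.submodule _ _
    refine pdAll_of_quot hx h2.1 n hreg ?_
    have hfin : Module.Finite (T ⧸ Ideal.span {x}) (QuotSMulTop x (LinearMap.ker π)) := finite_of_quot inferInstance
    refine ih (rs.map (Ideal.Quotient.mk _)) (by simpa using hl) ?_ ?_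
    · rw [← Ideal.map_ofList]
      apply le_antisymm
      · rw [Ideal.map_le_iff_le_comap]
        intro y hy
        have hy' : y ∈ maximalIdeal T := by
          rw [← h1, Ideal.ofList_cons]; exact Ideal.mem_sup_right hy
        have : IsLocalHom (Ideal.Quotient.mk (Ideal.span {x})) :=
          IsLocalHom.of_surjective _ Ideal.Quotient.mk_surjective
        rw [Ideal.mem_comap]
        rw [mem_maximalIdeal] at *
        exact fun h => hy' ((isUnit_map_iff _ _).1 h)
      · intro y hy
        obtain ⟨y, rfl⟩ := Ideal.Quotient.mk_surjective y
        have hy' : y ∈ maximalIdeal T := by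
          rw [mem_maximalIdeal] at *
          exact fun h => hy (h.map _)
        rw [← h1, Ideal.ofList_cons, Submodule.mem_sup] at hy'
        obtain ⟨a, ha, b, hb, rfl⟩ := hy'
        rw [map_add, Ideal.Quotient.eq_zero_iff_mem.2 ha, zero_add]
        exact Ideal.mem_map_of_mem _ hb
    · have h : Ideal.span {x} = x • (⊤ : Ideal T) := by simp [← Submodule.ideal_span_singleton_smul]
      have e : (T ⧸ Ideal.span {x}) ≃ₗ[T] QuotSMulTop x T := Submodule.quotEquivOfEq _ _ h
      refine (isWeaklyRegular_map_algebraMap_iff (T ⧸ Ideal.span {x}) (T ⧸ Ideal.span {x}) rs).2 ?_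
      rw [LinearEquiv.isWeaklyRegular_congr e]
      exact h2.2

def FFR : ℕ → ∀ (T : Type u) [CommRing T] (M : Type u) [AddCommGroup M] [Module T M], Prop
  | 0, T, _, M, _, _ => ∃ k : ℕ, Nonempty (M ≃ₗ[T] (Fin k → T))
  | n+1, T, _, M, _, _ => ∃ (k : ℕ) (π : (Fin k → T) →ₗ[T] M), Function.Surjective π ∧
      FFR n T (LinearMap.ker π)

theorem FFR_of_pdAll (n : ℕ) : ∀ {T : Type u} [CommRing T] [IsNoetherianRing T] {M : Type u} [AddCommGroup M]
    [Module T M] [Module.Finite T M], pdAll n T M → FFR n T M := by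
  induction n with
  | zero =>
    intro T _ _ M _ _ _ h
    have : Module.Free T M := h
    cases subsingleton_or_nontrivial T
    · have := Module.subsingleton T M
      exact ⟨0, ⟨LinearEquiv.ofSubsingleton _ _⟩⟩
    exact ⟨_, ⟨(Module.finBasis T M).equivFun⟩⟩
  | succ n ih =>
    intro T _ _ M _ _ _ h
    obtain ⟨k, π, hπ⟩ := Module.Finite.exists_fin' T M
    exact ⟨k, π, hπ, ih (h k π hπ)⟩

theorem FFR_congr (n : ℕ) {T : Type u} [CommRing T] : ∀ {M N : Type u} [AddCommGroup M] [Module T M]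
    [AddCommGroup N] [Module T N] (_ : M ≃ₗ[T] N), FFR n T M → FFR n T N := by
  cases n with
  | zero => rintro M N _ _ _ _ e ⟨k, ⟨e'⟩⟩; exact ⟨k, ⟨e.symm.trans e'⟩⟩
  | succ n =>
    rintro M N _ _ _ _ e ⟨k, π, hπ, h⟩
    refine ⟨k, e.toLinearMap ∘ₗ π, e.surjective.comp hπ, ?_⟩
    have hk : LinearMap.ker (e.toLinearMap ∘ₗ π) = LinearMap.ker π := by
      ext; simp
    rw [hk]
    exact h

theorem FFR_prod (n : ℕ) {T : Type u} [CommRing T] {M : Type u} [AddCommGroup M] [Module T M] (j : ℕ)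
    (h : FFR n T M) : FFR n T (M × (Fin j → T)) := by
  cases n with
  | zero =>
    obtain ⟨k, ⟨e⟩⟩ := h
    exact ⟨k + j, ⟨(LinearEquiv.prodCongr e (LinearEquiv.refl T _)).trans
      ((LinearEquiv.sumArrowLequivProdArrow (Fin k) (Fin j) T T).symm.trans
        (LinearEquiv.funCongrLeft T T finSumFinEquiv.symm))⟩⟩
  | succ n =>
    obtain ⟨k, π, hπ, h⟩ := h
    let E : (Fin (k + j) → T) ≃ₗ[T] (Fin k → T) × (Fin j → T) :=
      ((LinearEquiv.sumArrowLequivProdArrow (Fin k) (Fin j) T T).symm.trans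
        (LinearEquiv.funCongrLeft T T finSumFinEquiv.symm)).symm
    refine ⟨k + j, (LinearMap.prodMap π LinearMap.id) ∘ₗ E.toLinearMap, ?_, ?_⟩
    · rw [LinearMap.coe_comp]
      refine Function.Surjective.comp ?_ E.surjective
      rw [LinearMap.coe_prodMap]
      exact hπ.prodMap Function.surjective_id
    · refine FFR_congr n ?_ h
      let F : LinearMap.ker π →ₗ[T] LinearMap.ker ((LinearMap.prodMap π LinearMap.id) ∘ₗ E.toLinearMap) :=
        LinearMap.codRestrict _ (E.symm.toLinearMap ∘ₗ LinearMap.inl T _ _ ∘ₗ (LinearMap.ker π).subtype) (by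
          intro v; simp)
      have hF : ∀ v, ((F v : Fin (k+j) → T)) = E.symm (v.1, 0) := fun v => rfl
      refine LinearEquiv.ofBijective F ⟨?_, ?_⟩
      · intro v w hvw
        have := congrArg Subtype.val hvw
        rw [hF, hF] at this
        have := E.symm.injective this
        exact Subtype.ext (Prod.ext_iff.1 this).1
      · rintro ⟨v, hv⟩
        have hv' : π (E v).1 = 0 ∧ (E v).2 = 0 := by
          simpa [Prod.ext_iff] using hv
        refine ⟨⟨(E v).1, hv'.1⟩, Subtype.ext ?_⟩
        rw [hF, LinearEquiv.symm_apply_eq]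
        exact Prod.ext rfl hv'.2.symm

end

section
open RingTheory.Sequence IsLocalRing Pointwise TensorProduct
universe u v w

theorem length_coker_eq_ord {A : Type u} [CommRing A] [IsDomain A] [IsPrincipalIdealRing A]
    {V : Type v} [AddCommGroup V] [Module A V] [Module.Free A V] [Module.Finite A V]
    (φ : V →ₗ[A] V) (hφ : Function.Injective φ) :
    Module.length A (V ⧸ LinearMap.range φ) = Ring.ord A (LinearMap.det φ) := by
  classical
  let b := Module.finBasis A V
  let N := LinearMap.range φ
  let e : V ≃ₗ[A] N := LinearEquiv.ofInjective φ hφ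
  have h : Module.finrank A N = Module.finrank A V := e.symm.finrank_eq
  let b' := N.smithNormalFormTopBasis b h
  let a := N.smithNormalFormCoeffs b h
  let ab := N.smithNormalFormBotBasis b h
  have hab : ∀ i, (ab i : V) = a i • b' i := fun i => N.smithNormalFormBotBasis_def b h i
  have ha : ∀ i, a i ≠ 0 := by
    intro i hi
    have := hab i
    rw [hi, zero_smul] at this
    exact ab.ne_zero i (Subtype.ext this)
  have h1 : Module.length A (V ⧸ N) = ∑ i, Ring.ord A (a i) := by
    rw [(N.quotientEquivPiSpan b h).length_eq, Module.length_pi_of_fintype]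
    rfl
  have h2 : Ring.ord A (∏ i, a i) = ∑ i, Ring.ord A (a i) := by
    have : ∀ s : Finset (Fin (Module.finrank A V)), Ring.ord A (∏ i ∈ s, a i) = ∑ i ∈ s, Ring.ord A (a i) := by
      intro s
      induction s using Finset.induction_on with
      | empty => simp
      | insert i s hi ih =>
        rw [Finset.prod_insert hi, Finset.sum_insert hi, Ring.ord_mul, ih]
        exact mem_nonZeroDivisors_of_ne_zero (Finset.prod_ne_zero_iff.2 fun j _ => ha j)
    exact this _
  let ψ : V →ₗ[A] V := Matrix.toLin b' b' (Matrix.diagonal a)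
  have hψ : LinearMap.det ψ = ∏ i, a i := by
    simp [ψ]
  let c : V ≃ₗ[A] N := b'.equiv ab (Equiv.refl _)
  have hc : ∀ v, (c v : V) = ψ v := by
    have : N.subtype ∘ₗ c.toLinearMap = ψ := by
      apply b'.ext
      intro i
      simp only [LinearMap.comp_apply, ψ, Matrix.toLin_self]
      rw [Finset.sum_eq_single i]
      · simp [c, hab]
      · intro j _ hj
        simp [Matrix.diagonal_apply_ne _ hj]
      · simp
    intro v
    exact LinearMap.congr_fun this v
  let g := e.trans c.symm
  have hfac : φ = ψ ∘ₗ g.toLinearMap := by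
    ext v
    simp only [LinearMap.comp_apply, g]
    rw [← hc]
    simp [e]
    rfl
  rw [show Module.length A (V ⧸ LinearMap.range φ) = Module.length A (V ⧸ N) from rfl, h1, ← h2, ← hψ, hfac, LinearMap.det_comp, Ring.ord_mul_of_isUnit_right]
  exact g.isUnit_det'

/-- local length -/
noncomputable def llen (A : Type v) [CommRing A] {T : Type u} [CommRing T] [Algebra T A] (M : Type w) [AddCommGroup M] [Module T M] : ℕ∞ :=
  Module.length A (A ⊗[T] M)

section
variable (A : Type v) [CommRing A] {T : Type u} [CommRing T] [Algebra T A] [Module.Flat T A]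

theorem llen_add {M N P : Type*} [AddCommGroup M] [Module T M] [AddCommGroup N] [Module T N] [AddCommGroup P] [Module T P]
    (f : N →ₗ[T] M) (g : M →ₗ[T] P) (hf : Function.Injective f) (hg : Function.Surjective g) (h : Function.Exact f g) :
    llen A (T := T) M = llen A (T := T) N + llen A (T := T) P := by
  refine Module.length_eq_add_of_exact (f.baseChange A) (g.baseChange A) ?_ ?_ ?_
  · exact Module.Flat.lTensor_preserves_injective_linearMap f hf
  · exact LinearMap.lTensor_surjective A hg
  · exact Module.Flat.lTensor_exact A h

theorem llen_congr {M N : Type*} [AddCommGroup M] [Module T M] [AddCommGroup N] [Module T N] (e : M ≃ₗ[T] N) :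
    llen A (T := T) M = llen A (T := T) N := (e.baseChange T A M N).length_eq

theorem llen_coker [IsDomain A] [IsPrincipalIdealRing A] {V : Type*} [AddCommGroup V] [Module T V]
    [Module.Free T V] [Module.Finite T V] (φ : V →ₗ[T] V) (hφ : Function.Injective φ) :
    llen A (T := T) (V ⧸ LinearMap.range φ) = Ring.ord A (algebraMap T A (LinearMap.det φ)) := by
  rw [← LinearMap.det_baseChange, ← length_coker_eq_ord]
  · have hs : Function.Surjective ((LinearMap.range φ).mkQ.baseChange A) := LinearMap.lTensor_surjective A (Submodule.mkQ_surjective _)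
    have hex : Function.Exact (φ.baseChange A) ((LinearMap.range φ).mkQ.baseChange A) :=
      lTensor_exact A (LinearMap.exact_map_mkQ_range φ) (Submodule.mkQ_surjective _)
    rw [← LinearMap.exact_iff.1 hex]
    exact ((LinearMap.quotKerEquivOfSurjective _ hs).length_eq).symm
  · exact Module.Flat.lTensor_preserves_injective_linearMap φ hφ
end

theorem ord_assoc {A : Type u} [CommRing A] [IsDomain A] [IsDiscreteValuationRing A] {x y : A} (hx : x ≠ 0) (hy : y ≠ 0)
    (h : Ring.ord A x = Ring.ord A y) : Associated x y := by
  obtain ⟨ϖ, hϖ⟩ := IsDiscreteValuationRing.exists_irreducible A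
  obtain ⟨n, hn⟩ := IsDiscreteValuationRing.associated_pow_irreducible hx hϖ
  obtain ⟨m, hm⟩ := IsDiscreteValuationRing.associated_pow_irreducible hy hϖ
  rw [Ring.ord_eq_of_associated hn, Ring.ord_eq_of_associated hm, Ring.ord_pow (mem_nonZeroDivisors_of_ne_zero hϖ.ne_zero),
    Ring.ord_pow (mem_nonZeroDivisors_of_ne_zero hϖ.ne_zero), Ring.ord_of_irreducible hϖ] at h
  have : n = m := by simpa using h
  subst this
  exact hn.trans hm.symm

theorem macrae (n : ℕ) {T : Type u} [CommRing T] [IsDomain T] [IsNoetherianRing T] :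
    ∀ {τ : Type u} [AddCommGroup τ] [Module T τ] (s : T) (_ : s ≠ 0) (_ : ∀ v : τ, s • v = 0) (_ : FFR (n+1) T τ),
      ∃ e₁ e₂ : T, e₁ ≠ 0 ∧ e₂ ≠ 0 ∧ ∀ (q : Ideal T) (_ : q.IsPrime), IsDiscreteValuationRing (Localization.AtPrime q) →
        llen (Localization.AtPrime q) (T := T) τ + Ring.ord (Localization.AtPrime q) (algebraMap T _ e₂)
          = Ring.ord (Localization.AtPrime q) (algebraMap T _ e₁) := by
  induction n with
  | zero =>
    intro τ _ _ s hs hsτ h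
    obtain ⟨k, π, hπ, l, ⟨e⟩⟩ := h
    have hsinj : Function.Injective (fun v : Fin k → T => s • v) := by
      intro v w hvw
      ext i
      exact mul_left_cancel₀ hs (congrFun hvw i)
    have hkl : k = l := by
      apply le_antisymm
      · let ι : (Fin k → T) →ₗ[T] (Fin l → T) := e.toLinearMap ∘ₗ LinearMap.codRestrict _ (s • LinearMap.id) (by
          intro v; simp [hsτ])
        have hι : Function.Injective ι := by
          refine e.injective.comp ?_
          intro v w hvw
          exact hsinj (congrArg Subtype.val hvw)
        simpa using LinearMap.finrank_le_finrank_of_injective hι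
      · have := LinearMap.finrank_le_finrank_of_injective (f := (LinearMap.ker π).subtype ∘ₗ e.symm.toLinearMap)
          (Subtype.val_injective.comp e.symm.injective)
        simpa using this
    subst hkl
    let φ : (Fin k → T) →ₗ[T] (Fin k → T) := (LinearMap.ker π).subtype ∘ₗ e.symm.toLinearMap
    have hφ : Function.Injective φ := Subtype.val_injective.comp e.symm.injective
    have hr : LinearMap.range φ = LinearMap.ker π := by
      rw [LinearMap.range_comp_of_range_eq_top _ (LinearEquiv.range _), Submodule.range_subtype]
    refine ⟨LinearMap.det φ, 1, ?_, one_ne_zero, ?_⟩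
    · intro h0
      have := LinearMap.bot_lt_ker_of_det_eq_zero h0
      rw [LinearMap.ker_eq_bot.2 hφ] at this
      exact lt_irrefl _ this
    · intro q _ hq
      rw [map_one, Ring.ord_one, add_zero, ← llen_coker _ φ hφ]
      exact llen_congr _ ((Submodule.quotEquivOfEq _ _ hr).trans (π.quotKerEquivOfSurjective hπ)).symm
  | succ n ih =>
    intro τ _ _ s hs hsτ h
    obtain ⟨k, π, hπ, l, ρ, hρ, hK⟩ := h
    let φ : (Fin k → T) →ₗ[T] (Fin k → T) := s • LinearMap.id
    have hφ : Function.Injective φ := by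
      intro v w hvw
      ext i
      exact mul_left_cancel₀ hs (congrFun hvw i)
    let ι : (Fin k → T) →ₗ[T] LinearMap.ker π := LinearMap.codRestrict _ φ (by
          intro v; simp [φ, hsτ])
    have hι : Function.Injective ι := fun v w hvw => hφ (congrArg Subtype.val hvw)
    let τ' := LinearMap.ker π ⧸ LinearMap.range ι
    have hτ' : ∀ v : τ', s • v = 0 := by
      intro v
      obtain ⟨v, rfl⟩ := Submodule.Quotient.mk_surjective _ v
      rw [← Submodule.Quotient.mk_smul, Submodule.Quotient.mk_eq_zero]
      exact ⟨v.1, Subtype.ext rfl⟩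
    let σ : (Fin l → T) →ₗ[T] τ' := (LinearMap.range ι).mkQ ∘ₗ ρ
    have hσ : Function.Surjective σ := (Submodule.mkQ_surjective _).comp hρ
    -- lift of ι
    obtain ⟨j, hj⟩ := Module.projective_lifting_property ρ ι hρ
    have hj' : ∀ v, ρ (j v) = ι v := fun v => LinearMap.congr_fun hj v
    let F : (LinearMap.ker ρ) × (Fin k → T) →ₗ[T] LinearMap.ker σ :=
      LinearMap.codRestrict _ (LinearMap.coprod (LinearMap.ker ρ).subtype j) (by
        rintro ⟨v, w⟩
        simp only [σ, LinearMap.mem_ker, LinearMap.comp_apply, LinearMap.coprod_apply, map_add, hj', Submodule.subtype_apply]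
        rw [LinearMap.mem_ker.1 v.2, map_zero, zero_add]
        exact (Submodule.Quotient.mk_eq_zero _).2 ⟨w, rfl⟩)
    have hF : ∀ v, (F v : Fin l → T) = v.1 + j v.2 := fun v => rfl
    have hFb : Function.Bijective F := by
      constructor
      · rw [injective_iff_map_eq_zero]
        rintro ⟨v, w⟩ hvw
        have h0 : (v : Fin l → T) + j w = 0 := congrArg Subtype.val hvw
        have h1 := congrArg ρ h0
        rw [map_add, hj', map_zero, LinearMap.mem_ker.1 v.2, zero_add] at h1
        have h2 : w = 0 := hι (by rw [h1, map_zero])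
        subst h2
        rw [map_zero, add_zero] at h0
        exact Prod.ext (Subtype.ext h0) rfl
      · rintro ⟨v, hv⟩
        have hv' : ρ v ∈ LinearMap.range ι := by
          rw [LinearMap.mem_ker] at hv
          exact (Submodule.Quotient.mk_eq_zero _).1 hv
        obtain ⟨w, hw⟩ := hv'
        refine ⟨(⟨v - j w, by simp [hj', hw]⟩, w), Subtype.ext ?_⟩
        rw [hF]; simp
    have hFFR : FFR (n+1) T τ' := ⟨l, σ, hσ, FFR_congr n (LinearEquiv.ofBijective F hFb) (FFR_prod n k hK)⟩
    obtain ⟨e₁, e₂, he₁, he₂, H⟩ := ih s hs hτ' hFFR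
    refine ⟨s ^ k * e₂, e₁, mul_ne_zero (pow_ne_zero _ hs) he₂, he₁, ?_⟩
    intro q _ hq
    rw [← H q ‹_› hq, ← add_assoc]
    have hdet : LinearMap.det φ = s ^ k := by simp [φ]
    have h1 := llen_coker (Localization.AtPrime q) φ hφ
    let a : τ' →ₗ[T] ((Fin k → T) ⧸ LinearMap.range φ) :=
      Submodule.mapQ _ _ (LinearMap.ker π).subtype (by
        rintro _ ⟨v, rfl⟩
        exact ⟨v, rfl⟩)
    let b : ((Fin k → T) ⧸ LinearMap.range φ) →ₗ[T] τ := Submodule.liftQ _ π (by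
        rintro _ ⟨v, rfl⟩
        simp [φ, hsτ])
    have h2 := llen_add (Localization.AtPrime q) a b (by
        rw [injective_iff_map_eq_zero]
        intro v hv
        obtain ⟨v, rfl⟩ := Submodule.Quotient.mk_surjective _ v
        have : (v : Fin k → T) ∈ LinearMap.range φ := (Submodule.Quotient.mk_eq_zero _).1 hv
        obtain ⟨w, hw⟩ := this
        exact (Submodule.Quotient.mk_eq_zero _).2 ⟨w, Subtype.ext hw⟩) (by
        intro t
        obtain ⟨v, rfl⟩ := hπ t
        exact ⟨Submodule.Quotient.mk v, rfl⟩) (by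
        intro v
        obtain ⟨v, rfl⟩ := Submodule.Quotient.mk_surjective _ v
        constructor
        · intro hv
          have hv' : π v = 0 := hv
          exact ⟨Submodule.Quotient.mk ⟨v, hv'⟩, rfl⟩
        · rintro ⟨w, hw⟩
          obtain ⟨w, rfl⟩ := Submodule.Quotient.mk_surjective _ w
          rw [← hw]
          exact w.2)
    rw [h1, hdet] at h2
    rw [add_comm (llen _ τ), ← h2, map_mul, Ring.ord_mul]
    apply mem_nonZeroDivisors_of_ne_zero
    intro h0
    exact he₂ (IsLocalization.injective (Localization.AtPrime q) q.primeCompl_le_nonZeroDivisors (by rw [h0, map_zero]))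

theorem colon_principal {T : Type u} [CommRing T] [IsDomain T] [IsNoetherianRing T] [IsIntegrallyClosed T]
    (n : ℕ) (hFFR : ∀ {M : Type u} [AddCommGroup M] [Module T M] [Module.Finite T M], FFR (n+1) T M)
    (x y : T) (hx : x ≠ 0) : ∃ δ : T, ∀ t, x ∣ t * y ↔ δ ∣ t := by
  let D : Ideal T :=
    { carrier := {t | x ∣ t * y}
      add_mem' := fun {a b} ha hb => by
        have := dvd_add ha hb
        rwa [← add_mul] at this
      zero_mem' := by simp
      smul_mem' := fun c t ht => by
        have : x ∣ c * (t * y) := Dvd.dvd.mul_left ht c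
        rwa [← mul_assoc] at this }
  have hD : ∀ t, t ∈ D ↔ x ∣ t * y := fun t => Iff.rfl
  have hxD : x ∈ D := Dvd.intro _ rfl
  obtain ⟨e₁, e₂, he₁, he₂, H⟩ := macrae n (τ := T ⧸ D) x hx (by
    intro v
    obtain ⟨v, rfl⟩ := Ideal.Quotient.mk_surjective v
    rw [Algebra.smul_def]
    have : algebraMap T (T ⧸ D) x = 0 := Ideal.Quotient.eq_zero_iff_mem.2 hxD
    rw [this, zero_mul]) hFFR
  have hinj : ∀ (q : Ideal T) [q.IsPrime] (t : T), t ≠ 0 → algebraMap T (Localization.AtPrime q) t ≠ 0 := by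
    intro q _ t ht h0
    exact ht (IsLocalization.injective (Localization.AtPrime q) q.primeCompl_le_nonZeroDivisors (by rw [h0, map_zero]))
  have key : ∀ (q : Ideal T) (hq : q.IsPrime), IsDiscreteValuationRing (Localization.AtPrime q) →
      ∃ δ, D.map (algebraMap T (Localization.AtPrime q)) = Ideal.span {δ} ∧
        Associated (δ * algebraMap T _ e₂) (algebraMap T _ e₁) := by
    intro q _ hq
    obtain ⟨δ, hδ⟩ := IsPrincipalIdealRing.principal (D.map (algebraMap T (Localization.AtPrime q)))
    have hδ' : D.map (algebraMap T (Localization.AtPrime q)) = Ideal.span {δ} := hδ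
    have hδ0 : δ ≠ 0 := by
      rintro rfl
      have : algebraMap T (Localization.AtPrime q) x ∈ D.map (algebraMap T (Localization.AtPrime q)) := Ideal.mem_map_of_mem _ hxD
      rw [hδ'] at this
      exact hinj q x hx (by simpa using this)
    refine ⟨δ, hδ', ord_assoc (mul_ne_zero hδ0 (hinj q _ he₂)) (hinj q _ he₁) ?_⟩
    rw [← H q ‹_› hq, Ring.ord_mul _ (mem_nonZeroDivisors_of_ne_zero (hinj q _ he₂))]
    congr 1
    have e1 := (Algebra.TensorProduct.quotIdealMapEquivTensorQuot (Localization.AtPrime q) D).toLinearEquiv.length_eq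
    unfold llen
    rw [← e1, hδ']; rfl
  -- clear denominators
  have clear : ∀ (q : Ideal T) [q.IsPrime] (I : Ideal T) (t : T), algebraMap T (Localization.AtPrime q) t ∈ I.map (algebraMap T _) →
      ∃ s, s ∉ q ∧ s * t ∈ I := by
    intro q _ I t ht
    rw [IsLocalization.algebraMap_mem_map_algebraMap_iff q.primeCompl] at ht
    obtain ⟨s, hs, hst⟩ := ht
    exact ⟨s, hs, hst⟩
  have hdvd : e₂ ∣ e₁ := by
    apply dvd_of_good he₂
    intro q _ _ hq
    obtain ⟨δ, hδ, hass⟩ := key q ‹_› hq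
    obtain ⟨s, hs, hs'⟩ := clear q (Ideal.span {e₂}) e₁ (by
      rw [Ideal.map_span, Set.image_singleton, Ideal.mem_span_singleton]
      exact (Dvd.intro_left _ rfl).trans hass.dvd)
    exact ⟨s, hs, Ideal.mem_span_singleton.1 hs'⟩
  obtain ⟨δ, rfl⟩ := hdvd
  have hδ0 : δ ≠ 0 := right_ne_zero_of_mul he₁
  have key2 : ∀ (q : Ideal T) (hq : q.IsPrime), IsDiscreteValuationRing (Localization.AtPrime q) →
      D.map (algebraMap T (Localization.AtPrime q)) = (Ideal.span {δ}).map (algebraMap T (Localization.AtPrime q)) := by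
    intro q _ hq
    obtain ⟨ε, hε, hass⟩ := key q ‹_› hq
    rw [hε, Ideal.map_span, Set.image_singleton, Ideal.span_singleton_eq_span_singleton]
    rw [map_mul, mul_comm] at hass
    exact hass.of_mul_left (Associated.refl _) (hinj q _ he₂)
  refine ⟨δ, fun t => ⟨fun ht => ?_, ?_⟩⟩
  · apply dvd_of_good hδ0
    intro q _ _ hq
    have : algebraMap T (Localization.AtPrime q) t ∈ D.map (algebraMap T (Localization.AtPrime q)) := Ideal.mem_map_of_mem _ ht
    rw [key2 q ‹_› hq] at this
    obtain ⟨s, hs, hs'⟩ := clear q _ t this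
    exact ⟨s, hs, Ideal.mem_span_singleton.1 hs'⟩
  · have : δ ∈ D := by
      rw [hD]
      apply dvd_of_good hx
      intro q _ _ hq
      have : algebraMap T (Localization.AtPrime q) δ ∈ (Ideal.span {δ}).map (algebraMap T (Localization.AtPrime q)) :=
        Ideal.mem_map_of_mem _ (Ideal.mem_span_singleton_self _)
      rw [← key2 q ‹_› hq] at this
      obtain ⟨s, hs, hs'⟩ := clear q _ δ this
      refine ⟨s, hs, ?_⟩
      rw [← mul_assoc]
      exact hs'
    rintro ⟨c, rfl⟩
    exact D.mul_mem_right c this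

theorem exists_coprime_fac {T : Type u} [CommRing T] [IsDomain T] [IsNoetherianRing T] [IsLocalRing T] [IsIntegrallyClosed T]
    (rs : List T) (h1 : Ideal.ofList rs = maximalIdeal T) (h2 : IsWeaklyRegular T rs) (x y : T) (hx : x ≠ 0) :
    ∃ d k₁ k₂ : T, x = d * k₁ ∧ y = d * k₂ ∧ (∀ c, k₁ ∣ c * k₂ → k₁ ∣ c) := by
  obtain ⟨δ, hδ⟩ := colon_principal rs.length (T := T) (by
    intro M _ _ _
    obtain ⟨k, π, hπ⟩ := Module.Finite.exists_fin' T M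
    exact ⟨k, π, hπ, FFR_of_pdAll _ (pdAll_all _ rs rfl h1 h2)⟩) x y hx
  obtain ⟨d, hd⟩ := (hδ x).1 (Dvd.intro _ rfl)
  obtain ⟨k₂, hk₂⟩ := (hδ δ).2 dvd_rfl
  have hδ0 : δ ≠ 0 := by rintro rfl; simp at hd; exact hx hd
  have hd0 : d ≠ 0 := by rintro rfl; simp at hd; exact hx hd
  have hy : y = d * k₂ := by
    apply mul_left_cancel₀ hδ0
    rw [hk₂, hd]; ring
  refine ⟨d, δ, k₂, by rw [hd, mul_comm], hy, fun c hc => ?_⟩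
  rw [← hδ]
  rw [hd, hy, mul_comm δ d, show c * (d * k₂) = d * (c * k₂) by ring]
  exact mul_dvd_mul_left d hc

end

section
open RingTheory.Sequence IsLocalRing Pointwise CategoryTheory Abelian

universe u v w

section
variable {A : Type u} [CommRing A] [IsNoetherianRing A] [IsLocalRing A]

def HasReg (A : Type u) [CommRing A] [IsLocalRing A] (M : Type v) [AddCommGroup M] [Module A M] (n : ℕ) : Prop :=
  ∃ rs : List A, rs.length = n ∧ (∀ r ∈ rs, r ∈ maximalIdeal A) ∧ IsRegular M rs

theorem hasReg_exchange {M : Type u} [AddCommGroup M] [Module A M] [Module.Finite A M] {n : ℕ} (h : HasReg A M (n+1))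
    {x : A} (hx : x ∈ maximalIdeal A) (hreg : IsSMulRegular M x) : HasReg A (QuotSMulTop x M) n := by
  obtain ⟨rs, hl, hm, hr⟩ := h
  have hnt : Nontrivial M := hr.nontrivial
  have lt1 : ∀ (N : Type u) [AddCommGroup N] [Module A N] [Module.Finite A N] [Nontrivial N],
      maximalIdeal A • (⊤ : Submodule A N) < ⊤ := by
    intro N _ _ _ _
    exact (Submodule.top_ne_ideal_smul_of_le_jacobson_annihilator (maximalIdeal_le_jacobson _)).symm.lt_top
  let k : ModuleCat.{u} A := ModuleCat.of A (A ⧸ maximalIdeal A)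
  have hk : Module.support A k = PrimeSpectrum.zeroLocus (maximalIdeal A) := by
    rw [Module.support_eq_zeroLocus]
    simp [k, Ideal.annihilator_quotient]
  have h0 := ModuleCat.subsingleton_ext_of_exists_isRegular (maximalIdeal A) k hk.le (ModuleCat.of A M) (lt1 M) rs hm hr
  have hnt' : Nontrivial (QuotSMulTop x M) := _root_.nontrivial_quotSMulTop_of_mem_maximalIdeal M hx
  refine ModuleCat.exists_isRegular_of_exists_subsingleton_ext (maximalIdeal A) n (ModuleCat.of A (QuotSMulTop x M))
    (lt1 _) k hk ?_
  intro i hi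
  have zero1 := AddCommGrpCat.isZero_of_iff_subsingleton.mpr (h0 i (by omega))
  have zero2 := AddCommGrpCat.isZero_of_iff_subsingleton.mpr (h0 (i + 1) (by omega))
  have hreg' : IsSMulRegular (ModuleCat.of A M) x := hreg
  exact AddCommGrpCat.subsingleton_of_isZero <| ShortComplex.Exact.isZero_of_both_zeros
        ((Ext.covariant_sequence_exact₃' k hreg'.smulShortComplex_shortExact) i (i + 1) rfl)
        (zero1.eq_zero_of_src _) (zero2.eq_zero_of_tgt _)

theorem ass_step {M : Type v} [AddCommGroup M] [Module A M] [Module.Finite A M] {x : A} (hx : x ∈ maximalIdeal A)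
    (hreg : IsSMulRegular M x) {P : Ideal A} (hP : P ∈ associatedPrimes A M) :
    ∃ P' ∈ associatedPrimes A (QuotSMulTop x M), P < P' := by
  let N : Submodule A M := 
    { carrier := {m | ∀ a ∈ P, a • m = 0}
      add_mem' := fun {m n} hm hn a ha => by rw [smul_add, hm a ha, hn a ha, add_zero]
      zero_mem' := fun a _ => smul_zero a
      smul_mem' := fun c m hm a ha => by rw [smul_comm, hm a ha, smul_zero] }
  obtain ⟨hPp, y, hy⟩ := (isAssociatedPrime_iff).1 hP
  have hy0 : y ≠ 0 := by
    rintro rfl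
    apply hPp.ne_top
    rw [hy, Ideal.eq_top_iff_one, Submodule.mem_colon_singleton]; simp
  have hyN : y ∈ N := by
    intro a ha
    rw [hy, Submodule.mem_colon_singleton] at ha
    simpa using ha
  have hxP : x ∉ P := by
    intro h
    rw [hy, Submodule.mem_colon_singleton] at h
    exact hy0 (hreg (by simpa using h))
  have : ∃ m ∈ N, m ∉ x • (⊤ : Submodule A M) := by
    by_contra! hcon
    have hN : N = ⊥ := by
      apply Submodule.eq_bot_of_le_smul_of_le_jacobson_bot (maximalIdeal A) N (IsNoetherian.noetherian N) ?_
        (maximalIdeal_le_jacobson _)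
      intro m hm
      obtain ⟨m', -, rfl⟩ := hcon m hm
      have : m' ∈ N := by
        intro a ha
        have h1 : x • (a • m') = 0 := by
          rw [smul_comm]; exact hm a ha
        exact hreg (by simpa using h1)
      exact Submodule.smul_mem_smul hx this
    rw [hN] at hyN
    exact hy0 (by simpa using hyN)
  obtain ⟨m, hmN, hm⟩ := this
  let mb : QuotSMulTop x M := Submodule.Quotient.mk m
  have hmb : mb ≠ 0 := by
    intro h
    exact hm ((Submodule.Quotient.mk_eq_zero _).1 h)
  obtain ⟨P', hP', hle⟩ := exists_le_isAssociatedPrime_of_isNoetherianRing A mb hmb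
  have hle1 : P ≤ P' := by
    intro a ha
    apply hle
    rw [Submodule.mem_colon_singleton]
    have : a • mb = Submodule.Quotient.mk (a • m) := rfl
    rw [this, hmN a ha]
    simp
  refine ⟨P', hP', lt_of_le_of_ne hle1 ?_⟩
  rintro rfl
  apply hxP
  apply hle
  rw [Submodule.mem_colon_singleton]
  have : x • mb = Submodule.Quotient.mk (x • m) := rfl
  rw [this]
  have : (Submodule.Quotient.mk (x • m) : QuotSMulTop x M) = 0 := (Submodule.Quotient.mk_eq_zero _).2 ⟨m, trivial, rfl⟩
  rw [this]; exact Submodule.zero_mem _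

theorem dim_quot_lt {P P' : Ideal A} [P.IsPrime] [P'.IsPrime] (h : P < P') :
    ringKrullDim (A ⧸ P') + 1 ≤ ringKrullDim (A ⧸ P) := by
  obtain ⟨y, hy, hyP⟩ := SetLike.exists_of_lt h
  have h1 := ringKrullDim_quotient_succ_le_of_nonZeroDivisor (R := A ⧸ P) (r := Ideal.Quotient.mk P y)
    (mem_nonZeroDivisors_of_ne_zero (by rwa [Ne, Ideal.Quotient.eq_zero_iff_mem]))
  refine le_trans (add_le_add_left ?_ 1) h1
  refine ringKrullDim_le_of_surjective (Ideal.Quotient.lift _ (Ideal.Quotient.factor h.le) ?_) ?_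
  · intro a ha
    have : Ideal.span {Ideal.Quotient.mk P y} ≤ RingHom.ker (Ideal.Quotient.factor h.le) := by
      rw [Ideal.span_singleton_le_iff_mem, RingHom.mem_ker, Ideal.Quotient.factor_mk, Ideal.Quotient.eq_zero_iff_mem]
      exact hy
    exact this ha
  · exact Ideal.Quotient.lift_surjective_of_surjective _ _ (Ideal.Quotient.factor_surjective h.le)

theorem le_dim_of_ass (rs : List A) : ∀ {M : Type v} [AddCommGroup M] [Module A M] [Module.Finite A M],
    (∀ r ∈ rs, r ∈ maximalIdeal A) → IsWeaklyRegular M rs → ∀ P ∈ associatedPrimes A M,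
    (rs.length : WithBot ℕ∞) ≤ ringKrullDim (A ⧸ P) := by
  induction rs with
  | nil =>
    intro M _ _ _ _ _ P hP
    have : P.IsPrime := (show IsAssociatedPrime _ _ from hP).1
    simpa using ringKrullDim_nonneg_of_nontrivial
  | cons x rs ih =>
    intro M _ _ _ hm hr P hP
    rw [isWeaklyRegular_cons_iff] at hr
    obtain ⟨P', hP', hlt⟩ := ass_step (hm x (by simp)) hr.1 hP
    have h1 : P.IsPrime := (show IsAssociatedPrime _ _ from hP).1
    have h2 : P'.IsPrime := (show IsAssociatedPrime _ _ from hP').1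
    have := ih (fun r h => hm r (by simp [h])) hr.2 P' hP'
    refine le_trans ?_ (dim_quot_lt hlt)
    rw [List.length_cons]; push_cast
    exact add_le_add_left this 1

theorem not_regular_mem {M : Type v} [AddCommGroup M] [Module A M] {x : A} (h : ¬ IsSMulRegular M x) :
    ∃ P ∈ associatedPrimes A M, x ∈ P := by
  have h1 := biUnion_associatedPrimes_eq_compl_regular A M
  have : x ∈ ⋃ p ∈ associatedPrimes A M, (p : Set A) := by rw [h1]; exact h
  simpa using this

theorem sop_regular (rs : List A) : ∀ {M : Type u} [AddCommGroup M] [Module A M] [Module.Finite A M],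
    HasReg A M rs.length → (∀ r ∈ rs, r ∈ maximalIdeal A) → 
    (∀ P : Ideal A, P.IsPrime → Module.annihilator A M ≤ P → Ideal.ofList rs ≤ P → P = maximalIdeal A) →
    IsWeaklyRegular M rs := by
  induction rs with
  | nil => intros; exact IsWeaklyRegular.nil A _
  | cons x rs ih =>
    intro M _ _ _ hR hm hP
    have hx : x ∈ maximalIdeal A := hm x (by simp)
    have hreg : IsSMulRegular M x := by
      by_contra hcon
      obtain ⟨P, hPa, hxP⟩ := not_regular_mem hcon
      have hPp : P.IsPrime := (show IsAssociatedPrime _ _ from hPa).1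
      obtain ⟨ss, hl, hsm, hsr⟩ := hR
      have h1 := le_dim_of_ass ss hsm hsr.toIsWeaklyRegular P hPa
      have hann : Module.annihilator A M ≤ P := by
        have := (show IsAssociatedPrime P M from hPa).annihilator_le
        rwa [Submodule.annihilator_top] at this
      haveI : IsLocalRing (A ⧸ P) := IsLocalRing.of_surjective' (Ideal.Quotient.mk P) Ideal.Quotient.mk_surjective
      let I : Ideal (A ⧸ P) := (Ideal.ofList rs).map (Ideal.Quotient.mk P)
      have hmin : maximalIdeal (A ⧸ P) ∈ I.minimalPrimes := by
        have key : ∀ J : Ideal (A ⧸ P), J.IsPrime → I ≤ J → J = maximalIdeal (A ⧸ P) := by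
          intro J hJ hIJ
          have e := hP (J.comap (Ideal.Quotient.mk P)) inferInstance 
            (hann.trans (by intro a ha; rw [Ideal.mem_comap, Ideal.Quotient.eq_zero_iff_mem.2 ha]; exact J.zero_mem)) (by
              rw [Ideal.ofList_cons, sup_le_iff, Ideal.span_singleton_le_iff_mem]
              refine ⟨?_, Ideal.map_le_iff_le_comap.1 hIJ⟩
              rw [Ideal.mem_comap, Ideal.Quotient.eq_zero_iff_mem.2 hxP]; exact J.zero_mem)
          apply IsLocalRing.eq_maximalIdeal
          have hmx : (J.comap (Ideal.Quotient.mk P)).IsMaximal := by rw [e]; infer_instance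
          have := Ideal.map_eq_top_or_isMaximal_of_surjective (Ideal.Quotient.mk P) Ideal.Quotient.mk_surjective hmx
          rw [Ideal.map_comap_of_surjective _ Ideal.Quotient.mk_surjective] at this
          exact this.resolve_left hJ.ne_top
        have hIm : I ≤ maximalIdeal (A ⧸ P) := by
          apply IsLocalRing.le_maximalIdeal
          intro htop
          have h2 : Ideal.ofList rs ⊔ P = ⊤ := by
            have := congrArg (Ideal.comap (Ideal.Quotient.mk P)) htop
            rw [Ideal.comap_map_of_surjective _ Ideal.Quotient.mk_surjective, Ideal.comap_top, ← RingHom.ker_eq_comap_bot, Ideal.mk_ker] at this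
            exact this
          have h3 : Ideal.ofList rs ⊔ P ≤ maximalIdeal A := by
            rw [sup_le_iff]
            refine ⟨Ideal.span_le.2 fun r hr => hm r (by simp; exact Or.inr hr), le_maximalIdeal hPp.ne_top⟩
          rw [h2] at h3
          exact (Ideal.IsPrime.ne_top inferInstance) (top_le_iff.1 h3)
        refine ⟨⟨inferInstance, hIm⟩, ?_⟩
        rintro J ⟨hJ, hIJ⟩ _
        exact (key J hJ hIJ).ge
      have h2 : (maximalIdeal (A ⧸ P)).height ≤ rs.length := by
        classical
        have : I = Ideal.span (((rs.map (Ideal.Quotient.mk P)).toFinset : Finset (A ⧸ P)) : Set (A ⧸ P)) := by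
          simp only [I, Ideal.map_ofList]
          unfold Ideal.ofList
          congr 1
          ext; simp
        rw [this] at hmin
        refine (Ideal.height_le_card_of_mem_minimalPrimes_span_finset hmin).trans ?_
        have := List.toFinset_card_le (rs.map (Ideal.Quotient.mk P))
        rw [List.length_map] at this
        exact_mod_cast this
      rw [← maximalIdeal_height_eq_ringKrullDim, hl, List.length_cons] at h1
      have h3 : ((rs.length + 1 : ℕ) : WithBot ℕ∞) ≤ (rs.length : ℕ∞) := h1.trans (by exact_mod_cast h2)
      have h4 : rs.length + 1 ≤ rs.length := by exact_mod_cast h3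
      omega
    refine IsWeaklyRegular.cons hreg (ih (hasReg_exchange hR hx hreg) (fun r h => hm r (by simp [h])) ?_)
    intro P hPp h1 h2
    have hxa : x ∈ Module.annihilator A (QuotSMulTop x M) := by
      rw [Module.mem_annihilator]
      intro m
      obtain ⟨m, rfl⟩ := Submodule.Quotient.mk_surjective _ m
      exact (Submodule.Quotient.mk_eq_zero _).2 ⟨m, trivial, rfl⟩
    refine hP P hPp (le_trans ?_ h1) ?_
    · exact LinearMap.annihilator_le_of_surjective (Submodule.mkQ _) (Submodule.mkQ_surjective _)
    · rw [Ideal.ofList_cons, sup_le_iff, Ideal.span_singleton_le_iff_mem]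
      exact ⟨h1 hxa, h2⟩

theorem prime_reg_aux (q : Ideal A) [q.IsPrime] (r : ℕ) : ∀ (n : ℕ) {M : Type u} [AddCommGroup M] [Module A M] [Module.Finite A M],
    HasReg A M n → (∀ P : Ideal A, P.IsPrime → q ≤ P → ringKrullDim (A ⧸ P) + r ≤ n) → r ≤ n → 
    ∃ ys : List A, ys.length = r ∧ (∀ y ∈ ys, y ∈ q) ∧ IsWeaklyRegular M ys := by
  induction r with
  | zero =>
    intro n M _ _ _ _ _ _
    exact ⟨[], rfl, by simp, IsWeaklyRegular.nil A M⟩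
  | succ r ih =>
    intro n M _ _ _ h4 hP hrn
    have : ∃ y ∈ q, IsSMulRegular M y := by
      by_contra! hcon
      have hsub : (q : Set A) ⊆ ⋃ P ∈ associatedPrimes A M, (P : Set A) := by
        intro y hy
        obtain ⟨P, hP, hyP⟩ := not_regular_mem (hcon y hy)
        simp only [Set.mem_iUnion]
        exact ⟨P, hP, hyP⟩
      have hfin := associatedPrimes.finite A M
      obtain ⟨P, hPa, hqP⟩ := (Ideal.subset_union_prime_finite hfin ⊥ ⊥ (fun P hP _ _ => (show IsAssociatedPrime _ _ from hP).1)).1 hsub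
      have hPp : P.IsPrime := (show IsAssociatedPrime _ _ from hPa).1
      obtain ⟨ss, hl, hsm, hsr⟩ := h4
      have h5 := le_dim_of_ass ss hsm hsr.toIsWeaklyRegular P hPa
      have h6 := hP P hPp hqP
      have h7 : ((ss.length + (r + 1) : ℕ) : WithBot ℕ∞) ≤ n := by
        push_cast
        refine le_trans (add_le_add_left h5 _) ?_
        exact_mod_cast h6
      have : ss.length + (r + 1) ≤ n := by exact_mod_cast h7
      omega
    obtain ⟨y, hy, hyr⟩ := this
    obtain ⟨n, rfl⟩ : ∃ n', n = n' + 1 := ⟨n - 1, by omega⟩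
    obtain ⟨ys, h1, h2, h3⟩ := ih n (hasReg_exchange h4 (le_maximalIdeal (Ideal.IsPrime.ne_top (I := q) inferInstance) hy) hyr) (by
      intro P h1 h2
      have := hP P h1 h2
      push_cast at this
      rw [← add_assoc] at this
      exact (ENat.WithBot.add_le_add_one_right_iff).1 this) (by omega)
    exact ⟨y :: ys, by simp [h1], by simpa [hy] using h2, IsWeaklyRegular.cons hyr h3⟩

theorem prime_reg {d : ℕ} (hd : ringKrullDim A = d) (hR : HasReg A A d) (q : Ideal A) [q.IsPrime] (r : ℕ) (hr : (r : ℕ∞) ≤ q.height) :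
    ∃ ys : List A, ys.length = r ∧ (∀ y ∈ ys, y ∈ q) ∧ IsWeaklyRegular A ys := by
  have hrd : r ≤ d := by
    have h1 := Ideal.height_le_ringKrullDim_of_ne_top (Ideal.IsPrime.ne_top (I := q) inferInstance)
    rw [hd] at h1
    have : ((r : ℕ∞) : WithBot ℕ∞) ≤ d := le_trans (by exact_mod_cast hr) h1
    exact_mod_cast this
  refine prime_reg_aux q r d hR ?_ hrd
  intro P hPp hqP
  have h7 : ((r : ℕ) : WithBot ℕ∞) ≤ P.height := by
    exact_mod_cast hr.trans (Ideal.height_mono hqP)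
  have h8 : ringKrullDim (A ⧸ P) = ((Order.coheight (⟨P, hPp⟩ : PrimeSpectrum A) : ℕ∞) : WithBot ℕ∞) := by
    rw [ringKrullDim_quotient, Order.coheight_eq_krullDim_Ici]
    rfl
  have h9 : (P.height : WithBot ℕ∞) = ((Order.height (⟨P, hPp⟩ : PrimeSpectrum A) : ℕ∞) : WithBot ℕ∞) := by
    rw [← PrimeSpectrum.height_eq_orderHeight]
  rw [h9] at h7
  rw [h8, ← hd, add_comm]
  refine (add_le_add_left h7 _).trans ?_
  unfold ringKrullDim
  rw [Order.krullDim_eq_iSup_height_add_coheight_of_nonempty]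
  have := le_iSup (fun a : PrimeSpectrum A => Order.height a + Order.coheight a) ⟨P, hPp⟩
  exact_mod_cast this
end

theorem free_of_list (n : ℕ) : ∀ {T : Type u} [CommRing T] [IsNoetherianRing T] [IsLocalRing T] (rs : List T)
    (_ : rs.length = n) (_ : Ideal.ofList rs = maximalIdeal T)
    {M : Type v} [AddCommGroup M] [Module T M] [Module.Finite T M] (_ : IsWeaklyRegular M rs), Module.Free T M := by
  induction n with
  | zero =>
    intro T _ _ _ rs hl h1 M _ _ _ h2
    obtain rfl := List.length_eq_zero_iff.1 hl
    have hF : IsField T := isField_iff_maximalIdeal_eq.2 (by rw [← h1]; simp)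
    letI := hF.toField
    exact Module.Free.of_divisionRing T M
  | succ n ih =>
    intro T _ _ _ rs hl h1 M _ _ _ h2
    obtain ⟨x, rs, rfl⟩ := List.exists_cons_of_length_eq_add_one hl
    rw [isWeaklyRegular_cons_iff'] at h2
    have hx : x ∈ maximalIdeal T := by
      rw [← h1]; exact Ideal.subset_span (by simp)
    have hloc := quot_local hx
    have := Module.finitePresentation_of_finite T M
    rw [← Module.free_quotSMulTop_iff_free T M (maximalIdeal_le_jacobson _ hx) h2.1]
    have hfin : Module.Finite (T ⧸ Ideal.span {x}) (QuotSMulTop x M) :=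
      Module.Finite.of_restrictScalars_finite T (T ⧸ Ideal.span {x}) (QuotSMulTop x M)
    refine ih (rs.map (Ideal.Quotient.mk _)) (by simpa using hl) ?_ h2.2
    rw [← Ideal.map_ofList]
    apply le_antisymm
    · rw [Ideal.map_le_iff_le_comap]
      intro y hy
      have hy' : y ∈ maximalIdeal T := by
        rw [← h1, Ideal.ofList_cons]; exact Ideal.mem_sup_right hy
      have : IsLocalHom (Ideal.Quotient.mk (Ideal.span {x})) :=
        IsLocalHom.of_surjective _ Ideal.Quotient.mk_surjective
      rw [Ideal.mem_comap]
      rw [mem_maximalIdeal] at *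
      exact fun h => hy' ((isUnit_map_iff _ _).1 h)
    · intro y hy
      obtain ⟨y, rfl⟩ := Ideal.Quotient.mk_surjective y
      have hy' : y ∈ maximalIdeal T := by
        rw [mem_maximalIdeal] at *
        exact fun h => hy (h.map _)
      rw [← h1, Ideal.ofList_cons, Submodule.mem_sup] at hy'
      obtain ⟨a, ha, b, hb, rfl⟩ := hy'
      rw [map_add, Ideal.Quotient.eq_zero_iff_mem.2 ha, zero_add]
      exact Ideal.mem_map_of_mem _ hb

theorem isWeaklyRegular_ring_iff {A : Type u} [CommRing A] (rs : List A) : IsWeaklyRegular A rs ↔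
    ∀ i (h : i < rs.length), ∀ a, rs[i] * a ∈ Ideal.ofList (rs.take i) → a ∈ Ideal.ofList (rs.take i) := by
  rw [isWeaklyRegular_iff]
  refine forall_congr' fun i => forall_congr' fun h => ?_
  rw [isSMulRegular_iff_right_eq_zero_of_smul]
  constructor
  · intro H a ha
    have := H (Submodule.Quotient.mk a) (by
      rw [← Submodule.Quotient.mk_smul, Submodule.Quotient.mk_eq_zero]
      simpa using ha)
    rw [Submodule.Quotient.mk_eq_zero] at this
    simpa using this
  · intro H a ha
    obtain ⟨a, rfl⟩ := Submodule.Quotient.mk_surjective _ a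
    rw [← Submodule.Quotient.mk_smul, Submodule.Quotient.mk_eq_zero] at ha
    rw [Submodule.Quotient.mk_eq_zero]
    simpa using H a (by simpa using ha)

theorem isWeaklyRegular_of_local {A : Type u} [CommRing A] (rs : List A)
    (H : ∀ (Q : Ideal A) (_ : Q.IsMaximal), IsWeaklyRegular (Localization.AtPrime Q) (rs.map (algebraMap A (Localization.AtPrime Q)))) :
    IsWeaklyRegular A rs := by
  rw [isWeaklyRegular_ring_iff]
  intro i hi a ha
  refine Ideal.mem_of_localization_maximal fun Q hQ => ?_
  have h1 := (isWeaklyRegular_ring_iff _).1 (H Q hQ) i (by simpa using hi) (algebraMap A _ a)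
  rw [← List.map_take, ← Ideal.map_ofList, List.getElem_map, ← map_mul] at h1
  exact h1 (Ideal.mem_map_of_mem _ ha)

end

section
open RingTheory.Sequence IsLocalRing Pointwise

theorem modDepth_le {B : Type*} [CommRing B] [IsLocalRing B] [IsNoetherianRing B] (h : ℕ∞) (hh : ringKrullDim B = h) :
    modDepth B B ≤ h := by
  apply sSup_le
  rintro n ⟨rs, rfl, hm, hr⟩
  have h1 := ringKrullDim_add_length_eq_ringKrullDim_of_isRegular rs hr
  have : Nontrivial (B ⧸ Ideal.ofList rs) := by
    have := hr.quot_ofList_smul_nontrivial ⊤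
    rwa [Ideal.smul_eq_mul, Ideal.mul_top] at this
  have h2 : (0 : WithBot ℕ∞) ≤ ringKrullDim (B ⧸ Ideal.ofList rs) := ringKrullDim_nonneg_of_nontrivial
  have h3 : ((rs.length : ℕ∞) : WithBot ℕ∞) ≤ h := by
    rw [← hh, ← h1]
    exact le_add_of_nonneg_left h2
  exact_mod_cast h3

theorem height_le_under {S R : Type*} [CommRing S] [CommRing R] [Algebra S R] [Algebra.IsIntegral S R] (Q : Ideal R) [hQ : Q.IsPrime] :
    Q.height ≤ (Q.comap (algebraMap S R)).height := by
  let F : PrimeSpectrum R → PrimeSpectrum S := PrimeSpectrum.comap (algebraMap S R)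
  have hF : StrictMono F := by
    intro x y hxy
    exact Ideal.IsIntegral.comap_lt_comap (I := x.asIdeal) (J := y.asIdeal) hxy
  have h := Order.height_le_height_apply_of_strictMono F hF ⟨Q, hQ⟩
  rw [← PrimeSpectrum.height_eq_orderHeight, ← PrimeSpectrum.height_eq_orderHeight] at h
  exact h

theorem cm_of_free {S R : Type*} [CommRing S] [IsNoetherianRing S] [IsLocalRing S] [CommRing R] [Algebra S R] [Algebra.IsIntegral S R]
    [IsNoetherianRing R] [Module.Free S R] {d : ℕ} (hd : ringKrullDim S = d) (hR : HasReg S S d) : IsCMRing R := by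
  intro Q hQ
  have h1 := IsLocalization.AtPrime.ringKrullDim_eq_height Q (Localization.AtPrime Q)
  rw [h1]
  have : IsNoetherianRing (Localization.AtPrime Q) := IsLocalization.isNoetherianRing Q.primeCompl _ inferInstance
  congr 1
  refine le_antisymm (modDepth_le _ h1) ((height_le_under (S := S) Q).trans ?_)
  obtain ⟨r, hr⟩ : ∃ r : ℕ, (Q.comap (algebraMap S R)).height = r :=
    ENat.ne_top_iff_exists.1 (Ideal.height_ne_top (Ideal.IsPrime.ne_top inferInstance)) |>.imp fun _ h => h.symm
  rw [hr]
  obtain ⟨ys, e1, e2, e3⟩ := prime_reg hd hR (Q.comap (algebraMap S R)) r hr.ge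
  have : Module.Flat S (Localization.AtPrime Q) := Module.Flat.trans S R _
  have h3 : IsWeaklyRegular (Localization.AtPrime Q) (ys.map (algebraMap S (Localization.AtPrime Q))) := e3.of_flat
  have h4 : ∀ y ∈ ys.map (algebraMap S (Localization.AtPrime Q)), y ∈ maximalIdeal (Localization.AtPrime Q) := by
    intro y hy
    obtain ⟨y, hy', rfl⟩ := List.mem_map.1 hy
    rw [IsScalarTower.algebraMap_apply S R]
    exact (IsLocalization.AtPrime.to_map_mem_maximal_iff (Localization.AtPrime Q) Q _).2 (e2 y hy')
  apply le_sSup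
  exact ⟨_, by simp [e1], h4, IsRegular.of_isWeaklyRegular_of_mem_maximalIdeal _ h4 h3⟩

theorem free_of_cm {S R : Type*} [CommRing S] [IsDomain S] [IsNoetherianRing S] [IsLocalRing S] [IsIntegrallyClosed S]
    [CommRing R] [IsDomain R] [Algebra S R] [FaithfulSMul S R] [Module.Finite S R] 
    (rs : List S) (hrs : Ideal.ofList rs = maximalIdeal S) (hd : ringKrullDim S = rs.length) (hCM : IsCMRing R) :
    Module.Free S R := by
  have : IsNoetherianRing R := IsNoetherianRing.of_finite S R
  refine free_of_list rs.length rs rfl hrs ?_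
  rw [← isWeaklyRegular_map_algebraMap_iff R R]
  apply isWeaklyRegular_of_local
  intro Q hQ
  have hlo : Q.LiesOver (maximalIdeal S) := by
    constructor
    have : (Q.comap (algebraMap S R)).IsMaximal := Ideal.isMaximal_comap_of_isIntegral_of_isMaximal Q
    exact (IsLocalRing.eq_maximalIdeal this).symm
  have hover : Q.comap (algebraMap S R) = maximalIdeal S := (hlo.over).symm
  have h1 := IsLocalization.AtPrime.ringKrullDim_eq_height Q (Localization.AtPrime Q)
  have hN : IsNoetherianRing (Localization.AtPrime Q) := IsLocalization.isNoetherianRing Q.primeCompl _ inferInstance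
  have h2 : Q.height = rs.length := by
    have e : ((maximalIdeal S).height : WithBot ℕ∞) = (rs.length : ℕ∞) := by
      rw [maximalIdeal_height_eq_ringKrullDim, hd]; rfl
    have e' : (maximalIdeal S).height = rs.length := by exact_mod_cast e
    apply le_antisymm
    · rw [← e', ← hover]; exact height_le_under Q
    · rw [← e', Ideal.height_eq_height_add_of_liesOver_of_hasGoingDown (maximalIdeal S) Q]
      exact le_self_add
  have h3 := hCM Q inferInstance
  rw [h1, h2] at h3
  have h4 : modDepth (Localization.AtPrime Q) (Localization.AtPrime Q) = rs.length := by exact_mod_cast h3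
  have h5 : HasReg (Localization.AtPrime Q) (Localization.AtPrime Q) (rs.map (algebraMap R (Localization.AtPrime Q) ∘ algebraMap S R)).length := by
    haveI : Nonempty ↥{n : ℕ∞ | ∃ rs : List (Localization.AtPrime Q), (rs.length : ℕ∞) = n ∧
      (∀ r ∈ rs, r ∈ IsLocalRing.maximalIdeal (Localization.AtPrime Q)) ∧ RingTheory.Sequence.IsRegular (Localization.AtPrime Q) rs} :=
      ⟨⟨0, [], by simp, by simp, IsRegular.nil _ _⟩⟩
    have : modDepth (Localization.AtPrime Q) (Localization.AtPrime Q) ∈ _ := ENat.sSup_mem_of_nonempty_of_lt_top (s := {n : ℕ∞ | ∃ rs : List (Localization.AtPrime Q), (rs.length : ℕ∞) = n ∧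
      (∀ r ∈ rs, r ∈ IsLocalRing.maximalIdeal (Localization.AtPrime Q)) ∧ RingTheory.Sequence.IsRegular (Localization.AtPrime Q) rs})
      (by
        change modDepth (Localization.AtPrime Q) (Localization.AtPrime Q) < ⊤
        rw [h4]; exact ENat.coe_lt_top _)
    rw [h4] at this
    obtain ⟨ss, e1, e2, e3⟩ := this
    refine ⟨ss, ?_, e2, e3⟩
    rw [List.length_map]
    exact_mod_cast e1
  rw [List.map_map]
  apply sop_regular _ h5
  · intro r hr
    obtain ⟨y, hy, rfl⟩ := List.mem_map.1 hr
    refine (IsLocalization.AtPrime.to_map_mem_maximal_iff (Localization.AtPrime Q) Q _).2 ?_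
    change y ∈ Q.comap (algebraMap S R)
    rw [hover, ← hrs]
    exact Ideal.subset_span hy
  · intro P hP _ hle
    have hP1 : maximalIdeal S ≤ (P.comap (algebraMap R (Localization.AtPrime Q))).comap (algebraMap S R) := by
      rw [← hrs]
      refine Ideal.span_le.2 fun y hy => ?_
      exact hle (Ideal.subset_span (List.mem_map.2 ⟨y, hy, rfl⟩))
    have hP2 : ((P.comap (algebraMap R (Localization.AtPrime Q))).comap (algebraMap S R)) = maximalIdeal S :=
      le_antisymm (le_maximalIdeal (Ideal.IsPrime.ne_top inferInstance)) hP1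
    have hP3 : (P.comap (algebraMap R (Localization.AtPrime Q))).IsMaximal :=
      Ideal.isMaximal_of_isIntegral_of_isMaximal_comap _ (by rw [hP2]; infer_instance)
    have hP4 : P.comap (algebraMap R (Localization.AtPrime Q)) ≤ Q := by
      intro y hy
      rw [← IsLocalization.AtPrime.to_map_mem_maximal_iff (Localization.AtPrime Q) Q]
      exact le_maximalIdeal hP.ne_top hy
    have hP5 := hP3.eq_of_le hQ.ne_top hP4
    apply le_antisymm (le_maximalIdeal hP.ne_top)
    rw [← IsLocalization.map_under Q.primeCompl _ (maximalIdeal (Localization.AtPrime Q)), Ideal.map_le_iff_le_comap, hP5]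
    intro y hy
    exact (IsLocalization.AtPrime.to_map_mem_maximal_iff (Localization.AtPrime Q) Q _).1 hy

end

section
open Polynomial

theorem span_single {A K : Type*} [CommRing A] [CommRing K] [Algebra A K] {x : K} {P : A[X]} (hP : P.Monic) (hx : aeval x P = 0)
    {n : ℕ} (hn : P.natDegree = n) : Subalgebra.toSubmodule (Algebra.adjoin A {x}) = Submodule.span A (Set.range fun i : Fin n => x ^ (i : ℕ)) := by
  classical
  rw [← Submodule.span_range_natDegree_eq_adjoin hP hx, hn]
  congr 1
  ext y
  simp only [Finset.coe_image, Finset.coe_range, Set.mem_image, Set.mem_Iio, Set.mem_range]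
  exact ⟨fun ⟨i, hi, h⟩ => ⟨⟨i, hi⟩, h⟩, fun ⟨i, h⟩ => ⟨i, i.2, h⟩⟩

theorem span_double {A K : Type*} [CommRing A] [CommRing K] [Algebra A K] {x y : K} {P Q : A[X]} (hP : P.Monic) (hx : aeval x P = 0)
    (hQ : Q.Monic) (hy : aeval y Q = 0)
    {n : ℕ} (hn : P.natDegree = n) (hm : Q.natDegree = n) : Subalgebra.toSubmodule (Algebra.adjoin A {x, y}) =
      Submodule.span A (Set.range fun i : Fin n × Fin n => x ^ (i.1 : ℕ) * y ^ (i.2 : ℕ)) := by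
  have : ({x, y} : Set K) = {x} ∪ {y} := by rw [Set.insert_eq]
  rw [this, Algebra.adjoin_union_coe_submodule, span_single hP hx hn, span_single hQ hy hm, Submodule.span_mul_span]
  congr 1
  ext z
  simp only [Set.mem_mul, Set.mem_range]
  constructor
  · rintro ⟨_, ⟨i, rfl⟩, _, ⟨j, rfl⟩, rfl⟩; exact ⟨(i, j), rfl⟩
  · rintro ⟨i, rfl⟩; exact ⟨_, ⟨i.1, rfl⟩, _, ⟨i.2, rfl⟩, rfl⟩

/-- the polynomial `(X + h)^p - f` -/
noncomputable def shiftPoly {A : Type*} [CommRing A] (p : ℕ) (h f : A) : A[X] := (X + C h) ^ p - C f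

theorem shiftPoly_facts {A : Type*} [CommRing A] [Nontrivial A] {p : ℕ} (hp : 0 < p) (h f : A) :
    (shiftPoly p h f).Monic ∧ (shiftPoly p h f).natDegree = p := by
  have h1 : ((X + C h) ^ p : A[X]).Monic := (monic_X_add_C h).pow p
  have h2 : ((X + C h) ^ p : A[X]).natDegree = p := by
    rw [(monic_X_add_C h).natDegree_pow, natDegree_X_add_C, mul_one]
  have h3 : (C f : A[X]).degree < ((X + C h) ^ p : A[X]).degree := by
    refine degree_C_le.trans_lt ?_
    rw [degree_eq_natDegree h1.ne_zero, h2]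
    exact_mod_cast hp
  refine ⟨h1.sub_of_left h3, ?_⟩
  unfold shiftPoly
  rw [natDegree_sub_C, h2]

theorem shiftPoly_aeval {A K : Type*} [CommRing A] [CommRing K] [Algebra A K] {p : ℕ} (h f : A) (x : K)
    (hx : (x + algebraMap A K h) ^ p = algebraMap A K f) : aeval x (shiftPoly p h f) = 0 := by
  simp [shiftPoly, hx]

theorem mem_of_intClosed {S K : Type*} [CommRing S] [Field K] [Algebra S K] (B : Subalgebra S K)
    (hB : IsIntegrallyClosed B) {x : K} (hx : IsIntegral S x) {s : K} (hs : s ∈ B) (hs0 : s ≠ 0) (hsx : s * x ∈ B) : x ∈ B := by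
  let φ : FractionRing B →ₐ[B] K := IsFractionRing.liftAlgHom (g := Algebra.ofId B K) (by
    intro a b hab; exact Subtype.ext hab)
  let y : FractionRing B := algebraMap B _ ⟨s * x, hsx⟩ / algebraMap B _ ⟨s, hs⟩
  have hy : φ y = x := by
    change φ (_ / _) = x
    rw [map_div₀, AlgHom.commutes, AlgHom.commutes]
    change s * x / s = x
    field_simp
  have h1 : IsIntegral B x := hx.tower_top
  have h2 : IsIntegral B y := by
    rw [← hy] at h1
    exact (isIntegral_algHom_iff φ φ.toRingHom.injective).1 h1
  obtain ⟨z, hz⟩ := IsIntegrallyClosed.algebraMap_eq_of_integral h2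
  rw [← hy, ← hz, AlgHom.commutes]
  exact z.2

theorem lemQ {R : Type*} [CommRing R] [IsDomain R] [IsIntegrallyClosed R] {n q e c : R} (hq : q ≠ 0)
    (h : n ^ 2 = q * (q * c) - q * e * n) : q ∣ n := by
  let y : FractionRing R := algebraMap R _ n / algebraMap R _ q
  have hq' : algebraMap R (FractionRing R) q ≠ 0 := by simpa using hq
  have h2 : IsIntegral R y := by
    refine ⟨X ^ 2 + C e * X - C c, ?_, ?_⟩
    · monicity!
    · simp only [eval₂_sub, eval₂_add, eval₂_mul, eval₂_pow, eval₂_X, eval₂_C, y]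
      field_simp
      have := congrArg (algebraMap R (FractionRing R)) h
      simp only [map_sub, map_mul, map_pow] at this
      linear_combination this
  obtain ⟨z, hz⟩ := IsIntegrallyClosed.algebraMap_eq_of_integral h2
  refine ⟨z, ?_⟩
  apply IsFractionRing.injective R (FractionRing R)
  rw [map_mul, hz]
  simp only [y]; field_simp

theorem binom_lin {T : Type*} [CommRing T] {p : ℕ} (hp : p.Prime) (hp3 : 3 ≤ p) (x y : T) :
    ∃ e : T, (x + y) ^ p = x ^ p + y ^ p + p * (x * y ^ (p - 1) + x ^ 2 * e) := by
  rw [add_pow_prime_eq hp]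
  have : Finset.Ioo 0 p = insert 1 (Finset.Ioo 1 p) := by
    ext k; simp; omega
  rw [this, Finset.sum_insert (by simp)]
  have h2 : ∀ k ∈ Finset.Ioo 1 p, x ^ (k - 1) * y ^ (p - k - 1) * ((p.choose k / p : ℕ) : T) =
    x * (x ^ (k - 2) * y ^ (p - k - 1) * ((p.choose k / p : ℕ) : T)) := by
    intro k hk
    simp only [Finset.mem_Ioo] at hk
    obtain ⟨k, rfl⟩ := Nat.exists_eq_add_of_le hk.1
    rw [show Nat.succ 1 + k - 1 = k + 1 by omega, show Nat.succ 1 + k - 2 = k by omega]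
    ring
  rw [Finset.sum_congr rfl h2, ← Finset.mul_sum]
  set SS := ∑ i ∈ Finset.Ioo 1 p, (x ^ (i - 2) * y ^ (p - i - 1) * ((p.choose i / p : ℕ) : T))
  refine ⟨y * SS, ?_⟩
  obtain ⟨q, rfl⟩ := Nat.exists_eq_add_of_le hp3
  rw [Nat.choose_one_right, Nat.div_self (by omega), show 3 + q - 1 - 1 = q + 1 by omega, show 3 + q - 1 = q + 2 by omega]
  simp only [Nat.sub_self, pow_zero, Nat.cast_one]
  ring

theorem basis_pow {F K : Type*} [Field F] [Field K] [Algebra F K] {p : ℕ} {x : K} {P : F[X]} (hP : P.Monic) (hx : aeval x P = 0)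
    (hn : P.natDegree = p) (ht : Algebra.adjoin F {x} = ⊤) (hd : Module.finrank F K = p) :
    ∃ bs : Module.Basis (Fin p) F K, ∀ i, bs i = x ^ (i : ℕ) := by
  have h := span_single hP hx hn
  rw [ht] at h
  refine ⟨basisOfTopLeSpanOfCardEqFinrank (fun i : Fin p => x ^ (i : ℕ)) (by rw [← h]; simp) (by simp [hd]), ?_⟩
  intro i; simp

theorem trace_basis {F K : Type*} [Field F] [Field K] [Algebra F K] {p : ℕ} [NeZero p] {x : K} {c : F} (hx : x ^ p = algebraMap F K c)
    (bs : Module.Basis (Fin p) F K) (hbs : ∀ i, bs i = x ^ (i : ℕ)) (z : K) : Algebra.trace F K z = p * bs.repr z 0 := by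
  have key : ∀ j : Fin p, Algebra.trace F K (bs j) = p * bs.repr (bs j) 0 := by
    intro j
    rw [Algebra.trace_eq_matrix_trace bs, Matrix.trace]
    simp only [Matrix.diag, Algebra.leftMulMatrix_eq_repr_mul]
    by_cases hj : j = 0
    · subst hj
      have h1 : bs 0 = 1 := by rw [hbs]; simp
      simp only [h1, one_mul]
      simp [← h1]
    · rw [bs.repr_self, Finsupp.single_apply, if_neg hj, mul_zero]
      apply Finset.sum_eq_zero
      intro i _
      rw [hbs, hbs, ← pow_add]
      have hj' : (j : ℕ) ≠ 0 := fun h => hj (Fin.ext h)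
      by_cases hij : (j : ℕ) + i < p
      · rw [← hbs ⟨_, hij⟩, bs.repr_self, Finsupp.single_apply, if_neg]
        intro h; have := congrArg Fin.val h; simp at this; omega
      · obtain ⟨k, hk⟩ := Nat.exists_eq_add_of_le (not_lt.1 hij)
        have hk' : k < p := by omega
        rw [hk, pow_add, hx, ← hbs ⟨k, hk'⟩, ← Algebra.smul_def, map_smul, bs.repr_self, Finsupp.smul_apply, Finsupp.single_apply, if_neg, smul_zero]
        intro h; have := congrArg Fin.val h; simp at this; omega
  conv_lhs => rw [← bs.sum_repr z]
  conv_rhs => rw [← bs.sum_repr z]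
  simp only [map_sum, map_smul, key, Finsupp.coe_finsetSum, Finset.sum_apply, Finset.mul_sum, Finsupp.smul_apply, smul_eq_mul]
  refine Finset.sum_congr rfl fun i _ => ?_
  ring

theorem trace_rad {S F K : Type*} [CommRing S] [Field F] [CharZero F] [Field K] [Algebra F K] [FiniteDimensional F K] [Algebra S F] [Algebra S K]
    [IsScalarTower S F K] {q : S} (hq : algebraMap S F q ≠ 0) {x y : K} (hx : IsIntegral S x) (hy : IsIntegral S y) {N : ℕ} (h : x ^ N = algebraMap S K q * y) :
    ∃ (m : ℕ) (ξ : F), IsIntegral S ξ ∧ (Algebra.trace F K x) ^ m = algebraMap S F q * ξ := by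
  let Ω := AlgebraicClosure F
  let R := integralClosure S Ω
  let e : (K →ₐ[F] Ω) → R := fun σ => ⟨σ x, hx.map (σ.restrictScalars S)⟩
  have h1 : ∀ σ, e σ ∈ (Ideal.span {algebraMap S R q}).radical := by
    intro σ
    refine ⟨N, Ideal.mem_span_singleton.2 ⟨⟨σ y, hy.map (σ.restrictScalars S)⟩, ?_⟩⟩
    apply Subtype.ext
    change (σ x) ^ N = algebraMap S Ω q * σ y
    rw [← map_pow, h, map_mul, IsScalarTower.algebraMap_apply S F K, AlgHom.commutes, ← IsScalarTower.algebraMap_apply]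
  have h2 : ∑ σ, e σ ∈ (Ideal.span {algebraMap S R q}).radical := Ideal.sum_mem _ fun σ _ => h1 σ
  obtain ⟨m, hm⟩ := h2
  obtain ⟨r, hr⟩ := Ideal.mem_span_singleton.1 hm
  have h3 := congrArg Subtype.val hr
  have h4 : ((∑ σ, e σ : R) : Ω) = algebraMap F Ω (Algebra.trace F K x) := by
    rw [trace_eq_sum_embeddings Ω]
    simp [e]
  refine ⟨m, (Algebra.trace F K x) ^ m / algebraMap S F q, ?_, ?_⟩
  · have h5 : algebraMap F Ω ((Algebra.trace F K x) ^ m / algebraMap S F q) = r := by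
      rw [map_div₀, map_pow, ← h4]
      have h6 : ((∑ σ, e σ : R) : Ω) ^ m = algebraMap S Ω q * r := h3
      have : algebraMap S Ω q ≠ 0 := by
        rw [IsScalarTower.algebraMap_apply S F Ω]; simpa using hq
      rw [h6, ← IsScalarTower.algebraMap_apply, mul_div_cancel_left₀ _ this]
    rw [← isIntegral_algebraMap_iff (algebraMap F Ω).injective, h5]
    exact r.2
  · field_simp

end

section
open Polynomial

theorem tower_basis {L K : Type*} [Field L] [Field K] [Algebra L K] {p : ℕ} (hp : 0 < p) {ω μ : K} {f g : L}
    (hω : ω ^ p = algebraMap L K f) (hμ : μ ^ p = algebraMap L K g)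
    (hKgen : Algebra.adjoin L ({ω, μ} : Set K) = ⊤)
    (hdeg : Module.finrank L K = p ^ 2) :
    ∃ F : IntermediateField L K, ω ∈ F ∧ (∀ x ∈ F, x ∈ Subalgebra.toSubmodule (Algebra.adjoin L {ω})) ∧
    ∃ bs : Module.Basis (Fin p) F K, ∀ i, bs i = μ ^ (i : ℕ) := by
  have hfd : FiniteDimensional L K := Module.finite_of_finrank_pos (by rw [hdeg]; positivity)
  have hint : IsIntegral L ω := Algebra.IsIntegral.isIntegral ω
  have h0 : (IntermediateField.adjoin L {ω}).toSubalgebra = Algebra.adjoin L {ω} :=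
    IntermediateField.adjoin_simple_toSubalgebra_of_isAlgebraic hint.isAlgebraic
  have hmem : ∀ x ∈ IntermediateField.adjoin L {ω}, x ∈ Subalgebra.toSubmodule (Algebra.adjoin L {ω}) := by
    intro x hx
    change x ∈ Algebra.adjoin L {ω}
    rw [← h0]; exact hx
  refine ⟨IntermediateField.adjoin L {ω}, IntermediateField.mem_adjoin_simple_self L ω, hmem, ?_⟩
  set F := IntermediateField.adjoin L {ω} with hF
  have hωF : ω ∈ F := IntermediateField.mem_adjoin_simple_self L ω
  have hL : Module.finrank L F ≤ p := by
    rw [hF, IntermediateField.adjoin.finrank hint]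
    obtain ⟨m1, m2⟩ := shiftPoly_facts hp 0 f
    rw [← m2]
    exact natDegree_le_of_dvd (minpoly.dvd L ω (shiftPoly_aeval _ _ _ (by simpa using hω))) m1.ne_zero
  have htop : Algebra.adjoin F ({μ} : Set K) = ⊤ := by
    rw [eq_top_iff]
    have : (⊤ : Subalgebra L K) ≤ (Algebra.adjoin F ({μ} : Set K)).restrictScalars L := by
      rw [← hKgen, Algebra.adjoin_le_iff]
      rintro x (rfl | rfl)
      · exact (Algebra.adjoin F ({μ} : Set K)).algebraMap_mem ⟨x, hωF⟩
      · exact Algebra.subset_adjoin rfl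
    intro x _
    exact this (Algebra.mem_top : x ∈ (⊤ : Subalgebra L K))
  have hμ' : μ ^ p = algebraMap F K (algebraMap L F g) := by rw [hμ, ← IsScalarTower.algebraMap_apply]
  have hm := shiftPoly_facts hp 0 (algebraMap L F g)
  have hae : aeval μ (shiftPoly p 0 (algebraMap L F g)) = 0 := shiftPoly_aeval _ _ _ (by simpa using hμ')
  have hK : Module.finrank F K ≤ p := by
    have h := span_single hm.1 hae hm.2
    rw [htop] at h
    have h' := finrank_range_le_card (R := F) (fun i : Fin p => μ ^ (i : ℕ))
    rw [Set.finrank, ← h, Algebra.top_toSubmodule, finrank_top, Fintype.card_fin] at h'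
    exact h'
  have hmul := Module.finrank_mul_finrank L F K
  rw [hdeg] at hmul
  have hK' : Module.finrank F K = p := by
    apply le_antisymm hK
    by_contra hlt
    push Not at hlt
    nlinarith
  exact basis_pow hm.1 hae hm.2 htop hK'

theorem clear_denoms {S L K : Type*} [CommRing S] [IsDomain S] [Field L] [Algebra S L] [IsFractionRing S L]
    [Field K] [Algebra L K] [Algebra S K] [IsScalarTower S L K] {ω : K} {x : K} (hx : x ∈ Subalgebra.toSubmodule (Algebra.adjoin L {ω})) :
    ∃ s : S, s ≠ 0 ∧ algebraMap S K s * x ∈ Algebra.adjoin S {ω} := by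
  change x ∈ Algebra.adjoin L {ω} at hx
  have hmul : ∀ (B : Subalgebra S K) (s : S), algebraMap S K s ∈ B := fun B s => B.algebraMap_mem s
  induction hx using Algebra.adjoin_induction with
  | mem x hx => exact ⟨1, one_ne_zero, by rw [map_one, one_mul]; exact Algebra.subset_adjoin hx⟩
  | algebraMap r =>
    obtain ⟨u, v, hv, rfl⟩ := IsFractionRing.div_surjective (A := S) r
    refine ⟨v, nonZeroDivisors.ne_zero hv, ?_⟩
    rw [IsScalarTower.algebraMap_apply S L K, ← map_mul, mul_div_cancel₀, ← IsScalarTower.algebraMap_apply]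
    · exact hmul _ _
    · simpa using nonZeroDivisors.ne_zero hv
  | add x y _ _ hx hy =>
    obtain ⟨s, hs, h1⟩ := hx
    obtain ⟨t, ht, h2⟩ := hy
    refine ⟨s * t, mul_ne_zero hs ht, ?_⟩
    have := add_mem (mul_mem (hmul _ t) h1) (mul_mem (hmul _ s) h2)
    convert this using 1
    rw [map_mul]; ring
  | mul x y _ _ hx hy =>
    obtain ⟨s, hs, h1⟩ := hx
    obtain ⟨t, ht, h2⟩ := hy
    refine ⟨s * t, mul_ne_zero hs ht, ?_⟩
    have := mul_mem h1 h2
    convert this using 1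
    rw [map_mul]; ring

theorem half_lemma {S : Type*} [CommRing S] [IsDomain S]
    {L : Type*} [Field L] [CharZero L] [Algebra S L] [IsFractionRing S L]
    {K : Type*} [Field K] [Algebra L K] [Algebra S K] [IsScalarTower S L K]
    {p : ℕ} (hp : 0 < p) {f g : S}
    {ω μ : K} (hω : ω ^ p = algebraMap S K f) (hμ : μ ^ p = algebraMap S K g)
    (hKgen : Algebra.adjoin L ({ω, μ} : Set K) = ⊤)
    (hdeg : Module.finrank L K = p ^ 2)
    (hicω : IsIntegrallyClosed (Algebra.adjoin S ({ω} : Set K))) {z : K} (hz : IsIntegral S z) :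
    algebraMap S K g * (p * z) ∈ Algebra.adjoin S ({ω, μ} : Set K) := by
  have : NeZero p := ⟨hp.ne'⟩
  have hfd : FiniteDimensional L K := Module.finite_of_finrank_pos (by rw [hdeg]; positivity)
  obtain ⟨F, hωF, hF, bs, hbs⟩ := tower_basis hp (f := algebraMap S L f) (g := algebraMap S L g)
    (by rw [hω, ← IsScalarTower.algebraMap_apply]) (by rw [hμ, ← IsScalarTower.algebraMap_apply]) hKgen hdeg
  haveI : IsScalarTower S F K := IsScalarTower.of_algebraMap_eq fun x => by
    rfl
  have hμ' : μ ^ p = algebraMap F K (algebraMap S F g) := by rw [hμ, ← IsScalarTower.algebraMap_apply]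
  have hωB : Algebra.adjoin S {ω} ≤ Algebra.adjoin S ({ω, μ} : Set K) := Algebra.adjoin_mono (by simp)
  have hμint : IsIntegral S μ := IsIntegral.of_pow hp (by rw [hμ]; exact isIntegral_algebraMap)
  have hfd2 : FiniteDimensional F K := FiniteDimensional.right L F K
  -- key
  have key : ∀ j : Fin p, bs.repr (z * μ ^ (p - (j : ℕ))) 0 = algebraMap S F g * bs.repr z j := by
    intro j
    conv_lhs => rw [← bs.sum_repr z, Finset.sum_mul]
    rw [map_sum, Finsupp.coe_finsetSum, Finset.sum_apply, Finset.sum_eq_single j]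
    · rw [smul_mul_assoc, map_smul, Finsupp.smul_apply, hbs, ← pow_add, show (j : ℕ) + (p - j) = p by omega, hμ',
        Algebra.algebraMap_eq_smul_one, map_smul, Finsupp.smul_apply]
      have h1 : bs 0 = 1 := by rw [hbs]; simp
      rw [← h1, bs.repr_self, Finsupp.single_eq_same, smul_eq_mul, smul_eq_mul, mul_one, mul_comm]
    · intro i _ hij
      have hij' : (i : ℕ) ≠ j := fun h => hij (Fin.ext h)
      rw [smul_mul_assoc, map_smul, Finsupp.smul_apply, hbs, ← pow_add]
      rcases lt_or_gt_of_ne hij' with hlt | hlt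
      · rw [← hbs ⟨(i : ℕ) + (p - j), by omega⟩, bs.repr_self, Finsupp.single_apply, if_neg, smul_zero]
        intro h; have := congrArg Fin.val h; simp at this; omega
      · rw [show (i : ℕ) + (p - j) = p + (i - j) by omega, pow_add, hμ', ← Algebra.smul_def, map_smul, ← hbs ⟨(i : ℕ) - j, by omega⟩, bs.repr_self, Finsupp.smul_apply, Finsupp.single_apply, if_neg, smul_zero, smul_zero]
        intro h; have := congrArg Fin.val h; simp at this; omega
    · simp
  have key2 : ∀ j : Fin p, ((p * (algebraMap S F g * bs.repr z j) : F) : K) ∈ Algebra.adjoin S {ω} := by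
    intro j
    have h1 : IsIntegral S (p * (algebraMap S F g * bs.repr z j)) := by
      rw [← key, ← trace_basis hμ' bs hbs]
      exact Algebra.isIntegral_trace (hz.mul (hμint.pow _))
    have h2 : IsIntegral S ((p * (algebraMap S F g * bs.repr z j) : F) : K) := h1.map (IsScalarTower.toAlgHom S F K)
    obtain ⟨s, hs, hs2⟩ := clear_denoms (S := S) (L := L) (hF _ (p * (algebraMap S F g * bs.repr z j) : F).2)
    refine mem_of_intClosed _ hicω h2 (Subalgebra.algebraMap_mem _ s) ?_ hs2
    rw [IsScalarTower.algebraMap_apply S L K]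
    simpa using hs
  have h3 : algebraMap S K g * (p * z) = ∑ j : Fin p, ((p * (algebraMap S F g * bs.repr z j) : F) : K) * μ ^ (j : ℕ) := by
    conv_lhs => rw [← bs.sum_repr z, Finset.mul_sum, Finset.mul_sum]
    refine Finset.sum_congr rfl fun j _ => ?_
    rw [hbs, Algebra.smul_def, IntermediateField.coe_mul, IntermediateField.coe_mul]
    change _ = ((p : F) : K) * ((algebraMap F K (algebraMap S F g)) * _) * _
    rw [← IsScalarTower.algebraMap_apply]
    simp only [IntermediateField.algebraMap_apply]
    push_cast
    ring
  rw [h3]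
  refine sum_mem fun j _ => mul_mem (hωB (key2 j)) (pow_mem (Algebra.subset_adjoin (by simp)) _)

theorem pR_le {S : Type*} [CommRing S] [IsDomain S] [IsNoetherianRing S] [IsIntegrallyClosed S]
    {L : Type*} [Field L] [CharZero L] [Algebra S L] [IsFractionRing S L]
    {K : Type*} [Field K] [Algebra L K] [Algebra S K] [IsScalarTower S L K]
    {p : ℕ} (hp : 0 < p) {f g : S} (hg0 : g ≠ 0)
    (hfg : SatisfiesA1 f g ∨ IsUnit f)
    {ω μ : K} (hω : ω ^ p = algebraMap S K f) (hμ : μ ^ p = algebraMap S K g)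
    (hKgen : Algebra.adjoin L ({ω, μ} : Set K) = ⊤)
    (hdeg : Module.finrank L K = p ^ 2)
    (hicω : IsIntegrallyClosed (Algebra.adjoin S ({ω} : Set K)))
    (hicμ : IsIntegrallyClosed (Algebra.adjoin S ({μ} : Set K))) {z : K} (hz : IsIntegral S z) :
    p * z ∈ Algebra.adjoin S ({ω, μ} : Set K) := by
  have h1 := half_lemma hp hω hμ hKgen hdeg hicω hz
  have h2 := half_lemma hp hμ hω (by rwa [Set.pair_comm]) hdeg hicμ hz
  rw [Set.pair_comm] at h2
  have eS := span_double (shiftPoly_facts hp 0 f).1 (shiftPoly_aeval 0 f ω (by simpa using hω)) (shiftPoly_facts hp 0 g).1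
    (shiftPoly_aeval 0 g μ (by simpa using hμ)) (shiftPoly_facts hp 0 f).2 (shiftPoly_facts hp 0 g).2
  have eL := span_double (shiftPoly_facts hp 0 (algebraMap S L f)).1 (shiftPoly_aeval 0 (algebraMap S L f) ω (by simpa [← IsScalarTower.algebraMap_apply] using hω))
    (shiftPoly_facts hp 0 (algebraMap S L g)).1
    (shiftPoly_aeval 0 (algebraMap S L g) μ (by simpa [← IsScalarTower.algebraMap_apply] using hμ)) (shiftPoly_facts hp 0 _).2 (shiftPoly_facts hp 0 _).2
  rw [hKgen] at eL
  obtain ⟨B, hB⟩ : ∃ B : Module.Basis (Fin p × Fin p) L K, (B : Fin p × Fin p → K) = fun i : Fin p × Fin p => ω ^ (i.1 : ℕ) * μ ^ (i.2 : ℕ) :=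
    ⟨basisOfTopLeSpanOfCardEqFinrank _ (by rw [← eL]; simp) (by simp [hdeg, sq]), by simp⟩
  rw [← hB] at eS
  have hmem : ∀ x : K, x ∈ Algebra.adjoin S ({ω, μ} : Set K) ↔ ∀ i, B.repr x i ∈ Set.range (algebraMap S L) := by
    intro x
    rw [← Module.Basis.mem_span_iff_repr_mem, ← eS]; rfl
  rw [hmem] at h1 h2 ⊢
  intro i
  obtain ⟨u, hu⟩ := h1 i
  obtain ⟨v, hv⟩ := h2 i
  rw [IsScalarTower.algebraMap_apply S L K, ← Algebra.smul_def, map_smul, Finsupp.smul_apply, smul_eq_mul] at hu hv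
  set c := B.repr (p * z) i
  have hinj := IsFractionRing.injective S L
  have huv : f * u = g * v := by
    apply hinj; rw [map_mul, map_mul, hu, hv]; ring
  have hdvd : g ∣ u := by
    rcases hfg with hA | hU
    · apply dvd_of_good hg0
      intro q hq hgq hdvr
      refine ⟨f, ?_, ⟨v, huv⟩⟩
      intro hfq
      exact hA q ⟨hq, height_one_of_dvr q hdvr⟩ ⟨hfq, hgq⟩
    · rw [← hU.dvd_mul_left]; exact ⟨v, huv⟩
  obtain ⟨w, rfl⟩ := hdvd
  refine ⟨w, ?_⟩
  rw [map_mul] at hu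
  exact mul_left_cancel₀ (by simpa using hg0) hu

end

section
open Polynomial

theorem exists_inj_field.{u₁} (A : Type u₁) [CommRing A] [IsDomain A] : ∃ (F : Type u₁) (_ : Field F) (φ : A →+* F), Function.Injective φ :=
  ⟨FractionRing A, inferInstance, algebraMap A (FractionRing A), IsFractionRing.injective A (FractionRing A)⟩

theorem val_exists.{u₁} {R : Type u₁} [CommRing R] [IsDomain R] (M : Ideal R) [hM : M.IsPrime] :
    ∃ (Γ : Type u₁) (_ : LinearOrderedCommGroupWithZero Γ) (v : Valuation R Γ), (∀ x, v x ≤ 1) ∧ (∀ x ∈ M, v x < 1) ∧ (∀ x ∉ M, v x = 1) ∧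
      ∀ x, x ≠ 0 → v x ≠ 0 := by
  have hdom : IsDomain (Localization.AtPrime M) := IsLocalization.isDomain_localization M.primeCompl_le_nonZeroDivisors
  let A := Localization.AtPrime M
  obtain ⟨Kf, _, φ, hφ⟩ := exists_inj_field A
  have hinj : Function.Injective (algebraMap R A) := IsLocalization.injective A M.primeCompl_le_nonZeroDivisors
  obtain ⟨O, hO, hloc⟩ := (LocalSubring.range φ).exists_le_valuationSubring
  have hmem : ∀ a : A, φ a ∈ (LocalSubring.range φ).toSubring := fun a => ⟨a, rfl⟩
  have hle : ∀ a : A, O.valuation (φ a) ≤ 1 := fun a => (O.valuation_le_one_iff _).2 (hO (hmem a))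
  have hunit : ∀ a : A, IsUnit a → O.valuation (φ a) = 1 := by
    intro a ha
    obtain ⟨b, hb⟩ := ha.exists_right_inv
    apply le_antisymm (hle a)
    have h1 : O.valuation (φ a) * O.valuation (φ b) = 1 := by rw [← map_mul, ← map_mul, hb, map_one, map_one]
    by_contra hlt
    push Not at hlt
    have := mul_lt_one_of_lt_of_le hlt (hle b)
    exact absurd h1 this.ne
  refine ⟨O.ValueGroup, inferInstance, O.valuation.comap (φ.comp (algebraMap R A)), fun x => hle _, ?_, ?_, ?_⟩
  · intro x hx
    refine lt_of_le_of_ne (hle _) ?_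
    intro h
    have h1 : IsUnit (⟨φ (algebraMap R A x), hO (hmem _)⟩ : O) := (O.valuation_eq_one_iff _).2 h
    have h2 : IsUnit (⟨φ (algebraMap R A x), hmem _⟩ : (LocalSubring.range φ).toSubring) := by
      apply hloc.map_nonunit
      exact h1
    obtain ⟨⟨_, b, rfl⟩, hb⟩ := h2.exists_right_inv
    have h3 : φ (algebraMap R A x) * φ b = 1 := congrArg Subtype.val hb
    rw [← map_mul, ← map_one φ] at h3
    have h4 : IsUnit (algebraMap R A x) := IsUnit.of_mul_eq_one _ (hφ h3)
    exact ((IsLocalization.AtPrime.isUnit_to_map_iff A M x).1 h4) hx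
  · intro x hx
    exact hunit _ ((IsLocalization.AtPrime.isUnit_to_map_iff A M x).2 hx)
  · intro x hx h
    have h1 : φ (algebraMap R A x) = 0 := (O.valuation.zero_iff).1 h
    rw [← map_zero φ] at h1
    have h2 := hφ h1
    rw [← map_zero (algebraMap R A)] at h2
    exact hx (hinj h2)

/-- combinatorial valuation argument -/
theorem val_sum {R Γ ι : Type*} [CommRing R] [LinearOrderedCommGroupWithZero Γ] (v : Valuation R Γ) (s : Finset ι) (x : ι → R)
    {δ : Γ} (hδ0 : δ ≠ 0) (hδ : δ < 1) (e : ι → ℕ) (N : ℕ) (hinj : Set.InjOn e s) (hx : ∀ i ∈ s, v (x i) ≤ δ ^ N ∨ v (x i) = δ ^ (e i))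
    (hsum : v (∑ i ∈ s, x i) ≤ δ ^ N) : ∀ i ∈ s, e i < N → v (x i) ≤ δ ^ N := by
  classical
  by_contra hcon
  push Not at hcon
  obtain ⟨i0, hi0, hlt0, hv0⟩ := hcon
  let T := s.filter fun i => e i < N ∧ δ ^ N < v (x i)
  have hT : T.Nonempty := ⟨i0, by simp [T, hi0, hlt0, hv0]⟩
  obtain ⟨i, hiT, hmin⟩ := T.exists_min_image e hT
  simp only [T, Finset.mem_filter] at hiT hmin
  obtain ⟨his, hiN, hiv⟩ := hiT
  have hanti : StrictAnti fun n : ℕ => δ ^ n := by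
    intro m n hmn
    exact pow_lt_pow_right_of_lt_one₀ (zero_lt_iff.2 hδ0) hδ hmn
  have hvi : v (x i) = δ ^ (e i) := (hx i his).resolve_left (not_le.2 hiv)
  rw [← Finset.sum_erase_add s x his] at hsum
  have hrest : v (∑ j ∈ s.erase i, x j) < v (x i) := by
    apply v.map_sum_lt
    · rw [hvi]; exact pow_ne_zero _ hδ0
    · intro j hj
      have hjs := Finset.mem_of_mem_erase hj
      have hji := Finset.ne_of_mem_erase hj
      rcases hx j hjs with h | h
      · exact h.trans_lt hiv
      · by_cases hjN : δ ^ N < v (x j)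
        · have h1 : e j < N := by
            rw [h] at hjN
            exact hanti.lt_iff_gt.1 hjN
          have h2 := hmin j ⟨hjs, h1, hjN⟩
          rw [h, hvi]
          refine hanti (lt_of_le_of_ne h2 ?_)
          intro he
          exact hji (hinj hjs his he.symm)
        · exact (not_lt.1 hjN).trans_lt hiv
  rw [v.map_add_eq_of_lt_right hrest] at hsum
  exact absurd hsum (not_le.2 hiv)

end

section
open Polynomial

theorem cop_one {T : Type*} [CommRing T] {k₁ k₂ : T} (hcop : ∀ c, k₁ ∣ c * k₂ → k₁ ∣ c) (m : ℕ) : ∀ c, k₁ ∣ c * k₂ ^ m → k₁ ∣ c := by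
  induction m with
  | zero => intro c h; simpa using h
  | succ m ih =>
    intro c h
    apply ih
    apply hcop
    rwa [mul_assoc, ← pow_succ]

theorem cop_pow {T : Type*} [CommRing T] [IsDomain T] {k₁ k₂ : T} (hk : k₁ ≠ 0) (hcop : ∀ c, k₁ ∣ c * k₂ → k₁ ∣ c) (m m' : ℕ) :
    ∀ c, k₁ ^ m ∣ c * k₂ ^ m' → k₁ ^ m ∣ c := by
  induction m with
  | zero => intro c h; simp
  | succ m ih =>
    intro c h
    obtain ⟨c', rfl⟩ := cop_one hcop m' c ((dvd_pow_self k₁ (Nat.succ_ne_zero m)).trans h)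
    rw [pow_succ', mul_assoc] at h
    rw [pow_succ']
    exact mul_dvd_mul_left _ (ih c' ((mul_dvd_mul_iff_left hk).1 h))

theorem homog_aux {F : Type*} [Field F] (c z w v : F) (hw : w ≠ 0) : c * (z * v) = w * v * (c * (z / w)) := by
  field_simp

theorem homog_eval {S R : Type*} [CommRing S] [CommRing R] [IsDomain R] [Algebra S R] (P : S[X]) {n : ℕ} (hP : P.natDegree ≤ n)
    (Y W : R) (hW : W ≠ 0) (k : S) :
    ∑ l ∈ Finset.range (n + 1), algebraMap S R ((P.comp (X - C k)).coeff l) * (Y ^ l * W ^ (n - l)) =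
    ∑ j ∈ Finset.range (n + 1), algebraMap S R (P.coeff j) * ((Y - algebraMap S R k * W) ^ j * W ^ (n - j)) := by
  let F := FractionRing R
  have hW' : algebraMap R F W ≠ 0 := by simpa using hW
  have key : ∀ (Q : S[X]) (Z : R), Q.natDegree ≤ n → algebraMap R F (∑ l ∈ Finset.range (n + 1), algebraMap S R (Q.coeff l) * (Z ^ l * W ^ (n - l))) =
      algebraMap R F W ^ n * aeval (algebraMap R F Z / algebraMap R F W) Q := by
    intro Q Z hQ
    rw [aeval_eq_sum_range' (Nat.lt_succ_of_le hQ), map_sum, Finset.mul_sum]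
    refine Finset.sum_congr rfl fun l hl => ?_
    have hl' : l ≤ n := Nat.lt_succ_iff.1 (Finset.mem_range.1 hl)
    obtain ⟨m, rfl⟩ := Nat.exists_eq_add_of_le hl'
    rw [Algebra.smul_def, map_mul, map_mul, map_pow, map_pow, ← IsScalarTower.algebraMap_apply, Nat.add_sub_cancel_left, div_pow, pow_add]
    exact homog_aux _ _ _ _ (pow_ne_zero _ hW')
  apply IsFractionRing.injective R F
  rw [key _ _ hP, key]
  · congr 1
    rw [aeval_comp]
    congr 2
    simp only [map_sub, aeval_X, aeval_C, map_mul]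
    rw [sub_div, mul_div_cancel_right₀ _ hW', ← IsScalarTower.algebraMap_apply]
  · refine natDegree_comp_le.trans ?_
    calc P.natDegree * (X - C k).natDegree ≤ P.natDegree * 1 := Nat.mul_le_mul_left _ (natDegree_X_sub_C_le k)
      _ ≤ n := by simpa using hP

/-- The abstract situation. -/
structure Core (S R : Type*) [CommRing S] [CommRing R] [Algebra S R] (p : ℕ) (d k₁ k₂ a b : S) (W U : R) : Prop where
  hp : p.Prime
  hp3 : 3 ≤ p
  hpS : Prime (p : S)
  hk₁ : ¬ (p : S) ∣ k₁
  hk₂ : ¬ (p : S) ∣ k₂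
  hW : (W + algebraMap S R (d * k₁)) ^ p = algebraMap S R ((d * k₁) ^ p + a * p)
  hU : (U + algebraMap S R (d * k₂)) ^ p = algebraMap S R ((d * k₂) ^ p + b * p)
  ha : ¬ (p : S) ∣ a
  hab : (p : S) ∣ k₁ ^ p * b + k₂ ^ p * a
  hcop : ∀ c : S ⧸ Ideal.span {(p : S)}, Ideal.Quotient.mk _ k₁ ∣ c * Ideal.Quotient.mk _ k₂ → Ideal.Quotient.mk _ k₁ ∣ c
  hpR : ∀ z : R, ∃ C : Fin p × Fin p → S, p * z = ∑ i, algebraMap S R (C i) * (W ^ (i.1 : ℕ) * U ^ (i.2 : ℕ))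
  hind : ∀ C : Fin p × Fin p → S, ∑ i, algebraMap S R (C i) * (W ^ (i.1 : ℕ) * U ^ (i.2 : ℕ)) = 0 → C = 0
  hp0 : (p : R) ≠ 0
  htr : ∀ (t : R) (s : S) (N : ℕ), p * t = (algebraMap S R k₁ * U + algebraMap S R k₂ * W) ^ (p - 1) → ¬ (p : S) ∣ s →
    ¬ (p : R) ∣ (algebraMap S R s * t) ^ N

namespace Core
variable {S R : Type*} [CommRing S] [IsDomain S] [CommRing R] [IsDomain R] [IsIntegrallyClosed R] [Algebra S R] {p : ℕ} {d k₁ k₂ a b : S} {W U : R}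

theorem root_eq (hp : p.Prime) (hp3 : 3 ≤ p) {V : R} {h c : S}
    (hV : (V + algebraMap S R h) ^ p = algebraMap S R (h ^ p + c * p)) :
    ∃ e : R, V ^ p = p * (algebraMap S R c - algebraMap S R h ^ (p - 1) * V + V ^ 2 * e) := by
  obtain ⟨e, he⟩ := binom_lin hp hp3 V (algebraMap S R h)
  refine ⟨-e, ?_⟩
  rw [hV] at he
  simp only [map_add, map_mul, map_pow, map_natCast] at he
  linear_combination -he

theorem dvd_of_pow (H : Core S R p d k₁ k₂ a b W U) {x : R} (hx : (p : R) ^ p ∣ x ^ p) : (p : R) ∣ x :=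
  (IsIntegrallyClosed.pow_dvd_pow_iff H.hp.ne_zero).1 hx

theorem Wp (H : Core S R p d k₁ k₂ a b W U) : (p : R) ∣ W ^ p := by
  obtain ⟨e, he⟩ := root_eq H.hp H.hp3 H.hW
  exact ⟨_, he⟩

theorem Up (H : Core S R p d k₁ k₂ a b W U) : (p : R) ∣ U ^ p := by
  obtain ⟨e, he⟩ := root_eq H.hp H.hp3 H.hU
  exact ⟨_, he⟩

theorem Yp (H : Core S R p d k₁ k₂ a b W U) : (p : R) ∣ (algebraMap S R k₁ * U + algebraMap S R k₂ * W) ^ p := by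
  rw [add_pow_prime_eq H.hp, mul_assoc (p : R), mul_assoc (p : R), mul_pow, mul_pow]
  exact dvd_add (dvd_add (H.Up.mul_left _) (H.Wp.mul_left _)) (dvd_mul_right _ _)

theorem dvd_mon (H : Core S R p d k₁ k₂ a b W U) {i j : ℕ} (hij : p ≤ i + j) : (p : R) ∣ W ^ i * U ^ j := by
  apply H.dvd_of_pow
  have : (p : R) ^ (i + j) ∣ (W ^ i * U ^ j) ^ p := by
    rw [pow_add, mul_pow, ← pow_mul, ← pow_mul, mul_comm i, mul_comm j, pow_mul, pow_mul]
    exact mul_dvd_mul (pow_dvd_pow_of_dvd H.Wp _) (pow_dvd_pow_of_dvd H.Up _)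
  exact (pow_dvd_pow _ hij).trans this

theorem dvd_mon3 (H : Core S R p d k₁ k₂ a b W U) {x y Y : R} (hY : (p : R) ∣ Y ^ p) (hx : (p : R) ∣ x ^ p) (hy : (p : R) ∣ y ^ p) :
    (p : R) ∣ Y ^ (p - 2) * (x * y) := by
  apply H.dvd_of_pow
  have : (p : R) ^ (p - 2) * (p * p) ∣ (Y ^ (p - 2) * (x * y)) ^ p := by
    rw [mul_pow, mul_pow, ← pow_mul, mul_comm (p - 2), pow_mul]
    exact mul_dvd_mul (pow_dvd_pow_of_dvd hY _) (mul_dvd_mul hx hy)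
  have h2 := H.hp3
  rwa [← sq, ← pow_add, Nat.sub_add_cancel (by omega)] at this

theorem exists_t (H : Core S R p d k₁ k₂ a b W U) : (p : R) ∣ (algebraMap S R k₁ * U + algebraMap S R k₂ * W) ^ (p - 1) := by
  obtain ⟨e1, h1⟩ := root_eq H.hp H.hp3 H.hW
  obtain ⟨e2, h2⟩ := root_eq H.hp H.hp3 H.hU
  have h3 := add_pow_prime_eq H.hp (algebraMap S R k₁ * U) (algebraMap S R k₂ * W)
  obtain ⟨y, hy⟩ := H.hab
  have hy' := congrArg (algebraMap S R) hy
  simp only [map_add, map_mul, map_pow, map_natCast] at hy' h1 h2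
  set Q := ∑ k ∈ Finset.Ioo 0 p, (algebraMap S R k₁ * U) ^ (k - 1) * (algebraMap S R k₂ * W) ^ (p - k - 1) * ((p.choose k / p : ℕ) : R)
  have hYp := H.Yp
  obtain ⟨c1, hc1⟩ := H.dvd_mon3 hYp H.Wp H.Wp
  obtain ⟨c2, hc2⟩ := H.dvd_mon3 hYp H.Up H.Up
  obtain ⟨c3, hc3⟩ := H.dvd_mon3 hYp H.Up H.Wp
  set Y := algebraMap S R k₁ * U + algebraMap S R k₂ * W with hYd
  obtain ⟨q, hq⟩ := Nat.exists_eq_add_of_le H.hp3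
  have e1' : p - 1 = q + 2 := by omega
  have e2' : p - 2 = q + 1 := by omega
  rw [e1'] at h1 h2 ⊢
  rw [e2'] at hc1 hc2 hc3
  have hpow : (Y ^ (q + 2)) ^ 2 = Y ^ (q + 1) * Y ^ p := by rw [hq]; ring
  set D := algebraMap S R d
  set κ₁ := algebraMap S R k₁
  set κ₂ := algebraMap S R k₂
  refine lemQ (c := Y ^ (q + 1) * algebraMap S R y + κ₁ ^ p * e2 * c2 + κ₂ ^ p * e1 * c1 + κ₁ * κ₂ * Q * c3) (e := D ^ (q + 2) * (κ₁ * κ₂) ^ (q + 2)) H.hp0 ?_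
  rw [hpow, h3, mul_pow, mul_pow, h1, h2]
  have hp1 : κ₁ ^ p = κ₁ ^ (q + 2) * κ₁ := by rw [hq]; ring
  have hp2 : κ₂ ^ p = κ₂ ^ (q + 2) * κ₂ := by rw [hq]; ring
  have hYY : Y ^ (q + 2) = Y ^ (q + 1) * (κ₁ * U + κ₂ * W) := by rw [← hYd]; ring
  rw [hYY]
  have E1 := congrArg (fun z => p * Y ^ (q + 1) * z) hy'
  simp only [hp1, hp2, mul_pow] at E1 ⊢
  linear_combination E1 + (p : R) * κ₁ ^ (q + 2) * κ₁ * e2 * hc2 + (p : R) * κ₂ ^ (q + 2) * κ₂ * e1 * hc1 + (p : R) * κ₁ * κ₂ * Q * hc3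

end Core

end

section
open Polynomial
namespace Core
universe uS uR
variable {S : Type uS} {R : Type uR} [CommRing S] [IsDomain S] [CommRing R] [IsDomain R] [IsIntegrallyClosed R] [Algebra S R] {p : ℕ} {d k₁ k₂ a b : S} {W U : R}

theorem val_core (H : Core S R p d k₁ k₂ a b W U) {t : R} (ht : p * t = (algebraMap S R k₁ * U + algebraMap S R k₂ * W) ^ (p - 1)) :
    ∃ (Γ : Type uR) (_ : LinearOrderedCommGroupWithZero Γ) (v : Valuation R Γ) (δ : Γ), δ ≠ 0 ∧ δ < 1 ∧ v W = δ ^ (p - 1) ∧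
      v (algebraMap S R k₁ * U + algebraMap S R k₂ * W) = δ ^ p ∧ v (p : R) = δ ^ (p * (p - 1)) ∧ (∀ x, v x ≤ 1) ∧
      ∀ s : S, ¬ (p : S) ∣ s → v (algebraMap S R s) = 1 := by
  let T : Submonoid R :=
    { carrier := {x | ∃ (s : S) (n : ℕ), ¬ (p : S) ∣ s ∧ x = algebraMap S R s * t ^ n}
      one_mem' := ⟨1, 0, fun h => H.hpS.not_isUnit (isUnit_of_dvd_one h), by simp⟩
      mul_mem' := by
        rintro _ _ ⟨s, n, hs, rfl⟩ ⟨s', n', hs', rfl⟩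
        refine ⟨s * s', n + n', fun h => (H.hpS.dvd_or_dvd h).elim hs hs', ?_⟩
        rw [map_mul]; ring }
  have hdis : Disjoint (Ideal.span {(p : R)} : Set R) (T : Set R) := by
    rw [Set.disjoint_left]
    rintro x hx ⟨s, n, hs, rfl⟩
    have hx' := Ideal.mem_span_singleton.1 hx
    apply H.htr t s (n + 1) ht hs
    have : (algebraMap S R s * t) ^ (n + 1) = (algebraMap S R s * t ^ n) * (algebraMap S R s ^ n * t) := by ring
    rw [this]
    exact hx'.mul_right _
  obtain ⟨M, hMp, hM, hMT⟩ := Ideal.exists_le_prime_disjoint _ _ hdis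
  obtain ⟨Γ, iΓ, v, v1, vM, vM', v0⟩ := val_exists M
  have hS : ∀ s : S, ¬ (p : S) ∣ s → algebraMap S R s ∉ M := fun s hs h =>
    Set.disjoint_left.1 hMT h ⟨s, 0, hs, by simp⟩
  have htM : t ∉ M := fun h => Set.disjoint_left.1 hMT h ⟨1, 1, fun h => H.hpS.not_isUnit (isUnit_of_dvd_one h), by simp⟩
  have hpM : (p : R) ∈ M := hM (Ideal.mem_span_singleton_self _)
  have hWM : W ∈ M := hMp.mem_of_pow_mem p (M.mem_of_dvd H.Wp hpM)
  obtain ⟨e, he⟩ := root_eq H.hp H.hp3 H.hW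
  have hst : algebraMap S R a - algebraMap S R (d * k₁) ^ (p - 1) * W + W ^ 2 * e ∉ M := by
    intro h
    apply hS a H.ha
    have : algebraMap S R a = (algebraMap S R a - algebraMap S R (d * k₁) ^ (p - 1) * W + W ^ 2 * e) +
      W * (algebraMap S R (d * k₁) ^ (p - 1) - W * e) := by ring
    rw [this]
    exact M.add_mem h (M.mul_mem_right _ hWM)
  have hvW : v W ^ p = v (p : R) := by rw [← map_pow, he, map_mul, vM' _ hst, mul_one]
  have hvY : v (algebraMap S R k₁ * U + algebraMap S R k₂ * W) ^ (p - 1) = v (p : R) := by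
    rw [← map_pow, ← ht, map_mul, vM' _ htM, mul_one]
  have hvp0 := v0 _ H.hp0
  have hpp := H.hp.pos
  have hvW0 : v W ≠ 0 := by
    intro h
    rw [h, zero_pow hpp.ne'] at hvW
    exact hvp0 hvW.symm
  set y := v (algebraMap S R k₁ * U + algebraMap S R k₂ * W)
  obtain ⟨q, rfl⟩ : ∃ q, p = q + 1 := ⟨p - 1, by omega⟩
  simp only [Nat.add_sub_cancel] at *
  have h1 : (y / v W) ^ q = v W := by
    rw [div_pow, hvY, ← hvW, pow_succ, mul_div_cancel_left₀ _ (pow_ne_zero _ hvW0)]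
  have h2 : (y / v W) ^ (q + 1) = y := by rw [pow_succ, h1, mul_div_cancel₀ _ hvW0]
  have h3 : (y / v W) ^ ((q + 1) * q) = v ((q + 1 : ℕ) : R) := by rw [mul_comm, pow_mul, h1, hvW]
  refine ⟨Γ, iΓ, v, y / v W, ?_, ?_, h1.symm, h2.symm, h3.symm, v1, fun s hs => vM' _ (hS s hs)⟩
  · intro h
    rw [h, zero_pow (by positivity)] at h2
    rw [h, zero_pow (by have := H.hp3; omega)] at h1
    exact hvW0 h1.symm
  · by_contra! h
    have := one_le_pow₀ (n := (q + 1) * q) h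
    rw [h3] at this
    exact absurd (vM _ hpM) (not_lt.2 this)

end Core

end

section
open Polynomial
namespace Core
universe uS uR
variable {S : Type uS} {R : Type uR} [CommRing S] [IsDomain S] [CommRing R] [IsDomain R] [IsIntegrallyClosed R] [Algebra S R] {p : ℕ} {d k₁ k₂ a b : S} {W U : R}

/-- homogeneous part polynomial -/
noncomputable def gPoly {S : Type*} [CommRing S] (D : ℕ → S) (k : S) (n : ℕ) : S[X] := ∑ j ∈ Finset.range (n + 1), C (D j * k ^ (n - j)) * X ^ j

theorem gPoly_coeff {S : Type*} [CommRing S] (D : ℕ → S) (k : S) (n j : ℕ) (hj : j ≤ n) : (gPoly D k n).coeff j = D j * k ^ (n - j) := by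
  simp only [gPoly, finsetSum_coeff, coeff_C_mul_X_pow]
  rw [Finset.sum_eq_single j]
  · simp
  · intro b _ hb; simp [hb.symm]
  · intro h; exact absurd (Finset.mem_range.2 (Nat.lt_succ_of_le hj)) h

theorem gPoly_deg {S : Type*} [CommRing S] (D : ℕ → S) (k : S) (n : ℕ) : (gPoly D k n).natDegree ≤ n := by
  refine natDegree_sum_le_of_forall_le _ _ fun j hj => ?_
  exact (natDegree_C_mul_X_pow_le _ _).trans (Nat.lt_succ_iff.1 (Finset.mem_range.1 hj))

theorem coeff_dvd (H : Core S R p d k₁ k₂ a b W U) {t : R} (ht : p * t = (algebraMap S R k₁ * U + algebraMap S R k₂ * W) ^ (p - 1))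
    (D : ℕ → ℕ → S) (z : R)
    (hz : p * z = ∑ n ∈ Finset.range p, ∑ j ∈ Finset.range (n + 1), algebraMap S R (D n j) * (W ^ (n - j) * U ^ j)) :
    ∀ n l, n < p → l ≤ n → ¬ (n = p - 1 ∧ l = p - 1) → (p : S) ∣ ((gPoly (D n) k₁ n).comp (X - C k₂)).coeff l := by
  obtain ⟨Γ, iΓ, v, δ, hδ0, hδ1, vW, vY, vp, v1, vS⟩ := H.val_core ht
  have hp0 := H.hp.pos
  set Y := algebraMap S R k₁ * U + algebraMap S R k₂ * W with hY
  have hW0 : W ≠ 0 := by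
    rintro rfl
    rw [map_zero] at vW
    exact pow_ne_zero _ hδ0 vW.symm
  let Q : ℕ → S[X] := fun n => (gPoly (D n) k₁ n).comp (X - C k₂)
  let x : (Σ _ : ℕ, ℕ) → R := fun i => algebraMap S R (k₁ ^ (p - 1 - i.1) * (Q i.1).coeff i.2) * (Y ^ i.2 * W ^ (i.1 - i.2))
  have hsum : ∑ i ∈ (Finset.range p).sigma (fun n => Finset.range (n + 1)), x i = algebraMap S R (k₁ ^ (p - 1)) * (p * z) := by
    rw [Finset.sum_sigma, hz, Finset.mul_sum]
    refine Finset.sum_congr rfl fun n hn => ?_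
    have hn' : n ≤ p - 1 := by have := Finset.mem_range.1 hn; omega
    simp only [x, Q, map_mul, mul_assoc]
    rw [← Finset.mul_sum, homog_eval _ (gPoly_deg _ _ _) Y W hW0]
    have : algebraMap S R (k₁ ^ (p - 1)) = algebraMap S R (k₁ ^ (p - 1 - n)) * algebraMap S R k₁ ^ n := by
      rw [map_pow, map_pow, ← pow_add, Nat.sub_add_cancel hn']
    rw [this, mul_assoc]
    congr 1
    rw [Finset.mul_sum]
    refine Finset.sum_congr rfl fun j hj => ?_
    have hj' : j ≤ n := Nat.lt_succ_iff.1 (Finset.mem_range.1 hj)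
    rw [gPoly_coeff _ _ _ _ hj', show Y - algebraMap S R k₂ * W = algebraMap S R k₁ * U by rw [hY]; ring, map_mul, map_pow, mul_pow]
    have : algebraMap S R k₁ ^ n = algebraMap S R k₁ ^ (n - j) * algebraMap S R k₁ ^ j := by
      rw [← pow_add, Nat.sub_add_cancel hj']
    rw [this]
    ring
  have hv : ∀ i ∈ (Finset.range p).sigma (fun n => Finset.range (n + 1)), ¬ (p : S) ∣ (Q i.1).coeff i.2 → v (x i) = δ ^ ((p - 1) * i.1 + i.2) := by
    rintro ⟨n, l⟩ hi hnd
    simp only [Finset.mem_sigma, Finset.mem_range] at hi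
    simp only [x] at hnd ⊢
    rw [map_mul, map_mul, map_mul, vS _ hnd, map_pow, map_pow, vS _ H.hk₁, map_mul, map_pow, map_pow, vY, vW]
    rw [one_pow, one_mul, one_mul, ← pow_mul, ← pow_mul, ← pow_add]
    congr 1
    obtain ⟨m, rfl⟩ := Nat.exists_eq_add_of_le (Nat.lt_succ_iff.1 hi.2)
    rw [Nat.add_sub_cancel_left]
    obtain ⟨q, rfl⟩ : ∃ q, p = q + 1 := ⟨p - 1, by omega⟩
    simp only [Nat.add_sub_cancel]
    ring
  have main := val_sum v ((Finset.range p).sigma (fun n => Finset.range (n + 1))) x hδ0 hδ1 (fun i => (p - 1) * i.1 + i.2) (p * (p - 1)) ?_ ?_ ?_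
  · intro n l hn hl hnl
    by_contra hnd
    have hmem : (⟨n, l⟩ : Σ _ : ℕ, ℕ) ∈ (Finset.range p).sigma (fun n => Finset.range (n + 1)) := by
      simp only [Finset.mem_sigma, Finset.mem_range]; omega
    have hlt : (p - 1) * n + l < p * (p - 1) := by
      obtain ⟨q, rfl⟩ : ∃ q, p = q + 1 := ⟨p - 1, by omega⟩
      simp only [Nat.add_sub_cancel] at *
      rcases Nat.lt_or_ge n q with h | h
      · nlinarith
      · have : n = q := by omega
        subst this
        have : l < n := by omega
        nlinarith
    have h1 := main _ hmem hlt
    rw [hv _ hmem hnd] at h1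
    exact absurd h1 (not_le.2 (pow_lt_pow_right_of_lt_one₀ (zero_lt_iff.2 hδ0) hδ1 hlt))
  · rintro ⟨n, l⟩ h1 ⟨n', l'⟩ h2 h3
    simp only [Finset.coe_sigma, Set.mem_sigma_iff, Finset.coe_range, Set.mem_Iio] at h1 h2
    simp only at h3
    obtain ⟨q, rfl⟩ : ∃ q, p = q + 1 := ⟨p - 1, by omega⟩
    simp only [Nat.add_sub_cancel] at h3
    have hnn : n = n' := by
      by_contra hne
      rcases Nat.lt_or_gt_of_ne hne with h | h
      · have : q * n + q ≤ q * n' := by nlinarith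
        omega
      · have : q * n' + q ≤ q * n := by nlinarith
        omega
    subst hnn
    have : l = l' := by omega
    rw [this]
  · intro i hi
    by_cases hd : (p : S) ∣ (Q i.1).coeff i.2
    · left
      obtain ⟨c, hc⟩ := hd
      simp only [x, hc]
      rw [← vp]
      have : algebraMap S R (k₁ ^ (p - 1 - i.1) * (p * c)) * (Y ^ i.2 * W ^ (i.1 - i.2)) = p * (algebraMap S R (k₁ ^ (p - 1 - i.1) * c) * (Y ^ i.2 * W ^ (i.1 - i.2))) := by
        simp only [map_mul, map_natCast]; ring
      rw [this, map_mul]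
      exact mul_le_of_le_one_right' (v1 _)
    · right; exact hv i hi hd
  · rw [hsum, ← vp, mul_left_comm, map_mul]
    exact mul_le_of_le_one_right' (v1 _)

theorem coeff_form (H : Core S R p d k₁ k₂ a b W U) {t : R} (ht : p * t = (algebraMap S R k₁ * U + algebraMap S R k₂ * W) ^ (p - 1))
    (D : ℕ → ℕ → S) (z : R)
    (hz : p * z = ∑ n ∈ Finset.range p, ∑ j ∈ Finset.range (n + 1), algebraMap S R (D n j) * (W ^ (n - j) * U ^ j)) :
    ∃ c : S, ∀ n j, n < p → j ≤ n → (p : S) ∣ D n j - if n = p - 1 then c * ((p - 1).choose j * k₁ ^ j * k₂ ^ (p - 1 - j)) else 0 := by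
  have main := H.coeff_dvd ht D z hz
  have hpp := H.hp.pos
  let π := Ideal.Quotient.mk (Ideal.span {(p : S)})
  haveI : (Ideal.span {(p : S)}).IsPrime := (Ideal.span_singleton_prime H.hpS.ne_zero).2 H.hpS
  have hπ : ∀ x, π x = 0 ↔ (p : S) ∣ x := fun x => by
    rw [Ideal.Quotient.eq_zero_iff_mem, Ideal.mem_span_singleton]
  have hk1 : π k₁ ≠ 0 := fun h => H.hk₁ ((hπ _).1 h)
  have key : ∀ n, n < p → ∃ c : S ⧸ Ideal.span {(p : S)}, (n ≠ p - 1 → c = 0) ∧ ∀ j ≤ n, π (D n j) * π k₁ ^ (n - j) = c * (π k₂ ^ (n - j) * n.choose j) := by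
    intro n hn
    set G := gPoly (D n) k₁ n with hG
    set Q := G.comp (X - C k₂) with hQ
    have hQd : Q.natDegree ≤ n := natDegree_comp_le.trans
      ((Nat.mul_le_mul (gPoly_deg _ _ _) (natDegree_X_sub_C_le k₂)).trans (by simp))
    have hQm : Q.map π = C (π (Q.coeff n)) * X ^ n := by
      ext l
      rw [coeff_map, coeff_C_mul_X_pow]
      rcases lt_trichotomy l n with h | h | h
      · rw [if_neg h.ne, hπ]
        exact main n l hn h.le (by omega)
      · rw [if_pos h, h]
      · rw [if_neg h.ne', coeff_eq_zero_of_natDegree_lt (by omega), map_zero]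
    have hGm : G.map π = C (π (Q.coeff n)) * (X + C (π k₂)) ^ n := by
      have : G = Q.comp (X + C k₂) := by
        rw [hQ, comp_assoc]; simp
      rw [this, Polynomial.map_comp, hQm]
      simp
    refine ⟨π (Q.coeff n), fun h => (hπ _).2 (main n n hn le_rfl (by omega)), fun j hj => ?_⟩
    have := congrArg (fun P => P.coeff j) hGm
    simp only [coeff_map, coeff_C_mul, coeff_X_add_C_pow] at this
    rw [hG, gPoly_coeff _ _ _ _ hj, map_mul, map_pow] at this
    exact this
  obtain ⟨c, -, hc⟩ := key (p - 1) (by omega)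
  have h0 := hc 0 (Nat.zero_le _)
  simp only [Nat.sub_zero, Nat.choose_zero_right, Nat.cast_one, mul_one] at h0
  obtain ⟨c', hc'⟩ := cop_pow hk1 H.hcop (p - 1) (p - 1) c ⟨_, by rw [← h0, mul_comm]⟩
  obtain ⟨c'', rfl⟩ := Ideal.Quotient.mk_surjective c'
  refine ⟨c'', fun n j hn hj => ?_⟩
  rw [← hπ, map_sub]
  split_ifs with h
  · subst h
    have h1 := hc j hj
    rw [sub_eq_zero]
    apply mul_right_cancel₀ (pow_ne_zero (p - 1 - j) hk1)
    rw [h1, hc']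
    have : π k₁ ^ (p - 1) = π k₁ ^ j * π k₁ ^ (p - 1 - j) := by rw [← pow_add, Nat.add_sub_cancel' hj]
    simp only [map_mul, map_pow, map_natCast]
    change π k₁ ^ (p - 1) * π c'' * _ = π c'' * _ * _
    rw [this]; ring
  · obtain ⟨c, hc0, hc⟩ := key n hn
    have h1 := hc j hj
    rw [hc0 h, zero_mul] at h1
    rw [map_zero, sub_zero]
    exact (mul_eq_zero.1 h1).resolve_right (pow_ne_zero _ hk1)

end Core

end

section

theorem tri_sum {M : Type*} [AddCommMonoid M] (p : ℕ) (F : ℕ → ℕ → M) :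
    ∑ n ∈ Finset.range p, ∑ j ∈ Finset.range (n + 1), F (n - j) j = ∑ i : Fin p × Fin p, if (i.1 : ℕ) + i.2 < p then F i.1 i.2 else 0 := by
  rw [Fintype.sum_prod_type]
  have : ∀ i : Fin p, ∑ j : Fin p, (if (i : ℕ) + j < p then F i j else 0) = (fun i => ∑ j ∈ Finset.range p, if i + j < p then F i j else 0) (i : ℕ) := by
    intro i
    exact Fin.sum_univ_eq_sum_range (fun j => if (i : ℕ) + j < p then F i j else 0) p
  simp only [this]
  rw [Fin.sum_univ_eq_sum_range (fun i => ∑ j ∈ Finset.range p, if i + j < p then F i j else 0) p, ← Finset.sum_product', ← Finset.sum_filter, Finset.sum_sigma']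
  refine Finset.sum_nbij' (fun x => (x.1 - x.2, x.2)) (fun x => ⟨x.1 + x.2, x.2⟩) ?_ ?_ ?_ ?_ ?_
  · rintro ⟨n, j⟩ h
    simp only [Finset.mem_sigma, Finset.mem_range, Finset.mem_filter, Finset.mem_product] at *
    omega
  · rintro ⟨n, j⟩ h
    simp only [Finset.mem_sigma, Finset.mem_range, Finset.mem_filter, Finset.mem_product] at *
    omega
  · rintro ⟨n, j⟩ h
    simp only [Finset.mem_sigma, Finset.mem_range] at h
    have : n - j + j = n := by omega
    simp [this]
  · rintro ⟨n, j⟩ h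
    simp
  · rintro ⟨n, j⟩ h
    rfl

namespace Core
universe uS uR
variable {S : Type uS} {R : Type uR} [CommRing S] [IsDomain S] [CommRing R] [IsDomain R] [IsIntegrallyClosed R] [Algebra S R] {p : ℕ} {d k₁ k₂ a b : S} {W U : R}

theorem gens (H : Core S R p d k₁ k₂ a b W U) :
    ∃ (γ : Option (Fin p × Fin p) → R) (ρ : Option (Fin p × Fin p) → S), (∀ z, ∃ c : Option (Fin p × Fin p) → S, z = ∑ i, c i • γ i) ∧
      (∀ c : Option (Fin p × Fin p) → S, ∑ i, c i • γ i = 0 ↔ ∃ x : S, c = x • ρ) ∧ (∀ i, ρ i ∈ Ideal.span {(p : S), k₁, k₂}) ∧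
      ρ none = p ∧ (∃ i, ρ i = - k₁ ^ (p - 1)) ∧ (∃ i, ρ i = - k₂ ^ (p - 1)) := by
  classical
  obtain ⟨t, ht⟩ := H.exists_t
  have ht := ht.symm
  have hp3 := H.hp3
  let r : Fin p × Fin p → S := fun i => if (i.1 : ℕ) + i.2 = p - 1 then ((p - 1).choose i.2 : S) * k₁ ^ (i.2 : ℕ) * k₂ ^ (p - 1 - i.2) else 0
  let w : Fin p × Fin p → R := fun i => W ^ (i.1 : ℕ) * U ^ (i.2 : ℕ)
  have hγ : ∀ i : Fin p × Fin p, ∃ γ : R, if (i.1 : ℕ) + i.2 < p then γ = w i else w i = p * γ := by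
    intro i
    split_ifs with h
    · exact ⟨_, rfl⟩
    · exact H.dvd_mon (not_lt.1 h)
  choose γ hγ using hγ
  have hr0 : ∀ i : Fin p × Fin p, ¬ (i.1 : ℕ) + i.2 < p → r i = 0 := by
    intro i hi
    simp only [r]; rw [if_neg (by omega)]
  have hrel : p * t = ∑ i, algebraMap S R (r i) * w i := by
    have h1 := tri_sum p (fun i j => algebraMap S R (if i + j = p - 1 then ((p - 1).choose j : S) * k₁ ^ j * k₂ ^ (p - 1 - j) else 0) * (W ^ i * U ^ j))
    have h2 : ∑ i, algebraMap S R (r i) * w i = ∑ i : Fin p × Fin p, if (i.1 : ℕ) + i.2 < p then algebraMap S R (r i) * w i else 0 := by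
      refine Finset.sum_congr rfl fun i _ => ?_
      split_ifs with h
      · rfl
      · rw [hr0 i h, map_zero, zero_mul]
    rw [h2]
    refine Eq.trans ?_ h1
    rw [Finset.sum_eq_single (p - 1)]
    · rw [ht, add_pow, Nat.sub_add_cancel H.hp.one_le]
      refine Finset.sum_congr rfl fun j hj => ?_
      have := Finset.mem_range.1 hj
      rw [if_pos (by omega)]
      simp only [map_mul, map_pow, map_natCast]
      ring
    · intro n hn hne
      refine Finset.sum_eq_zero fun j hj => ?_
      have := Finset.mem_range.1 hj
      rw [if_neg (by omega), map_zero, zero_mul]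
    · intro h
      exact absurd (Finset.mem_range.2 (by omega)) h
  have hrel' : p * t = ∑ i, algebraMap S R (r i) * γ i := by
    rw [hrel]
    refine Finset.sum_congr rfl fun i _ => ?_
    by_cases h : (i.1 : ℕ) + i.2 < p
    · have := hγ i
      rw [if_pos h] at this
      rw [this]
    · rw [hr0 i h, map_zero, zero_mul, zero_mul]
  refine ⟨fun i => i.elim t γ, fun i => i.elim (p : S) (fun j => - r j), ?_, ?_, ?_, rfl, ?_, ?_⟩
  · intro z
    obtain ⟨Cf, hC⟩ := H.hpR z
    let D : ℕ → ℕ → S := fun n j => if h : n - j < p ∧ j < p then Cf (⟨n - j, h.1⟩, ⟨j, h.2⟩) else 0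
    have hDC : ∀ i : Fin p × Fin p, D (i.1 + i.2) i.2 = Cf i := by
      intro i
      simp only [D, Nat.add_sub_cancel]
      rw [dif_pos ⟨i.1.2, i.2.2⟩]
    set z' := z - ∑ i, if (i.1 : ℕ) + i.2 < p then 0 else algebraMap S R (Cf i) * γ i with hz'
    have hpz' : p * z' = ∑ i : Fin p × Fin p, if (i.1 : ℕ) + i.2 < p then algebraMap S R (Cf i) * w i else 0 := by
      rw [hz', mul_sub, hC, Finset.mul_sum, ← Finset.sum_sub_distrib]
      refine Finset.sum_congr rfl fun i _ => ?_
      have := hγ i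
      split_ifs at this ⊢ with h
      · simp [w]
      · change _ * w i - _ = _
        rw [this]; ring
    have hpz : p * z' = ∑ n ∈ Finset.range p, ∑ j ∈ Finset.range (n + 1), algebraMap S R (D n j) * (W ^ (n - j) * U ^ j) := by
      have h1 := tri_sum p (fun i j => algebraMap S R (D (i + j) j) * (W ^ i * U ^ j))
      simp only [hDC] at h1
      rw [hpz']
      refine h1.symm.trans ?_
      refine Finset.sum_congr rfl fun n _ => Finset.sum_congr rfl fun j hj => ?_
      have := Finset.mem_range.1 hj
      rw [Nat.sub_add_cancel (by omega)]
    obtain ⟨c, hc⟩ := H.coeff_form ht D z' hpz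
    have hE : ∀ i : Fin p × Fin p, ∃ E : S, (i.1 : ℕ) + i.2 < p → Cf i = c * r i + p * E := by
      intro i
      by_cases h : (i.1 : ℕ) + i.2 < p
      · obtain ⟨E, hE⟩ := hc (i.1 + i.2) i.2 h (by omega)
        refine ⟨E, fun _ => ?_⟩
        rw [hDC] at hE
        rw [← hE]
        simp only [r]
        split_ifs <;> ring
      · exact ⟨0, fun h' => absurd h' h⟩
    choose E hE using hE
    refine ⟨fun i => i.elim c (fun j => if (j.1 : ℕ) + j.2 < p then E j else Cf j), ?_⟩
    rw [Fintype.sum_option]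
    simp only [Option.elim, Algebra.smul_def]
    have hz1 : z' = algebraMap S R c * t + ∑ i : Fin p × Fin p, if (i.1 : ℕ) + i.2 < p then algebraMap S R (E i) * γ i else 0 := by
      apply mul_left_cancel₀ H.hp0
      rw [hpz', mul_add, mul_left_comm, hrel, Finset.mul_sum, Finset.mul_sum, ← Finset.sum_add_distrib]
      refine Finset.sum_congr rfl fun i _ => ?_
      have := hγ i
      split_ifs at this ⊢ with h
      · rw [hE i h, this]
        simp only [map_add, map_mul, map_natCast]
        ring
      · rw [hr0 i h]; simp
    have hz2 : z = z' + ∑ i, if (i.1 : ℕ) + i.2 < p then 0 else algebraMap S R (Cf i) * γ i := by rw [hz']; ring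
    rw [hz2, hz1, add_assoc, ← Finset.sum_add_distrib]
    congr 1
    refine Finset.sum_congr rfl fun i _ => ?_
    split_ifs <;> simp
  · intro c
    rw [Fintype.sum_option]
    simp only [Option.elim, Algebra.smul_def]
    constructor
    · intro h
      have h1 : ∑ i, algebraMap S R (c none * r i + c (some i) * (if (i.1 : ℕ) + i.2 < p then (p : S) else 1)) * w i = 0 := by
        have h2 := congrArg (fun z => (p : R) * z) h
        simp only [mul_zero] at h2
        rw [← h2, mul_add, mul_left_comm, hrel, Finset.mul_sum, Finset.mul_sum, ← Finset.sum_add_distrib]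
        refine Finset.sum_congr rfl fun i _ => ?_
        have := hγ i
        split_ifs at this ⊢ with h
        · rw [this]
          simp only [map_add, map_mul, map_natCast]
          ring
        · rw [this]
          simp only [map_add, map_mul, map_natCast, map_one]
          ring
      have h2 := fun i => congrFun (H.hind _ h1) i
      simp only [Pi.zero_apply] at h2
      have h3 := h2 (⟨0, by omega⟩, ⟨p - 1, by omega⟩)
      simp only [r] at h3
      rw [if_pos (by simp), if_pos (by simp; omega)] at h3
      simp only [Nat.choose_self, Nat.cast_one, one_mul, Nat.sub_self, pow_zero, mul_one] at h3
      have h4 : (p : S) ∣ c none := by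
        have : (p : S) ∣ c none * k₁ ^ (p - 1) := ⟨- c (some (⟨0, by omega⟩, ⟨p - 1, by omega⟩)), by linear_combination h3⟩
        exact (H.hpS.dvd_or_dvd this).resolve_right fun h => H.hk₁ (H.hpS.dvd_of_dvd_pow h)
      obtain ⟨x, hx⟩ := h4
      refine ⟨x, funext fun i => ?_⟩
      rcases i with _ | i
      · simp [hx, mul_comm]
      · have := h2 i
        change c (some i) = x * (- r i)
        split_ifs at this with h
        · apply mul_left_cancel₀ H.hpS.ne_zero
          rw [hx] at this
          linear_combination this
        · rw [hr0 i h] at this ⊢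
          linear_combination this
    · rintro ⟨x, rfl⟩
      change algebraMap S R (x * (p : S)) * t + ∑ i, algebraMap S R (x * (- r i)) * γ i = 0
      simp only [map_mul, map_neg, map_natCast]
      rw [mul_assoc, hrel', Finset.mul_sum, ← Finset.sum_add_distrib]
      refine Finset.sum_eq_zero fun i _ => ?_
      ring
  · have m1 : (p : S) ∈ Ideal.span {(p : S), k₁, k₂} := Ideal.subset_span (by simp)
    have m2 : k₁ ∈ Ideal.span {(p : S), k₁, k₂} := Ideal.subset_span (by simp)
    have m3 : k₂ ∈ Ideal.span {(p : S), k₁, k₂} := Ideal.subset_span (by simp)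
    rintro (_ | i)
    · exact m1
    · apply neg_mem
      simp only [r]
      split_ifs with h
      · rcases Nat.eq_zero_or_pos (i.2 : ℕ) with h0 | h0
        · exact Ideal.mul_mem_left _ _ (Ideal.pow_mem_of_mem _ m3 _ (by omega))
        · exact Ideal.mul_mem_right _ _ (Ideal.mul_mem_left _ _ (Ideal.pow_mem_of_mem _ m2 _ h0))
      · exact zero_mem _
  · refine ⟨some (⟨0, by omega⟩, ⟨p - 1, by omega⟩), ?_⟩
    simp [r]
  · refine ⟨some (⟨p - 1, by omega⟩, ⟨0, by omega⟩), ?_⟩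
    simp [r]

end Core

end

section

section gensCons
variable {S R ι : Type*} [CommRing S] [IsDomain S] [AddCommGroup R] [Module S R] [Fintype ι] {γ : ι → R} {ρ : ι → S}

theorem res_of_gens (h1 : ∀ z, ∃ c : ι → S, z = ∑ i, c i • γ i) (h2 : ∀ c : ι → S, ∑ i, c i • γ i = 0 ↔ ∃ x : S, c = x • ρ)
    {i0 : ι} (h0 : ρ i0 ≠ 0) : HasFreeResLengthLE1 S R := by
  let e := Fintype.equivFin ι
  let ψ : (Fin (Fintype.card ι) → S) →ₗ[S] R := Fintype.linearCombination S (fun i => γ (e.symm i))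
  have hψ : ∀ c : Fin (Fintype.card ι) → S, ψ c = ∑ i, c (e i) • γ i := by
    intro c
    rw [Fintype.linearCombination_apply]
    exact Fintype.sum_equiv e.symm _ _ (by intro i; simp)
  let φ : (Fin 1 → S) →ₗ[S] (Fin (Fintype.card ι) → S) := (LinearMap.proj 0).smulRight (fun i => ρ (e.symm i))
  have hφ : ∀ c, φ c = c 0 • fun i => ρ (e.symm i) := fun c => rfl
  refine ⟨1, Fintype.card ι, φ, ψ, ?_, ?_, ?_⟩
  · rw [injective_iff_map_eq_zero]
    intro c hc
    have := congrFun hc (e i0)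
    rw [hφ] at this
    simp [h0] at this
    ext i
    rw [Subsingleton.elim i 0, this]; rfl
  · intro z
    obtain ⟨c, rfl⟩ := h1 z
    exact ⟨fun i => c (e.symm i), by rw [hψ]; simp⟩
  · ext c
    rw [LinearMap.mem_range, LinearMap.mem_ker, hψ, h2 (fun i => c (e i))]
    constructor
    · rintro ⟨x, rfl⟩
      exact ⟨x 0, by ext i; simp [hφ]⟩
    · rintro ⟨x, hx⟩
      refine ⟨fun _ => x, ?_⟩
      rw [hφ]
      ext i
      have := congrFun hx (e.symm i)
      simpa using this.symm

theorem free_of_gens [IsLocalRing S] [IsNoetherianRing S] (h1 : ∀ z, ∃ c : ι → S, z = ∑ i, c i • γ i) (h2 : ∀ c : ι → S, ∑ i, c i • γ i = 0 ↔ ∃ x : S, c = x • ρ)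
    {i0 : ι} (h0 : IsUnit (ρ i0)) : Module.Free S R := by
  let ψ : (ι → S) →ₗ[S] R := Fintype.linearCombination S γ
  have hψ : ∀ c, ψ c = ∑ i, c i • γ i := fun c => Fintype.linearCombination_apply ..
  have hsurj : Function.Surjective ψ := fun z => by
    obtain ⟨c, rfl⟩ := h1 z
    exact ⟨c, hψ c⟩
  obtain ⟨u, hu⟩ := h0.exists_left_inv
  let e : (ι → S) →ₗ[S] (ι → S) := LinearMap.id - (u • LinearMap.proj i0 : (ι → S) →ₗ[S] S).smulRight ρ
  have he : ∀ c, e c = c - (u * c i0) • ρ := fun c => rfl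
  have hρ : ψ ρ = 0 := by rw [hψ, h2]; exact ⟨1, by simp⟩
  have hψe : ψ ∘ₗ e = ψ := by
    ext1 c
    simp only [LinearMap.comp_apply, he, map_sub, map_smul, hρ, smul_zero, sub_zero]
  have hk : LinearMap.ker ψ ≤ LinearMap.ker e := by
    intro c hc
    rw [LinearMap.mem_ker, hψ, h2] at hc
    obtain ⟨x, rfl⟩ := hc
    rw [LinearMap.mem_ker, he, sub_eq_zero]
    congr 1
    simp only [Pi.smul_apply, smul_eq_mul]
    linear_combination (-x) * hu
  let s : R →ₗ[S] (ι → S) := (LinearMap.ker ψ).liftQ e hk ∘ₗ (ψ.quotKerEquivOfSurjective hsurj).symm.toLinearMap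
  have hs : ψ ∘ₗ s = LinearMap.id := by
    ext z
    obtain ⟨c, rfl⟩ := hsurj z
    have : (ψ.quotKerEquivOfSurjective hsurj).symm (ψ c) = Submodule.Quotient.mk c := by
      rw [LinearEquiv.symm_apply_eq]; rfl
    simp only [s, LinearMap.comp_apply, LinearEquiv.coe_coe, this, LinearMap.id_apply]
    exact LinearMap.congr_fun hψe c
  have : Module.Projective S R := Module.Projective.of_split s ψ hs
  have : Module.Finite S R := Module.Finite.of_surjective ψ hsurj
  exact Module.free_of_flat_of_isLocalRing

theorem unit_of_free [Module.Free S R] (h1 : ∀ z, ∃ c : ι → S, z = ∑ i, c i • γ i) (h2 : ∀ c : ι → S, ∑ i, c i • γ i = 0 ↔ ∃ x : S, c = x • ρ)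
    {i0 : ι} (h0 : ρ i0 ≠ 0) (I : Ideal S) (hI : ∀ i, ρ i ∈ I) : I = ⊤ := by
  classical
  let ψ : (ι → S) →ₗ[S] R := Fintype.linearCombination S γ
  have hψ : ∀ c, ψ c = ∑ i, c i • γ i := fun c => Fintype.linearCombination_apply ..
  have hsurj : Function.Surjective ψ := fun z => by
    obtain ⟨c, rfl⟩ := h1 z
    exact ⟨c, hψ c⟩
  obtain ⟨s, hs⟩ := Module.projective_lifting_property ψ LinearMap.id hsurj
  let e : (ι → S) →ₗ[S] (ι → S) := LinearMap.id - s ∘ₗ ψ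
  have hρ : ψ ρ = 0 := by rw [hψ, h2]; exact ⟨1, by simp⟩
  have he : ∀ c, ∃ x : S, e c = x • ρ := by
    intro c
    rw [← h2, ← hψ]
    have := LinearMap.congr_fun hs (ψ c)
    simp only [LinearMap.comp_apply, LinearMap.id_apply] at this
    simp [e, this]
  choose x hx using he
  have h3 : e ρ = ρ := by simp [e, hρ]
  have h4 : e ρ = (∑ i, ρ i * x (Pi.single i 1)) • ρ := by
    conv_lhs => rw [pi_eq_sum_univ' ρ]
    rw [map_sum, Finset.sum_smul]
    refine Finset.sum_congr rfl fun i _ => ?_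
    rw [map_smul, mul_smul, ← hx]
  have h5 := congrFun (h3.symm.trans h4) i0
  simp only [Pi.smul_apply, smul_eq_mul] at h5
  have h6 : ∑ i, ρ i * x (Pi.single i 1) = 1 := by
    apply mul_right_cancel₀ h0
    rw [one_mul]; exact h5.symm
  rw [Ideal.eq_top_iff_one, ← h6]
  exact I.sum_mem fun i _ => I.mul_mem_right _ (hI i)

end gensCons

end

section
open Polynomial

section setup
variable {S : Type*} [CommRing S] [IsDomain S] 
    {L : Type*} [Field L] [CharZero L] [Algebra S L] [IsFractionRing S L]
    {K : Type*} [Field K] [Algebra L K] [Algebra S K] [IsScalarTower S L K]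
    {p : ℕ} {f g : S} {ω μ : K}

theorem adjoin_shift_le {A : Type*} [CommRing A] [Algebra A K] (h₁ h₂ : A) {W U : K} (hW : W + algebraMap A K h₁ = ω) (hU : U + algebraMap A K h₂ = μ) :
    Algebra.adjoin A {ω, μ} ≤ Algebra.adjoin A {W, U} := by
  apply Algebra.adjoin_le
  rintro x (rfl | rfl)
  · rw [← hW]
    exact add_mem (Algebra.subset_adjoin (by simp)) (Subalgebra.algebraMap_mem _ _)
  · rw [← hU]
    exact add_mem (Algebra.subset_adjoin (by simp)) (Subalgebra.algebraMap_mem _ _)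

theorem span_coords {A : Type*} [CommRing A] [Nontrivial A] [Algebra A K] (hp : 0 < p) {f g : A} (hω : ω ^ p = algebraMap A K f) (hμ : μ ^ p = algebraMap A K g)
    (h₁ h₂ : A) {W U : K} (hW : W + algebraMap A K h₁ = ω) (hU : U + algebraMap A K h₂ = μ) :
    Subalgebra.toSubmodule (Algebra.adjoin A {ω, μ}) ≤ Submodule.span A (Set.range fun i : Fin p × Fin p => W ^ (i.1 : ℕ) * U ^ (i.2 : ℕ)) := by
  have h1 := shiftPoly_facts hp h₁ f
  have h2 := shiftPoly_facts hp h₂ g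
  rw [← span_double h1.1 (shiftPoly_aeval h₁ f W (by rw [hW, hω])) h2.1 (shiftPoly_aeval h₂ g U (by rw [hU, hμ])) h1.2 h2.2]
  exact adjoin_shift_le h₁ h₂ hW hU

theorem coords (hp : 0 < p) (hω : ω ^ p = algebraMap S K f) (hμ : μ ^ p = algebraMap S K g)
    (h₁ h₂ : S) {W U : K} (hW : W + algebraMap S K h₁ = ω) (hU : U + algebraMap S K h₂ = μ) {z : K} (hz : z ∈ Algebra.adjoin S {ω, μ}) :
    ∃ C : Fin p × Fin p → S, z = ∑ i, algebraMap S K (C i) * (W ^ (i.1 : ℕ) * U ^ (i.2 : ℕ)) := by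
  have := span_coords hp hω hμ h₁ h₂ hW hU hz
  rw [Submodule.mem_span_range_iff_exists_fun] at this
  obtain ⟨C, hC⟩ := this
  refine ⟨C, ?_⟩
  rw [← hC]
  simp only [Algebra.smul_def]

theorem coords_ind (L : Type*) [Field L] [Algebra S L] [IsFractionRing S L] [Algebra L K] [IsScalarTower S L K]
    (hp : 0 < p) (hω : ω ^ p = algebraMap S K f) (hμ : μ ^ p = algebraMap S K g)
    (hKgen : Algebra.adjoin L ({ω, μ} : Set K) = ⊤) (hdeg : Module.finrank L K = p ^ 2)
    (h₁ h₂ : S) {W U : K} (hW : W + algebraMap S K h₁ = ω) (hU : U + algebraMap S K h₂ = μ) 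
    (C : Fin p × Fin p → S) (hC : ∑ i, algebraMap S K (C i) * (W ^ (i.1 : ℕ) * U ^ (i.2 : ℕ)) = 0) : C = 0 := by
  have h1 := span_coords (A := L) hp (f := algebraMap S L f) (g := algebraMap S L g) (by rw [hω, ← IsScalarTower.algebraMap_apply]) (by rw [hμ, ← IsScalarTower.algebraMap_apply])
    (algebraMap S L h₁) (algebraMap S L h₂) (W := W) (U := U) (by rw [← IsScalarTower.algebraMap_apply, hW]) (by rw [← IsScalarTower.algebraMap_apply, hU])
  rw [hKgen] at h1
  have h2 := linearIndependent_of_top_le_span_of_card_eq_finrank (R := L) (b := fun i : Fin p × Fin p => W ^ (i.1 : ℕ) * U ^ (i.2 : ℕ)) (by simpa using h1) (by simp [hdeg, sq])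
  rw [Fintype.linearIndependent_iff] at h2
  funext i
  have h3 := h2 (fun i => algebraMap S L (C i)) (by simpa only [Algebra.smul_def, ← IsScalarTower.algebraMap_apply] using hC) i
  simpa using h3

theorem a_not_dvd (L : Type*) [Field L] [Algebra S L] [IsFractionRing S L] [Algebra L K] [IsScalarTower S L K] (hp : p.Prime) (hp3 : 3 ≤ p) (hpS : Prime (p : S)) (hpK : (p : K) ≠ 0) (hω : ω ^ p = algebraMap S K f) (hμ : μ ^ p = algebraMap S K g)
    (hKgen : Algebra.adjoin L ({ω, μ} : Set K) = ⊤) (hdeg : Module.finrank L K = p ^ 2)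
    (hicω : IsIntegrallyClosed (Algebra.adjoin S ({ω} : Set K))) {h a : S} (hf : f = h ^ p + a * p) : ¬ (p : S) ∣ a := by
  rintro ⟨a', rfl⟩
  let B := Algebra.adjoin S ({ω} : Set K)
  let W : B := ⟨ω, Algebra.subset_adjoin rfl⟩ - algebraMap S B h
  have hW : (W + algebraMap S B h) ^ p = algebraMap S B (h ^ p + (p * a') * p) := by
    apply Subtype.ext
    rw [← hf]
    simpa [W] using hω
  obtain ⟨e, he⟩ := Core.root_eq hp hp3 hW
  obtain ⟨q, hq⟩ := Nat.exists_eq_add_of_le hp3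
  have hpB : (p : B) ≠ 0 := fun h => hpK (by simpa using congrArg (Subtype.val) h)
  set V := algebraMap S B (p * a') - algebraMap S B h ^ (p - 1) * W + W ^ 2 * e with hV
  have h1 : (p : B) ∣ W ^ (p - 1) := by
    refine lemQ (c := algebraMap S B a' * W ^ (p - 2) + V * e) (e := algebraMap S B h ^ (p - 1)) hpB ?_
    have e1 : (W ^ (p - 1)) ^ 2 = W ^ (p - 2) * W ^ p := by rw [← pow_mul, ← pow_add]; congr 1; omega
    have e2 : W ^ (p - 1) = W ^ (p - 2) * W := by rw [← pow_succ]; congr 1; omega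
    have e3 : W ^ p = W ^ (p - 2) * W ^ 2 := by rw [← pow_add]; congr 1; omega
    rw [e1, he, e2]
    have e4 : W ^ (p - 2) * W ^ 2 = p * V := by rw [← e3, he]
    have e5 : V = p * algebraMap S B a' - algebraMap S B h ^ (p - 1) * W + W ^ 2 * e := by rw [hV]; simp
    linear_combination (p : B) * e * e4 + (p : B) * W ^ (p - 2) * e5
  obtain ⟨y, hy⟩ := h1
  have hy' : (W : K) ^ (p - 1) = p * (y : K) := by
    have := congrArg Subtype.val hy
    simpa using this
  have hyA : (y : K) ∈ Algebra.adjoin S {ω, μ} := Algebra.adjoin_mono (by simp) y.2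
  have hWK : (W : K) + algebraMap S K h = ω := by simp [W]
  obtain ⟨C, hC⟩ := coords hp.pos hω hμ h 0 hWK (U := μ) (by simp) hyA
  classical
  have h2 := coords_ind L hp.pos hω hμ hKgen hdeg h 0 hWK (U := μ) (by simp)
    (Pi.single (⟨p - 1, by omega⟩, ⟨0, by omega⟩) 1 - (p : S) • C) (by
      simp only [Pi.sub_apply, map_sub, sub_mul, Finset.sum_sub_distrib, Pi.smul_apply, smul_eq_mul, map_mul, map_natCast, mul_assoc]
      rw [← Finset.mul_sum, ← hC, ← hy', Finset.sum_eq_single (⟨p - 1, by omega⟩, ⟨0, by omega⟩)]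
      · simp
      · intro i _ hi
        simp [Pi.single_eq_of_ne hi]
      · simp)
  have h3 := congrFun h2 (⟨p - 1, by omega⟩, ⟨0, by omega⟩)
  simp only [Pi.sub_apply, Pi.single_eq_same, Pi.smul_apply, smul_eq_mul, Pi.zero_apply, sub_eq_zero] at h3
  exact hpS.not_isUnit (isUnit_of_dvd_one ⟨_, h3⟩)

theorem dvd_descend [IsIntegrallyClosed S] (L : Type*) [Field L] [Algebra S L] [IsFractionRing S L] [Algebra L K] [IsScalarTower S L K] {q x : S} (hq : q ≠ 0)
    (h : algebraMap S (integralClosure S K) q ∣ algebraMap S (integralClosure S K) x) : q ∣ x := by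
  obtain ⟨r, hr⟩ := h
  have hr' : algebraMap S K x = algebraMap S K q * (r : K) := congrArg Subtype.val hr
  have hqL : algebraMap S L q ≠ 0 := by simpa using hq
  have h1 : (r : K) = algebraMap L K (algebraMap S L x / algebraMap S L q) := by
    rw [map_div₀, ← IsScalarTower.algebraMap_apply, ← IsScalarTower.algebraMap_apply, hr', mul_div_cancel_left₀]
    rw [IsScalarTower.algebraMap_apply S L K]
    simpa using hq
  have h2 : IsIntegral S (algebraMap S L x / algebraMap S L q) := by
    have := r.2
    rw [h1] at this
    exact (isIntegral_algebraMap_iff (algebraMap L K).injective).1 this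
  obtain ⟨y, hy⟩ := IsIntegrallyClosed.isIntegral_iff.1 h2
  refine ⟨y, IsFractionRing.injective S L ?_⟩
  rw [map_mul, hy, mul_div_cancel₀ _ hqL]

end setup

theorem dvd_of_pow_sub {S : Type*} [CommRing S] {p : ℕ} (hp : p.Prime) (hpS : Prime (p : S)) {x y : S} (h : (p : S) ∣ x ^ p - y ^ p) : (p : S) ∣ x - y := by
  have h1 := add_pow_prime_eq hp y (x - y)
  rw [add_sub_cancel] at h1
  apply hpS.dvd_of_dvd_pow (n := p)
  have : (x - y) ^ p = (x ^ p - y ^ p) - p * (y * (x - y) * ∑ k ∈ Finset.Ioo 0 p, y ^ (k - 1) * (x - y) ^ (p - k - 1) * ((p.choose k / p : ℕ) : S)) := by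
    linear_combination -h1
  rw [this]
  exact dvd_sub h (dvd_mul_right _ _)

theorem sq_dvd_pow_sub {S : Type*} [CommRing S] {p : ℕ} {x y : S} (h : (p : S) ∣ x - y) : (p : S) ^ 2 ∣ x ^ p - y ^ p := by
  have := dvd_sub_pow_of_dvd_sub h 1
  simpa using this

theorem cross_dvd {S : Type*} [CommRing S] [IsDomain S] {p : ℕ} (hp : p.Prime) (hpS : Prime (p : S)) {f g h₁ h₂ a b : S} (hf : f = h₁ ^ p + a * (p : S)) (hg : g = h₂ ^ p + b * (p : S))
    (hfg1 : ∃ x y : S, f * g = x ^ p + y * (p : S) ^ 2) : (p : S) ∣ h₁ ^ p * b + h₂ ^ p * a := by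
  obtain ⟨x, y, hxy⟩ := hfg1
  rw [hf, hg] at hxy
  have h1 : (p : S) ∣ (h₁ * h₂) ^ p - x ^ p := ⟨y * p - (h₁ ^ p * b + h₂ ^ p * a) - a * b * p, by rw [mul_pow]; linear_combination hxy⟩
  obtain ⟨c, hc⟩ := sq_dvd_pow_sub (dvd_of_pow_sub hp hpS h1)
  refine ⟨y - a * b - c, mul_left_cancel₀ hpS.ne_zero ?_⟩
  rw [mul_pow] at hc
  linear_combination hxy - hc

end

section
open Polynomial

theorem trace_coord {F K : Type*} [Field F] [Field K] [Algebra F K] {p : ℕ} (hp : 0 < p) (hpF : (p : F) ≠ 0) {μ : K} {g : F} (hμ : μ ^ p = algebraMap F K g)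
    (bs : Module.Basis (Fin p) F K) (hbs : ∀ i, bs i = μ ^ (i : ℕ)) (k c : F) (t : K)
    (ht : p * t = (algebraMap F K k * μ + algebraMap F K c) ^ (p - 1)) : Algebra.trace F K t = c ^ (p - 1) := by
  haveI : NeZero p := ⟨hp.ne'⟩
  have h1 := trace_basis hμ bs hbs t
  have h2 : (p : F) • t = ∑ m : Fin p, (((p - 1).choose m : F) * k ^ (m : ℕ) * c ^ (p - 1 - m)) • bs m := by
    have e : (p : F) • t = p * t := by rw [Algebra.smul_def, map_natCast]
    rw [e, ht, add_pow, Nat.sub_add_cancel hp, ← Fin.sum_univ_eq_sum_range (fun m => (algebraMap F K k * μ) ^ m * algebraMap F K c ^ (p - 1 - m) * ((p - 1).choose m : K)) p]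
    refine Finset.sum_congr rfl fun m _ => ?_
    rw [hbs, Algebra.smul_def]
    simp only [map_mul, map_pow, map_natCast]
    ring
  have h3 : (p : F) * bs.repr t 0 = c ^ (p - 1) := by
    have := congrArg (fun z => bs.repr z 0) h2
    simp only [map_smul, Finsupp.smul_apply, smul_eq_mul] at this
    rw [this, bs.repr_sum_self]
    simp
  rw [h1, h3]

theorem htr_K {S : Type*} [CommRing S] [IsDomain S] [IsIntegrallyClosed S]
    {L : Type*} [Field L] [CharZero L] [Algebra S L] [IsFractionRing S L]
    {K : Type*} [Field K] [Algebra L K] [Algebra S K] [IsScalarTower S L K]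
    {p : ℕ} (hp : 0 < p) (hpS : Prime (p : S)) {f g : S} {ω μ : K} (hω : ω ^ p = algebraMap S K f) (hμ : μ ^ p = algebraMap S K g)
    (hKgen : Algebra.adjoin L ({ω, μ} : Set K) = ⊤)
    (hdeg : Module.finrank L K = p ^ 2) {h₁ h₂ k₁ k₂ : S} {W U : integralClosure S K} (hW : (W : K) + algebraMap S K h₁ = ω) (hU : (U : K) + algebraMap S K h₂ = μ)
    (hWp : (p : integralClosure S K) ∣ W ^ p) (hk₁ : ¬ (p : S) ∣ k₁) (hh₂ : ¬ (p : S) ∣ h₂) (t : integralClosure S K) (s : S) (N : ℕ)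
    (ht : p * t = (algebraMap S _ k₁ * U + algebraMap S _ k₂ * W) ^ (p - 1)) (hs : ¬ (p : S) ∣ s) :
    ¬ (p : integralClosure S K) ∣ (algebraMap S _ s * t) ^ N := by
  rintro ⟨y, hy⟩
  have hfd : FiniteDimensional L K := Module.finite_of_finrank_pos (by rw [hdeg]; positivity)
  obtain ⟨F, hωF, -, bs, hbs⟩ := tower_basis hp (f := algebraMap S L f) (g := algebraMap S L g) (by rw [hω, ← IsScalarTower.algebraMap_apply]) (by rw [hμ, ← IsScalarTower.algebraMap_apply]) hKgen hdeg
  haveI : IsScalarTower S F K := IsScalarTower.of_algebraMap_eq fun x => by rfl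
  have hFK : ∀ x : S, ((algebraMap S F x : F) : K) = algebraMap S K x := fun x => rfl
  haveI : CharZero F := charZero_of_injective_algebraMap (algebraMap L F).injective
  haveI : FiniteDimensional F K := Module.Finite.of_basis bs
  have hpF : (p : F) ≠ 0 := Nat.cast_ne_zero.2 hp.ne'
  have hpF' : algebraMap S F (p : S) ≠ 0 := by rwa [map_natCast]
  let c : F := algebraMap S F k₂ * (⟨ω, hωF⟩ - algebraMap S F h₁) - algebraMap S F (k₁ * h₂)
  have hcK : (c : K) = algebraMap S K k₂ * W - algebraMap S K (k₁ * h₂) := by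
    change algebraMap S K k₂ * (ω - algebraMap S K h₁) - algebraMap S K (k₁ * h₂) = _
    rw [← hW]
    ring
  have hcalg : algebraMap F K c = (c : K) := rfl
  have htK : (p : K) * (t : K) = (algebraMap S K k₁ * U + algebraMap S K k₂ * W) ^ (p - 1) := by
    have := congrArg (fun z : integralClosure S K => (z : K)) ht
    simpa using this
  have htr := trace_coord hp hpF (g := algebraMap S F g) (by rw [hμ, ← IsScalarTower.algebraMap_apply]) bs hbs (algebraMap S F k₁) c (t : K) (by
    rw [htK, hcalg, hcK, ← IsScalarTower.algebraMap_apply, ← hU, map_mul]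
    congr 1
    ring)
  have hyK : (algebraMap S K s * t) ^ N = algebraMap S K (p : S) * (y : K) := by
    have := congrArg (fun z : integralClosure S K => (z : K)) hy
    simpa using this
  obtain ⟨m, ξ, hξ, hm⟩ := trace_rad (F := F) hpF' (isIntegral_algebraMap.mul t.2) y.2 hyK
  have htr2 : Algebra.trace F K (algebraMap S K s * t) = algebraMap S F s * c ^ (p - 1) := by
    rw [IsScalarTower.algebraMap_apply S F K, ← Algebra.smul_def, map_smul, htr, smul_eq_mul]
  rw [htr2] at hm
  have hmK : (algebraMap S K s * (c : K) ^ (p - 1)) ^ m = p * (ξ : K) := by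
    have := congrArg (fun z : F => (z : K)) hm
    simp only [map_natCast] at this
    push_cast at this
    rwa [hFK] at this
  let ξR : integralClosure S K := ⟨(ξ : K), hξ.map (IsScalarTower.toAlgHom S F K)⟩
  let cR : integralClosure S K := algebraMap S _ k₂ * W - algebraMap S _ (k₁ * h₂)
  have hmR : (algebraMap S (integralClosure S K) s * cR ^ (p - 1)) ^ m = p * ξR := by
    apply Subtype.ext
    simp only [cR, ξR]
    rw [hcK, map_mul] at hmK
    push_cast
    exact hmK
  set σ : S := (s * (-(k₁ * h₂)) ^ (p - 1)) ^ m with hσ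
  have h1 : W ∣ algebraMap S (integralClosure S K) σ - p * ξR := by
    rw [← hmR, hσ, map_pow]
    refine dvd_trans ?_ (sub_dvd_pow_sub_pow _ _ _)
    rw [map_mul, ← mul_sub, map_pow]
    refine Dvd.dvd.mul_left (dvd_trans ?_ (sub_dvd_pow_sub_pow _ _ _)) _
    refine ⟨- algebraMap S _ k₂, ?_⟩
    simp only [cR, map_neg]
    ring
  have h2 : (p : integralClosure S K) ∣ algebraMap S (integralClosure S K) σ ^ p := by
    have h3 : (p : integralClosure S K) ∣ (algebraMap S (integralClosure S K) σ - p * ξR) ^ p := hWp.trans (pow_dvd_pow_of_dvd h1 p)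
    have h4 : (p : integralClosure S K) ∣ algebraMap S (integralClosure S K) σ ^ p - (algebraMap S (integralClosure S K) σ - p * ξR) ^ p := by
      refine dvd_trans ?_ (sub_dvd_pow_sub_pow _ _ _)
      exact ⟨ξR, by ring⟩
    have := dvd_add h4 h3
    rwa [sub_add_cancel] at this
  rw [← map_pow, ← map_natCast (algebraMap S (integralClosure S K))] at h2
  have h3 := dvd_descend L hpS.ne_zero h2
  have h4 := hpS.dvd_of_dvd_pow (hpS.dvd_of_dvd_pow h3)
  rcases hpS.dvd_or_dvd h4 with h | h
  · exact hs h
  · rcases hpS.dvd_or_dvd ((dvd_neg).1 (hpS.dvd_of_dvd_pow h)) with h | h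
    · exact hk₁ h
    · exact hh₂ h

end

section
open IsLocalRing

theorem not_dvd_A1 {S : Type*} [CommRing S] [IsDomain S] [IsNoetherianRing S] [IsIntegrallyClosed S] {q f g : S} (hq : Prime q)
    (h : SatisfiesA1 f g) (hf : q ∣ f) (hg : q ∣ g) : False := by
  obtain ⟨P, hP, hqP, -, hD⟩ := exists_good_prime (x := 1) hq.ne_zero (fun h => hq.not_isUnit (isUnit_of_dvd_one h))
  exact h P ⟨hP, height_one_of_dvr P hD⟩ ⟨P.mem_of_dvd hf hqP, P.mem_of_dvd hg hqP⟩

theorem h_not_dvd {S : Type*} [CommRing S] [IsDomain S] [IsNoetherianRing S] [IsIntegrallyClosed S] {p : ℕ} (hp3 : 3 ≤ p) (hpS : Prime (p : S))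
    {f g h a : S} (hf : f = h ^ p + a * p) (ha : ¬ (p : S) ∣ a) (hfg : SatisfiesA1 f g ∨ IsUnit f)
    (hfg1 : ∃ x y : S, f * g = x ^ p + y * (p : S) ^ 2) : ¬ (p : S) ∣ h := by
  intro hh
  have hpp : (p : S) ^ 2 ∣ h ^ p := (pow_dvd_pow _ (by omega)).trans (pow_dvd_pow_of_dvd hh p)
  have hpf : (p : S) ∣ f := by
    rw [hf]; exact dvd_add (hh.trans (dvd_pow_self _ (by omega))) (dvd_mul_left _ _)
  rcases hfg with hA | hu
  · obtain ⟨x, y, hxy⟩ := hfg1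
    have hx : (p : S) ∣ x := by
      apply hpS.dvd_of_dvd_pow (n := p)
      have : x ^ p = f * g - y * p * p := by rw [hxy]; ring
      rw [this]
      exact dvd_sub (hpf.mul_right _) (dvd_mul_left _ _)
    have hx2 : (p : S) ^ 2 ∣ x ^ p := (pow_dvd_pow _ (by omega)).trans (pow_dvd_pow_of_dvd hx p)
    have h2 : (p : S) ^ 2 ∣ f * g := by rw [hxy]; exact dvd_add hx2 (dvd_mul_left _ _)
    obtain ⟨e, he⟩ := hpp
    have hf' : f = p * (a + p * e) := by rw [hf, he]; ring
    have h3 : (p : S) ∣ (a + p * e) * g := by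
      rw [hf', sq, mul_assoc] at h2
      exact (mul_dvd_mul_iff_left hpS.ne_zero).1 h2
    rcases hpS.dvd_or_dvd h3 with h | h
    · exact ha ((dvd_add_left (dvd_mul_right _ _)).1 h)
    · exact not_dvd_A1 hpS hA hpf h
  · exact hpS.not_isUnit (isUnit_of_dvd_unit hpf hu)

theorem regN_of {S : Type*} [CommRing S] [IsLocalRing S] {q : S} (hq0 : q ≠ 0) (hq : q ∈ maximalIdeal S)
    (hreg : ∃ s : Finset S, Ideal.span (s : Set S) = maximalIdeal S ∧ (s.card : WithBot ℕ∞) = ringKrullDim S) :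
    ∃ n, RegN (n + 1) S := by
  obtain ⟨s, h1, h2⟩ := hreg
  have hc : s.card ≠ 0 := by
    intro h
    rw [Finset.card_eq_zero] at h
    rw [h] at h1
    simp at h1
    rw [← h1] at hq
    exact hq0 (by simpa using hq)
  obtain ⟨n, hn⟩ := Nat.exists_eq_succ_of_ne_zero hc
  refine ⟨n, ⟨fun i => (s.equivFin.symm (Fin.cast hn.symm i) : S), ?_⟩, ?_⟩
  · rw [← h1]
    congr 1
    ext x
    simp only [Set.mem_range, Finset.mem_coe]
    constructor
    · rintro ⟨i, rfl⟩; exact Subtype.prop _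
    · intro hx
      exact ⟨Fin.cast hn (s.equivFin ⟨x, hx⟩), by simp⟩
  · rw [← h2, hn]

theorem build_core {S : Type*} [CommRing S] [IsDomain S] [IsNoetherianRing S] [IsLocalRing S]
    [IsIntegrallyClosed S]
    {L : Type*} [Field L] [CharZero L] [Algebra S L] [IsFractionRing S L]
    {K : Type*} [Field K] [Algebra L K] [Algebra S K] [IsScalarTower S L K]
    {p : ℕ} (hp : p.Prime) (hp3 : 3 ≤ p) (hpS : Prime ((p : ℕ) : S))
    (hSmodp : IsIntegrallyClosed (S ⧸ Ideal.span {((p : ℕ) : S)}))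
    {n : ℕ} (hreg : RegN (n + 1) S)
    (hmix : ((p : ℕ) : S) ∈ IsLocalRing.maximalIdeal S ∧
      ((p : ℕ) : S) ∉ IsLocalRing.maximalIdeal S ^ 2)
    {f g h₁ h₂ a b : S} (hf : f = h₁ ^ p + a * (p : S)) (hg : g = h₂ ^ p + b * (p : S))
    (hfg : SatisfiesA1 f g ∨ (IsUnit f ∧ IsUnit g))
    {ω μ : K} (hω : ω ^ p = algebraMap S K f) (hμ : μ ^ p = algebraMap S K g)
    (hKgen : Algebra.adjoin L ({ω, μ} : Set K) = ⊤)
    (hdeg : Module.finrank L K = p ^ 2)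
    (hicω : IsIntegrallyClosed (Algebra.adjoin S ({ω} : Set K)))
    (hicμ : IsIntegrallyClosed (Algebra.adjoin S ({μ} : Set K)))
    (hfg1 : ∃ x y : S, f * g = x ^ p + y * (p : S) ^ 2) :
    ∃ (d k₁ k₂ a' b' : S) (W U : integralClosure S K), Core S (integralClosure S K) p d k₁ k₂ a' b' W U ∧
      f = (d * k₁) ^ p + a' * p ∧ g = (d * k₂) ^ p + b' * p ∧ ¬ (p : S) ∣ d := by
  haveI : CharZero K := charZero_of_injective_algebraMap (algebraMap L K).injective
  have hpK : (p : K) ≠ 0 := Nat.cast_ne_zero.2 hp.ne_zero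
  have hKgen' : Algebra.adjoin L ({μ, ω} : Set K) = ⊤ := by rw [Set.pair_comm]; exact hKgen
  have ha := a_not_dvd L hp hp3 hpS hpK hω hμ hKgen hdeg hicω hf
  have hb := a_not_dvd L hp hp3 hpS hpK hμ hω hKgen' hdeg hicμ hg
  have hfg' : SatisfiesA1 g f ∨ IsUnit g := hfg.imp (fun h P hP hh => h P hP ⟨hh.2, hh.1⟩) (fun h => h.2)
  have hfg'' : SatisfiesA1 f g ∨ IsUnit f := hfg.imp_right (fun h => h.1)
  have hh1 := h_not_dvd hp3 hpS hf ha hfg'' hfg1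
  have hh2 := h_not_dvd hp3 hpS hg hb hfg' (by rwa [mul_comm g f])
  have hcr := cross_dvd hp hpS hf hg hfg1
  haveI : (Ideal.span {(p : S)}).IsPrime := (Ideal.span_singleton_prime hpS.ne_zero).2 hpS
  haveI := quot_local hmix.1
  obtain ⟨-, rs, hrs1, hrs2⟩ := regN_list n (regN_quot hreg hmix.1 hmix.2)
  let π := Ideal.Quotient.mk (Ideal.span {(p : S)})
  have hπ : ∀ x, π x = 0 ↔ (p : S) ∣ x := fun x => by
    rw [Ideal.Quotient.eq_zero_iff_mem, Ideal.mem_span_singleton]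
  have hπ2 : ∀ x y, π x = π y ↔ (p : S) ∣ x - y := fun x y => by rw [← hπ, map_sub, sub_eq_zero]
  obtain ⟨d', k₁', k₂', e1, e2, hcop⟩ := exists_coprime_fac rs hrs1 hrs2 (π h₁) (π h₂) (fun h => hh1 ((hπ _).1 h))
  obtain ⟨d, rfl⟩ := Ideal.Quotient.mk_surjective d'
  obtain ⟨k₁, rfl⟩ := Ideal.Quotient.mk_surjective k₁'
  obtain ⟨k₂, rfl⟩ := Ideal.Quotient.mk_surjective k₂'
  have e1 : (p : S) ∣ h₁ - d * k₁ := by rw [← hπ2, map_mul]; exact e1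
  have e2 : (p : S) ∣ h₂ - d * k₂ := by rw [← hπ2, map_mul]; exact e2
  have hdk1 : ¬ (p : S) ∣ d * k₁ := fun h => hh1 (by simpa using dvd_add e1 h)
  have hdk2 : ¬ (p : S) ∣ d * k₂ := fun h => hh2 (by simpa using dvd_add e2 h)
  obtain ⟨c1, hc1⟩ := sq_dvd_pow_sub e1
  obtain ⟨c2, hc2⟩ := sq_dvd_pow_sub e2
  have hf' : f = (d * k₁) ^ p + (a + p * c1) * p := by rw [hf]; linear_combination hc1
  have hg' : g = (d * k₂) ^ p + (b + p * c2) * p := by rw [hg]; linear_combination hc2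
  have hcr' := cross_dvd hp hpS hf' hg' hfg1
  have hωi : IsIntegral S ω := IsIntegral.of_pow hp.pos (by rw [hω]; exact isIntegral_algebraMap)
  have hμi : IsIntegral S μ := IsIntegral.of_pow hp.pos (by rw [hμ]; exact isIntegral_algebraMap)
  let W : integralClosure S K := ⟨ω, hωi⟩ - algebraMap S _ (d * k₁)
  let U : integralClosure S K := ⟨μ, hμi⟩ - algebraMap S _ (d * k₂)
  have hW : (W : K) + algebraMap S K (d * k₁) = ω := by 
    change ω - algebraMap S K (d * k₁) + algebraMap S K (d * k₁) = ω
    ring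
  have hU : (U : K) + algebraMap S K (d * k₂) = μ := by
    change μ - algebraMap S K (d * k₂) + algebraMap S K (d * k₂) = μ
    ring
  have hg0 : g ≠ 0 := by
    intro h0
    rw [hg] at h0
    apply hh2
    apply hpS.dvd_of_dvd_pow (n := p)
    exact ⟨-b, by linear_combination h0⟩
  have hfd : FiniteDimensional L K := Module.finite_of_finrank_pos (by rw [hdeg]; have := hp.pos; positivity)
  haveI : IsIntegrallyClosed (integralClosure S K) := integralClosure.isIntegrallyClosedOfFiniteExtension L
  have hWR : (W + algebraMap S (integralClosure S K) (d * k₁)) ^ p = algebraMap S _ ((d * k₁) ^ p + (a + p * c1) * p) := by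
    rw [← hf']
    apply Subtype.ext
    change ((W : K) + algebraMap S K (d * k₁)) ^ p = algebraMap S K f
    rw [hW, hω]
  have hUR : (U + algebraMap S (integralClosure S K) (d * k₂)) ^ p = algebraMap S _ ((d * k₂) ^ p + (b + p * c2) * p) := by
    rw [← hg']
    apply Subtype.ext
    change ((U : K) + algebraMap S K (d * k₂)) ^ p = algebraMap S K g
    rw [hU, hμ]
  have hcoe : ∀ C : Fin p × Fin p → S, ((∑ i, algebraMap S (integralClosure S K) (C i) * (W ^ (i.1 : ℕ) * U ^ (i.2 : ℕ)) : integralClosure S K) : K) =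
      ∑ i, algebraMap S K (C i) * ((W : K) ^ (i.1 : ℕ) * (U : K) ^ (i.2 : ℕ)) := by
    intro C
    push_cast
    rfl
  have hk1 : ¬ (p : S) ∣ k₁ := fun h => hdk1 (h.mul_left _)
  refine ⟨d, k₁, k₂, a + p * c1, b + p * c2, W, U, ⟨hp, hp3, hpS, hk1, fun h => hdk2 (h.mul_left _), hWR, hUR, ?_, ?_, hcop, ?_, ?_, ?_, ?_⟩, hf', hg', fun h => hdk1 (h.mul_right _)⟩
  · exact fun h => ha ((dvd_add_left (dvd_mul_right _ _)).1 h)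
  · have h1 : (p : S) ∣ d ^ p * (k₁ ^ p * (b + p * c2) + k₂ ^ p * (a + p * c1)) := by
      have : d ^ p * (k₁ ^ p * (b + p * c2) + k₂ ^ p * (a + p * c1)) = (d * k₁) ^ p * (b + p * c2) + (d * k₂) ^ p * (a + p * c1) := by
        rw [mul_pow, mul_pow]; ring
      rw [this]; exact hcr'
    exact (hpS.dvd_or_dvd h1).resolve_left fun h => hdk1 ((hpS.dvd_of_dvd_pow h).mul_right _)
  · intro z
    have h1 := pR_le (L := L) hp.pos hg0 hfg'' hω hμ hKgen hdeg hicω hicμ z.2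
    obtain ⟨C, hC⟩ := coords hp.pos hω hμ (d * k₁) (d * k₂) hW hU h1
    refine ⟨C, Subtype.ext ?_⟩
    rw [hcoe, ← hC]
    simp
  · intro C hC
    refine coords_ind L hp.pos hω hμ hKgen hdeg (d * k₁) (d * k₂) hW hU C ?_
    rw [← hcoe, hC]; rfl
  · intro h
    apply hpK
    have := congrArg (fun z : integralClosure S K => (z : K)) h
    simpa using this
  · intro t s N ht hs
    obtain ⟨e, he⟩ := Core.root_eq hp hp3 hWR
    exact htr_K hp.pos hpS hω hμ hKgen hdeg hW hU ⟨_, he⟩ hk1 hdk2 t s N ht hs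

end

open IsLocalRing RingTheory.Sequence

theorem dim_of_list {S : Type*} [CommRing S] [IsLocalRing S] [IsNoetherianRing S] (rs : List S) (h1 : Ideal.ofList rs = maximalIdeal S)
    (h2 : IsWeaklyRegular S rs) : IsRegular S rs ∧ ringKrullDim S = rs.length := by
  have hm : ∀ r ∈ rs, r ∈ maximalIdeal S := fun r hr => by
    rw [← h1]; exact Ideal.subset_span hr
  have h3 : IsRegular S rs := IsRegular.of_isWeaklyRegular_of_mem_maximalIdeal _ hm h2
  refine ⟨h3, ?_⟩
  have h4 := ringKrullDim_add_length_eq_ringKrullDim_of_isRegular rs h3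
  have h5 : ringKrullDim (S ⧸ Ideal.ofList rs) = 0 := by
    rw [h1]
    exact ringKrullDim_eq_zero_of_isField (Ideal.Quotient.maximal_ideal_iff_isField_quotient _ |>.1 inferInstance)
  rw [← h4, h5, zero_add]

section twogen
variable {S : Type*} [CommRing S] [IsDomain S] [IsLocalRing S] {p : ℕ} {d k₁ k₂ a b f g : S}

theorem two_gen_unit1 (hf : f = (d * k₁) ^ p + a * p) (hg : g = (d * k₂) ^ p + b * p)
    (hk : IsUnit k₁) : Ideal.span {(p : S), f, g} = Ideal.span {(p : S), d ^ p} := by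
  obtain ⟨u, hu⟩ := hk.exists_left_inv
  apply le_antisymm
  · rw [Ideal.span_le]
    rintro x (rfl | rfl | rfl)
    · exact Ideal.subset_span (by simp)
    · exact Ideal.mem_span_pair.2 ⟨a, k₁ ^ p, by rw [hf]; ring⟩
    · exact Ideal.mem_span_pair.2 ⟨b, k₂ ^ p, by rw [hg]; ring⟩
  · rw [Ideal.span_le]
    rintro x (rfl | rfl)
    · exact Ideal.subset_span (by simp)
    · rw [SetLike.mem_coe, Ideal.mem_span_insert]
      refine ⟨- u ^ p * a, u ^ p * f, Ideal.mul_mem_left _ _ (Ideal.subset_span (by simp)), ?_⟩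
      have : u ^ p * k₁ ^ p = 1 := by rw [← mul_pow, hu, one_pow]
      rw [hf, mul_pow]
      linear_combination (- d ^ p) * this

theorem two_gen_unit (hf : f = (d * k₁) ^ p + a * p) (hg : g = (d * k₂) ^ p + b * p)
    (hk : IsUnit k₁ ∨ IsUnit k₂) : Ideal.span {(p : S), f, g} = Ideal.span {(p : S), d ^ p} := by
  rcases hk with hk | hk
  · exact two_gen_unit1 hf hg hk
  · rw [Set.pair_comm f g]
    exact two_gen_unit1 hg hf hk

theorem two_gen_aux (hp0 : 0 < p) (hpS : Prime (p : S)) (hpm : (p : S) ∈ maximalIdeal S)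
    (hf : f = (d * k₁) ^ p + a * p) (hg : g = (d * k₂) ^ p + b * p) (hd : ¬ (p : S) ∣ d) (hk1 : ¬ (p : S) ∣ k₁)
    (hcop : ∀ c : S ⧸ Ideal.span {(p : S)}, Ideal.Quotient.mk _ k₁ ∣ c * Ideal.Quotient.mk _ k₂ → Ideal.Quotient.mk _ k₁ ∣ c)
    (m1 : k₁ ∈ maximalIdeal S) (m2 : k₂ ∈ maximalIdeal S) {y : S} (hQ : Ideal.span {(p : S), f, g} = Ideal.span {(p : S), y}) : False := by
  haveI : (Ideal.span {(p : S)}).IsPrime := (Ideal.span_singleton_prime hpS.ne_zero).2 hpS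
  let π := Ideal.Quotient.mk (Ideal.span {(p : S)})
  have hπ : ∀ x, π x = 0 ↔ (p : S) ∣ x := fun x => by
    rw [Ideal.Quotient.eq_zero_iff_mem, Ideal.mem_span_singleton]
  have hπp : π (p : S) = 0 := (hπ _).2 dvd_rfl
  have hf1 : f ∈ Ideal.span {(p : S), y} := by rw [← hQ]; exact Ideal.subset_span (by simp)
  have hg1 : g ∈ Ideal.span {(p : S), y} := by rw [← hQ]; exact Ideal.subset_span (by simp)
  have hy1 : y ∈ Ideal.span {(p : S), f, g} := by rw [hQ]; exact Ideal.subset_span (by simp)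
  obtain ⟨u1, c1, h1⟩ := Ideal.mem_span_pair.1 hf1
  obtain ⟨u2, c2, h2⟩ := Ideal.mem_span_pair.1 hg1
  obtain ⟨u3, z, hz, h3⟩ := Ideal.mem_span_insert.1 hy1
  obtain ⟨e1, e2, h4⟩ := Ideal.mem_span_pair.1 hz
  have F1 : π c1 * π y = π d ^ p * π k₁ ^ p := by
    have := congrArg π (h1.trans hf)
    simp only [map_add, map_mul, map_pow, hπp, mul_zero, zero_add, add_zero] at this
    rw [this, mul_pow]
  have F2 : π c2 * π y = π d ^ p * π k₂ ^ p := by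
    have := congrArg π (h2.trans hg)
    simp only [map_add, map_mul, map_pow, hπp, mul_zero, zero_add, add_zero] at this
    rw [this, mul_pow]
  have F3 : π y = π d ^ p * (π e1 * π k₁ ^ p + π e2 * π k₂ ^ p) := by
    rw [← h4, hf, hg] at h3
    have := congrArg π h3
    simp only [map_add, map_mul, map_pow, hπp, mul_zero, zero_add, add_zero] at this
    rw [this, mul_pow, mul_pow]; ring
  have hd' : π d ^ p ≠ 0 := pow_ne_zero _ fun h => hd ((hπ _).1 h)
  have hk1' : π k₁ ≠ 0 := fun h => hk1 ((hπ _).1 h)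
  set y' := π e1 * π k₁ ^ p + π e2 * π k₂ ^ p with hy'
  have G1 : π c1 * y' = π k₁ ^ p := by
    apply mul_left_cancel₀ hd'
    rw [← F1, F3]; ring
  have G2 : π c2 * y' = π k₂ ^ p := by
    apply mul_left_cancel₀ hd'
    rw [← F2, F3]; ring
  obtain ⟨m, hm⟩ := cop_pow hk1' hcop p p (π c1) ⟨π c2, by change π c1 * π k₂ ^ p = π k₁ ^ p * π c2; rw [← G1, ← G2]; ring⟩
  have hm : π c1 = π k₁ ^ p * m := hm
  have G3 : m * y' = 1 := by
    apply mul_left_cancel₀ (pow_ne_zero p hk1')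
    rw [← mul_assoc, ← hm, G1, mul_one]
  obtain ⟨m, rfl⟩ := Ideal.Quotient.mk_surjective m
  have G4 : (p : S) ∣ m * (e1 * k₁ ^ p + e2 * k₂ ^ p) - 1 := by
    rw [← hπ, map_sub, map_one, sub_eq_zero, ← G3, hy']
    simp only [map_mul, map_add, map_pow]
    rfl
  have G5 : (1 : S) ∈ maximalIdeal S := by
    have : (1 : S) = m * (e1 * k₁ ^ p + e2 * k₂ ^ p) - (m * (e1 * k₁ ^ p + e2 * k₂ ^ p) - 1) := by ring
    rw [this]
    refine sub_mem (Ideal.mul_mem_left _ _ (add_mem (Ideal.mul_mem_left _ _ ?_) (Ideal.mul_mem_left _ _ ?_))) (Ideal.mem_of_dvd _ G4 hpm)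
    · exact Ideal.pow_mem_of_mem _ m1 _ hp0
    · exact Ideal.pow_mem_of_mem _ m2 _ hp0
  exact (maximalIdeal.isMaximal S).ne_top ((Ideal.eq_top_iff_one _).2 G5)

theorem span_pair_swap_unit {x y q α β : S} (h : α * x + β * y = q) (hα : IsUnit α) : Ideal.span {x, y} = Ideal.span {q, y} := by
  obtain ⟨u, hu⟩ := hα.exists_left_inv
  apply le_antisymm
  · rw [Ideal.span_le]
    rintro z (rfl | rfl)
    · exact Ideal.mem_span_pair.2 ⟨u, -u * β, by rw [← h]; linear_combination z * hu⟩
    · exact Ideal.subset_span (by simp)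
  · rw [Ideal.span_le]
    rintro z (rfl | rfl)
    · exact Ideal.mem_span_pair.2 ⟨α, β, h⟩
    · exact Ideal.subset_span (by simp)

theorem unit_of_two_gen (hp0 : 0 < p) (hpS : Prime (p : S)) (hpm : (p : S) ∈ maximalIdeal S) (hpm2 : (p : S) ∉ maximalIdeal S ^ 2)
    (hf : f = (d * k₁) ^ p + a * p) (hg : g = (d * k₂) ^ p + b * p) (hd : ¬ (p : S) ∣ d) (hk1 : ¬ (p : S) ∣ k₁)
    (hcop : ∀ c : S ⧸ Ideal.span {(p : S)}, Ideal.Quotient.mk _ k₁ ∣ c * Ideal.Quotient.mk _ k₂ → Ideal.Quotient.mk _ k₁ ∣ c)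
    (hQ : (∃ x y : S, Ideal.span {(p : S), f, g} = Ideal.span {x, y}) ∨ Ideal.span {(p : S), f, g} = ⊤) : IsUnit k₁ ∨ IsUnit k₂ := by
  by_contra! hcon
  have m1 : k₁ ∈ maximalIdeal S := hcon.1
  have m2 : k₂ ∈ maximalIdeal S := hcon.2
  have hle : Ideal.span {(p : S), f, g} ≤ maximalIdeal S := by
    rw [Ideal.span_le]
    rintro x (rfl | rfl | rfl)
    · exact hpm
    · rw [hf]
      exact add_mem (Ideal.pow_mem_of_mem _ (Ideal.mul_mem_left _ _ m1) _ hp0) (Ideal.mul_mem_left _ _ hpm)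
    · rw [hg]
      exact add_mem (Ideal.pow_mem_of_mem _ (Ideal.mul_mem_left _ _ m2) _ hp0) (Ideal.mul_mem_left _ _ hpm)
  rcases hQ with ⟨x, y, hxy⟩ | h
  · have hx : x ∈ maximalIdeal S := hle (by rw [hxy]; exact Ideal.subset_span (by simp))
    have hy : y ∈ maximalIdeal S := hle (by rw [hxy]; exact Ideal.subset_span (by simp))
    have hpq : (p : S) ∈ Ideal.span {x, y} := by rw [← hxy]; exact Ideal.subset_span (by simp)
    obtain ⟨α, β, hαβ⟩ := Ideal.mem_span_pair.1 hpq
    by_cases hα : IsUnit α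
    · exact two_gen_aux hp0 hpS hpm hf hg hd hk1 hcop m1 m2 (hxy.trans (span_pair_swap_unit hαβ hα))
    · by_cases hβ : IsUnit β
      · exact two_gen_aux hp0 hpS hpm hf hg hd hk1 hcop m1 m2 (hxy.trans (((by rw [Set.pair_comm]) : Ideal.span {x, y} = Ideal.span {y, x}).trans (span_pair_swap_unit (by rw [add_comm]; exact hαβ) hβ)))
      · apply hpm2
        rw [← hαβ, sq]
        exact add_mem (Ideal.mul_mem_mul hα hx) (Ideal.mul_mem_mul hβ hy)
  · exact (maximalIdeal.isMaximal S).ne_top (top_le_iff.1 (h ▸ hle))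

end twogen

theorem stmt15
    {S : Type*} [CommRing S] [IsDomain S] [IsNoetherianRing S] [IsLocalRing S]
    [IsIntegrallyClosed S]
    {L : Type*} [Field L] [CharZero L] [Algebra S L] [IsFractionRing S L]
    {K : Type*} [Field K] [Algebra L K] [Algebra S K] [IsScalarTower S L K]
    {p : ℕ} (hp : p.Prime) (hp3 : 3 ≤ p) (hpS : Prime ((p : ℕ) : S))
    (hSmodp : IsIntegrallyClosed (S ⧸ Ideal.span {((p : ℕ) : S)}))
    (hreg : ∃ s : Finset S, Ideal.span (s : Set S) = IsLocalRing.maximalIdeal S ∧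
      (s.card : WithBot ℕ∞) = ringKrullDim S)
    (hmix : ((p : ℕ) : S) ∈ IsLocalRing.maximalIdeal S ∧
      ((p : ℕ) : S) ∉ IsLocalRing.maximalIdeal S ^ 2)
    {f g h₁ h₂ a b : S} (hf : f = h₁ ^ p + a * (p : S)) (hg : g = h₂ ^ p + b * (p : S))
    (hfg : (¬IsUnit f ∧ ¬IsUnit g ∧ PaperSquarefree f ∧ PaperSquarefree g ∧ SatisfiesA1 f g) ∨
      (IsUnit f ∧ IsUnit g ∧ (∀ x : S, x ^ p ≠ f) ∧ (∀ x : S, x ^ p ≠ g)))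
    {ω μ : K} (hω : ω ^ p = algebraMap S K f) (hμ : μ ^ p = algebraMap S K g)
    (hKgen : Algebra.adjoin L ({ω, μ} : Set K) = ⊤)
    (hdeg : Module.finrank L K = p ^ 2)
    (hicω : IsIntegrallyClosed (Algebra.adjoin S ({ω} : Set K)))
    (hicμ : IsIntegrallyClosed (Algebra.adjoin S ({μ} : Set K)))
    (hfg1 : ∃ x y : S, f * g = x ^ p + y * (p : S) ^ 2) :
    (IsCMRing (integralClosure S K) ↔ ((∃ x y : S, Ideal.span {((p : ℕ) : S), f, g} = Ideal.span {x, y}) ∨ Ideal.span {((p : ℕ) : S), f, g} = ⊤)) ∧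
      HasFreeResLengthLE1 S (integralClosure S K) ∧
      ∃ T : Finset K, T.card ≤ p ^ 2 + 1 ∧
        Submodule.span S (T : Set K) = Subalgebra.toSubmodule (integralClosure S K) := by
  classical
  obtain ⟨n, hR⟩ := regN_of hpS.ne_zero hmix.1 hreg
  obtain ⟨d, k₁, k₂, a', b', W, U, H, hf', hg', hd⟩ := build_core hp hp3 hpS hSmodp hR hmix hf hg
    (hfg.imp (fun h => h.2.2.2.2) (fun h => ⟨h.1, h.2.1⟩)) hω hμ hKgen hdeg hicω hicμ hfg1
  have hfd : FiniteDimensional L K := Module.finite_of_finrank_pos (by rw [hdeg]; have := hp.pos; positivity)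
  haveI : IsIntegrallyClosed (integralClosure S K) := integralClosure.isIntegrallyClosedOfFiniteExtension L
  obtain ⟨γ, ρ, hspan, hker, hρI, hρn, ⟨i1, hi1⟩, ⟨i2, hi2⟩⟩ := H.gens
  have hρ0 : ρ none ≠ 0 := by rw [hρn]; exact hpS.ne_zero
  have hTspan : Submodule.span S (Set.range γ) = ⊤ := by
    rw [eq_top_iff]
    intro z _
    obtain ⟨c, rfl⟩ := hspan z
    exact Submodule.sum_mem _ fun i _ => Submodule.smul_mem _ _ (Submodule.subset_span ⟨i, rfl⟩)
  have hfin : Module.Finite S (integralClosure S K) := ⟨⟨Finset.univ.image γ, by simpa using hTspan⟩⟩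
  have hinj : Function.Injective (algebraMap S K) := by
    rw [IsScalarTower.algebraMap_eq S L K]
    exact (algebraMap L K).injective.comp (IsFractionRing.injective S L)
  haveI : FaithfulSMul S (integralClosure S K) := by
    rw [faithfulSMul_iff_algebraMap_injective]
    intro x y hxy
    exact hinj (congrArg Subtype.val hxy)
  obtain ⟨-, rs, hrs1, hrs2⟩ := regN_list (n + 1) hR
  obtain ⟨hrs3, hdim⟩ := dim_of_list rs hrs1 hrs2
  have hnoeth : IsNoetherianRing (integralClosure S K) := IsNoetherianRing.of_finite S _
  refine ⟨⟨fun hCM => ?_, fun hQ => ?_⟩, res_of_gens hspan hker hρ0, ?_⟩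
  · left
    have hfree := free_of_cm rs hrs1 hdim hCM
    have h1 := unit_of_free hspan hker hρ0 _ hρI
    refine ⟨p, d ^ p, two_gen_unit hf' hg' ?_⟩
    by_contra! hcon
    refine (maximalIdeal.isMaximal S).ne_top (top_le_iff.1 (h1 ▸ ?_))
    rw [Ideal.span_le]
    rintro x (rfl | rfl | rfl)
    · exact hmix.1
    · exact hcon.1
    · exact hcon.2
  · have hu := unit_of_two_gen hp.pos hpS hmix.1 hmix.2 hf' hg' hd H.hk₁ H.hcop hQ
    have hfree : Module.Free S (integralClosure S K) := by
      rcases hu with hu | hu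
      · exact free_of_gens hspan hker (i0 := i1) (by rw [hi1]; exact (hu.pow _).neg)
      · exact free_of_gens hspan hker (i0 := i2) (by rw [hi2]; exact (hu.pow _).neg)
    exact cm_of_free hdim ⟨rs, rfl, fun r hr => by rw [← hrs1]; exact Ideal.subset_span hr, hrs3⟩
  · refine ⟨Finset.univ.image fun i => (γ i : K), ?_, ?_⟩
    · refine Finset.card_image_le.trans ?_
      simp [Fintype.card_option, sq]
    · have : ((Finset.univ.image fun i => (γ i : K) : Finset K) : Set K) = (integralClosure S K).val.toLinearMap '' Set.range γ := by
        rw [← Set.range_comp]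
        ext; simp
      rw [this, Submodule.span_image, hTspan, Submodule.map_top]
      ext z
      simp
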